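/- Let n ≥ 1 and p ∈ (1,∞), and let ν_pⁿ be the probability measure on ℝⁿ with density c_pⁿ·exp(−Σ_{i=1}ⁿ |x_i|^p / p) with respect to Lebesgue measure. For λ > 0 let N(λ) denote the number of indices k ≥ 1 with λ_k^Lip(ℝⁿ,|·|,ν_pⁿ) ≤ λ. Then N(λ) is finite for every λ > 0, and as λ → ∞, N(λ) / λ^{(n/2)·p/(p−1)} converges to 2^{n/(p−1)}·Γ(1/(2(p−1)) + 1)ⁿ / ( π^{n/2}·Γ((n/2)·p/(p−1) + 1) ), where Γ denotes the Gamma function. -/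

import Mathlib

open MeasureTheory Filter Topology ENNReal

/-- The local Lipschitz constant `|∇f|(x) = limsup_{y→x} |f(y)-f(x)|/d(y,x)`
(equal to `0` at isolated points, by the convention `Real.sInf ∅ = 0`). -/
noncomputable def localLip {Ω : Type*} [PseudoMetricSpace Ω] (f : Ω → ℝ) (x : Ω) : ℝ :=
  Filter.limsup (fun y => |f y - f x| / dist y x) (nhdsWithin x {x}ᶜ)

/-- Membership in the metric Sobolev space `W^{1,2}_Lip(Ω,d,μ)`. -/
def memW12Lip {Ω : Type*} [PseudoMetricSpace Ω] [MeasurableSpace Ω]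
    (μ : Measure Ω) (f : Ω → ℝ) : Prop :=
  LocallyLipschitz f ∧
    (∫⁻ x, ENNReal.ofReal ((f x) ^ 2) ∂μ) + (∫⁻ x, ENNReal.ofReal ((localLip f x) ^ 2) ∂μ) < ⊤

/-- The `k`-th metric eigenvalue `λ_k^Lip(Ω,d,μ)`: the infimum over `k`-dimensional
linear subspaces `F ⊆ W^{1,2}_Lip` of the supremum of the Rayleigh quotient over `F`. -/
noncomputable def lambdaLip {Ω : Type*} [PseudoMetricSpace Ω] [MeasurableSpace Ω]
    (μ : Measure Ω) (k : ℕ) : ℝ :=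
  sInf { a : ℝ | ∃ F : Submodule ℝ (Ω → ℝ), Module.finrank ℝ F = k ∧
    (∀ f ∈ F, memW12Lip μ f) ∧
    a = sSup { r : ℝ | ∃ f ∈ F, (∫ x, (f x) ^ 2 ∂μ) ≠ 0 ∧
      r = (∫ x, (localLip f x) ^ 2 ∂μ) / (∫ x, (f x) ^ 2 ∂μ) } }

/-- The `p`-exponential probability measure `ν_pⁿ` on `ℝⁿ`, with density proportional
to `exp(-∑ᵢ |xᵢ|^p / p)` with respect to Lebesgue measure, normalized to mass one. -/
noncomputable def nuP (n : ℕ) (p : ℝ) : Measure (EuclideanSpace ℝ (Fin n)) :=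
  ((volume.withDensity fun x : EuclideanSpace ℝ (Fin n) =>
      ENNReal.ofReal (Real.exp (-(∑ i, |x i| ^ p) / p))) Set.univ)⁻¹ •
    volume.withDensity fun x : EuclideanSpace ℝ (Fin n) =>
      ENNReal.ofReal (Real.exp (-(∑ i, |x i| ^ p) / p))



namespace Weyl

theorem LL_mul {α : Type*} [PseudoEMetricSpace α] {f g : α → ℝ} (hf : LocallyLipschitz f)
    (hg : LocallyLipschitz g) : LocallyLipschitz (fun x => f x * g x) := by
  have h : LocallyLipschitz (fun q : ℝ × ℝ => q.1 * q.2) :=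
    (contDiff_fst.mul contDiff_snd : ContDiff ℝ 1 (fun q : ℝ × ℝ => q.1 * q.2)).locallyLipschitz
  exact h.comp (hf.prodMk hg)

theorem LL_add {α : Type*} [PseudoEMetricSpace α] {f g : α → ℝ} (hf : LocallyLipschitz f)
    (hg : LocallyLipschitz g) : LocallyLipschitz (fun x => f x + g x) := by
  have h : LocallyLipschitz (fun q : ℝ × ℝ => q.1 + q.2) :=
    (contDiff_fst.add contDiff_snd : ContDiff ℝ 1 (fun q : ℝ × ℝ => q.1 + q.2)).locallyLipschitz
  exact h.comp (hf.prodMk hg)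

theorem LL_sum {α ι : Type*} [PseudoEMetricSpace α] (s : Finset ι) {f : ι → α → ℝ}
    (hf : ∀ i ∈ s, LocallyLipschitz (f i)) : LocallyLipschitz (fun x => ∑ i ∈ s, f i x) := by
  classical
  induction s using Finset.induction_on with
  | empty => simpa using LocallyLipschitz.const (0 : ℝ)
  | insert a s ha ih =>
    simp only [Finset.sum_insert ha]
    exact LL_add (hf a (by simp)) (ih fun i hi => hf i (by simp [hi]))

theorem LL_prod {α ι : Type*} [PseudoEMetricSpace α] (s : Finset ι) {f : ι → α → ℝ}
    (hf : ∀ i ∈ s, LocallyLipschitz (f i)) : LocallyLipschitz (fun x => ∏ i ∈ s, f i x) := by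
  classical
  induction s using Finset.induction_on with
  | empty => simpa using LocallyLipschitz.const (1 : ℝ)
  | insert a s ha ih =>
    simp only [Finset.prod_insert ha]
    exact LL_mul (hf a (by simp)) (ih fun i hi => hf i (by simp [hi]))

theorem LL_lipOn {g : ℝ → ℝ} (hg : LocallyLipschitz g) (a b : ℝ) :
    ∃ K : NNReal, LipschitzOnWith K g (Set.Icc a b) :=
  LocallyLipschitzOn.exists_lipschitzOnWith_of_compact isCompact_Icc
    (hg.locallyLipschitzOn)

theorem LL_ac {g : ℝ → ℝ} (hg : LocallyLipschitz g) (a b : ℝ) :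
    AbsolutelyContinuousOnInterval g a b := by
  obtain ⟨K, hK⟩ := LL_lipOn hg (min a b) (max a b)
  exact LipschitzOnWith.absolutelyContinuousOnInterval (K := K) hK

theorem LL_deriv_bdd {g : ℝ → ℝ} (hg : LocallyLipschitz g) (a b : ℝ) :
    ∃ K : ℝ, ∀ x ∈ Set.Icc a b, |deriv g x| ≤ K := by
  obtain ⟨K, hK⟩ := LL_lipOn hg (a - 1) (b + 1)
  refine ⟨K, fun x hx => ?_⟩
  have : Set.Icc (a-1) (b+1) ∈ 𝓝 x := Icc_mem_nhds (by linarith [hx.1]) (by linarith [hx.2])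
  exact norm_deriv_le_of_lipschitzOn this hK

theorem LL_ae {g : ℝ → ℝ} (hg : LocallyLipschitz g) : ∀ᵐ x : ℝ, DifferentiableAt ℝ g x := by
  have h : ∀ᵐ x : ℝ, ∀ n : ℕ, x ∈ Set.uIcc (-(n:ℝ)) n → DifferentiableAt ℝ g x :=
    ae_all_iff.2 fun n => (LL_ac hg _ _).ae_differentiableAt
  filter_upwards [h] with x hx
  obtain ⟨n, hn⟩ := exists_nat_ge |x|
  exact hx n (by rw [Set.uIcc_of_le (by linarith [abs_nonneg x])]; exact abs_le.1 hn)

noncomputable def dV (p s : ℝ) : ℝ := |s| ^ (p - 2) * s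

theorem dV_hasDeriv {p : ℝ} (hp : 1 < p) (s : ℝ) :
    HasDerivAt (fun s => |s| ^ p / p) (dV p s) s := by
  have hp0 : p ≠ 0 := by linarith
  refine ((hasDerivAt_abs_rpow s hp).div_const p).congr_deriv ?_
  unfold dV
  field_simp

theorem dV_pos {p s : ℝ} (hs : 0 < s) : dV p s = s ^ (p - 1) := by
  unfold dV
  rw [abs_of_pos hs, ← Real.rpow_add_one hs.ne']
  congr 1; ring

theorem dV_neg (p s : ℝ) : dV p (-s) = - dV p s := by
  unfold dV; simp

theorem dV_nonneg {p s : ℝ} (hs : 0 ≤ s) : 0 ≤ dV p s := by unfold dV; positivity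

theorem dV_eq {p : ℝ} (hp : 1 < p) {s : ℝ} (hs : 0 ≤ s) : dV p s = s ^ (p - 1) := by
  rcases hs.eq_or_lt with rfl | h
  · unfold dV; rw [Real.zero_rpow (by linarith : p - 1 ≠ 0)]; simp
  · exact dV_pos h

theorem dV_abs {p : ℝ} (hp : 1 < p) (s : ℝ) : |dV p s| = |s| ^ (p - 1) := by
  rw [← dV_eq hp (abs_nonneg s)]
  unfold dV
  rw [abs_mul, abs_abs, abs_of_nonneg (by positivity : 0 ≤ |s| ^ (p-2))]

theorem dV_cont {p : ℝ} (hp : 1 < p) : Continuous (dV p) := by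
  have h1 : ContinuousOn (dV p) (Set.Ici 0) := by
    refine ContinuousOn.congr (f := fun s => s ^ (p-1)) ?_ (fun s hs => dV_eq hp hs)
    exact (Real.continuous_rpow_const (by linarith)).continuousOn
  have h2 : ContinuousOn (dV p) (Set.Iic 0) := by
    have : ContinuousOn (fun s => - dV p (-s)) (Set.Iic 0) :=
      (h1.comp continuousOn_neg (fun s hs => by simpa using hs)).neg
    refine this.congr fun s _ => by simp [dV_neg]
  rw [← continuousOn_univ, ← Set.Iic_union_Ici (a := (0:ℝ))]
  exact h2.union_of_isClosed h1 isClosed_Iic isClosed_Ici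

theorem V_contDiff {p : ℝ} (hp : 1 < p) : ContDiff ℝ 1 (fun s : ℝ => |s| ^ p / p) := by
  rw [contDiff_one_iff_deriv]
  refine ⟨fun s => (dV_hasDeriv hp s).differentiableAt, ?_⟩
  have : deriv (fun s : ℝ => |s| ^ p / p) = dV p := funext fun s => (dV_hasDeriv hp s).deriv
  rw [this]; exact dV_cont hp

theorem expV_LL {p : ℝ} (hp : 1 < p) (c : ℝ) :
    LocallyLipschitz (fun s : ℝ => Real.exp (c * (|s| ^ p / p))) :=
  (Real.contDiff_exp.comp (contDiff_const.mul (V_contDiff hp))).locallyLipschitz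

/-- integrability of bounded measurable on intervals -/
theorem ii_of_bdd {u : ℝ → ℝ} (hu : Measurable u) {a b K : ℝ}
    (h : ∀ x ∈ Set.Icc a b, |u x| ≤ K) (hab : a ≤ b) : IntervalIntegrable u volume a b := by
  rw [intervalIntegrable_iff_integrableOn_Ioc_of_le hab]
  refine Measure.integrableOn_of_bounded (M := K) (by simp) hu.aestronglyMeasurable ?_
  rw [ae_restrict_iff' measurableSet_Ioc]
  exact ae_of_all _ fun x hx => h x ⟨hx.1.le, hx.2⟩

end Weyl


namespace Weyl

theorem ii_D {p : ℝ} (hp : 1 < p) {g : ℝ → ℝ} (hg : LocallyLipschitz g) (a b c1 c2 c3 c4 : ℝ)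
    (hab : a ≤ b) :
    IntervalIntegrable (fun x => c1 * deriv g x ^ 2 + c2 * (dV p x ^ 2 * g x ^ 2)
      + c3 * (g x * dV p x) * deriv g x + c4 * g x ^ 2) volume a b := by
  obtain ⟨K, hK⟩ := LL_deriv_bdd hg a b
  have hc := hg.continuous
  have hd := dV_cont hp
  have hm := measurable_deriv g
  have h0 : IntervalIntegrable (deriv g) volume a b := ii_of_bdd hm hK hab
  have h1 : IntervalIntegrable (fun x => deriv g x ^ 2) volume a b := by
    refine ii_of_bdd (K := K ^ 2) (by fun_prop) (fun x hx => ?_) hab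
    rw [abs_pow]; exact pow_le_pow_left₀ (abs_nonneg _) (hK x hx) 2
  have h2 : IntervalIntegrable (fun x => c3 * (g x * dV p x) * deriv g x) volume a b :=
    h0.continuousOn_mul (f := deriv g) (g := fun x => c3 * (g x * dV p x))
      (Continuous.continuousOn (by fun_prop))
  have h3 : IntervalIntegrable (fun x => c2 * (dV p x ^ 2 * g x ^ 2)) volume a b :=
    Continuous.intervalIntegrable (by fun_prop) _ _
  have h4 : IntervalIntegrable (fun x => c4 * g x ^ 2) volume a b :=
    Continuous.intervalIntegrable (by fun_prop) _ _
  exact (((h1.const_mul c1).add h3).add h2).add h4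

theorem halfD {p : ℝ} (hp : 1 < p) {δ : ℝ} (hδ : 0 < δ) {g : ℝ → ℝ} (hg : LocallyLipschitz g)
    {R : ℝ} (hR : 1 ≤ R) :
    0 ≤ ∫ x in (0:ℝ)..R, (δ * deriv g x ^ 2 + (δ / 4) * (dV p x ^ 2 * g x ^ 2)
      + 1 * (g x * dV p x) * deriv g x + ((1 + (p-1)^2) / (4 * δ)) * g x ^ 2) := by
  have key : ∀ a b : ℝ, 2 * (1/2 * (a * b)) ≤ 2 * (δ * a ^ 2 / 4 + b^2 / (4 * δ)) := by
    intro a b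
    have h : 0 ≤ (δ * a - b) ^ 2 / (4 * δ) := by positivity
    have : (δ * a - b) ^ 2 / (4 * δ) = δ * a ^ 2 / 4 + b^2 / (4 * δ) - 1/2 * (a * b) := by
      field_simp; ring
    linarith
  have key2 : ∀ a b : ℝ, -(a * b) ≤ δ * a ^ 2 + b^2 / (4 * δ) := by
    intro a b
    have h : 0 ≤ (2 * δ * a + b) ^ 2 / (4 * δ) := by positivity
    have : (2 * δ * a + b) ^ 2 / (4 * δ) = δ * a ^ 2 + b^2 / (4 * δ) + a * b := by
      field_simp; ring
    linarith
  have hC : ∀ y : ℝ, ((1 + (p-1)^2) / (4 * δ)) * y ^ 2 = y^2 / (4 * δ) +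
      (p-1)^2 / (4 * δ) * y ^ 2 := by intro y; field_simp
  rw [← intervalIntegral.integral_add_adjacent_intervals
    (ii_D hp hg 0 1 _ _ _ _ zero_le_one) (ii_D hp hg 1 R _ _ _ _ hR)]
  refine add_nonneg ?_ ?_
  · refine intervalIntegral.integral_nonneg zero_le_one fun x hx => ?_
    have h1 : |dV p x| ≤ 1 := by
      rw [dV_abs hp]
      exact Real.rpow_le_one (abs_nonneg _) (abs_le.2 ⟨by linarith [hx.1], hx.2⟩) (by linarith)
    have h2 := key2 (deriv g x) (g x * dV p x)
    have h3 : (g x * dV p x)^2 / (4 * δ) ≤ g x ^ 2 / (4 * δ) := by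
      apply div_le_div_of_nonneg_right _ (by positivity)
      rw [mul_pow]
      have : dV p x ^ 2 ≤ 1 := by rw [← sq_abs]; exact pow_le_one₀ (abs_nonneg _) h1
      nlinarith [sq_nonneg (g x)]
    have h4 : 0 ≤ (p-1)^2 / (4 * δ) * g x ^ 2 := by positivity
    have h5 : 0 ≤ (δ / 4) * (dV p x ^ 2 * g x ^ 2) := by positivity
    rw [hC]; nlinarith
  · set U : ℝ → ℝ := fun s => s ^ (p-1) - 1 with hU
    have hUd : ∀ s : ℝ, 0 < s → HasDerivAt U ((p-1) * s ^ (p-2)) s := fun s hs => by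
      have := (Real.hasDerivAt_rpow_const (x := s) (p := p-1) (Or.inl hs.ne')).sub_const 1
      refine this.congr_deriv ?_
      congr 2; ring
    have hUac : AbsolutelyContinuousOnInterval U 1 R := by
      apply ContDiffOn.absolutelyContinuousOnInterval
      intro s hs
      rw [Set.uIcc_of_le hR] at hs
      have hs0 : s ≠ 0 := by linarith [hs.1]
      exact ((Real.contDiffAt_rpow_const_of_ne hs0).sub contDiffAt_const).contDiffWithinAt
    have hac : AbsolutelyContinuousOnInterval (fun s => (g s * g s) * U s) 1 R :=
      ((LL_ac hg 1 R).mul (LL_ac hg 1 R)).mul hUac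
    have hF := hac.integral_deriv_eq_sub
    have hU1 : U 1 = 0 := by simp [hU]
    have hUR : 0 ≤ U R := by
      simp only [hU]; linarith [Real.one_le_rpow hR (by linarith : 0 ≤ p - 1)]
    have hpos : 0 ≤ 1/2 * ∫ x in (1:ℝ)..R, deriv (fun s => (g s * g s) * U s) x := by
      rw [hF, hU1]; have := mul_nonneg (mul_self_nonneg (g R)) hUR; linarith
    refine hpos.trans ?_
    rw [← intervalIntegral.integral_const_mul]
    refine intervalIntegral.integral_mono_ae_restrict hR
      (hac.intervalIntegrable_deriv.const_mul _) (ii_D hp hg 1 R _ _ _ _ hR) ?_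
    filter_upwards [ae_restrict_of_ae (LL_ae hg), ae_restrict_mem measurableSet_Icc] with x hx hxm
    have hx0 : 0 < x := by linarith [hxm.1]
    have hd : HasDerivAt (fun s => (g s * g s) * U s) _ x :=
      ((hx.hasDerivAt.mul hx.hasDerivAt).mul (hUd x hx0))
    rw [hd.deriv, dV_pos hx0]
    simp only [hU, Pi.mul_apply]
    set G := g x
    set G' := deriv g x
    set A := x ^ (p-1) with hA
    have hA0 : 0 ≤ A := by positivity
    have hV : (p-1) * x ^ (p-2) ≤ (p-1) * A := by
      apply mul_le_mul_of_nonneg_left _ (by linarith)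
      exact Real.rpow_le_rpow_of_exponent_le hxm.1 (by linarith)
    have e1 := key A (p-1)
    have e2 := key2 G' G
    rw [hC]
    have e3 : G^2 * ((p-1) * x ^ (p-2)) ≤ G^2 * ((p-1) * A) :=
      mul_le_mul_of_nonneg_left hV (sq_nonneg G)
    have e4 : G^2 * (2 * (1/2 * (A * (p-1)))) ≤ G^2 * (2 * (δ * A ^ 2 / 4 + (p-1)^2 / (4 * δ))) :=
      mul_le_mul_of_nonneg_left e1 (sq_nonneg G)
    nlinarith

theorem symD {p : ℝ} (hp : 1 < p) {δ : ℝ} (hδ : 0 < δ) {g : ℝ → ℝ} (hg : LocallyLipschitz g)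
    {R : ℝ} (hR : 1 ≤ R) :
    0 ≤ ∫ x in (-R)..R, (δ * deriv g x ^ 2 + (δ / 4) * (dV p x ^ 2 * g x ^ 2)
      + 1 * (g x * dV p x) * deriv g x + ((1 + (p-1)^2) / (4 * δ)) * g x ^ 2) := by
  rw [← intervalIntegral.integral_add_adjacent_intervals
    (ii_D hp hg (-R) 0 _ _ _ _ (by linarith)) (ii_D hp hg 0 R _ _ _ _ (by linarith))]
  refine add_nonneg ?_ (halfD hp hδ hg hR)
  have hg' : LocallyLipschitz (fun x => g (-x)) :=
    hg.comp (contDiff_neg : ContDiff ℝ 1 (fun x : ℝ => -x)).locallyLipschitz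
  have h := halfD hp hδ hg' hR
  have e := intervalIntegral.integral_comp_neg (a := 0) (b := R)
    (fun x => (δ * deriv g x ^ 2 + (δ / 4) * (dV p x ^ 2 * g x ^ 2)
      + 1 * (g x * dV p x) * deriv g x + ((1 + (p-1)^2) / (4 * δ)) * g x ^ 2))
  rw [neg_zero] at e
  rw [← e]
  refine h.trans_eq ?_
  congr 1
  ext x
  rw [deriv_comp_neg, dV_neg]
  ring

theorem upper_g {p : ℝ} (hp : 1 < p) {δ : ℝ} (hδ : 0 < δ) (hδ1 : δ < 1) {g : ℝ → ℝ}
    (hg : LocallyLipschitz g) :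
    ∫⁻ x, ENNReal.ofReal ((1 - δ) * (deriv g x ^ 2 + dV p x ^ 2 * g x ^ 2 / 4)) ≤
    ∫⁻ x, ENNReal.ofReal ((deriv g x + dV p x * g x / 2) ^ 2 +
      ((1 + (p-1)^2) / (4 * δ)) * g x ^ 2) := by
  have hcov : AECover (volume : Measure ℝ) atTop (fun n : ℕ => Set.Ioc (-((n:ℝ)+1)) ((n:ℝ)+1)) := by
    apply aecover_Ioc
    · exact tendsto_neg_atTop_atBot.comp (tendsto_natCast_atTop_atTop.atTop_add tendsto_const_nhds)
    · exact (tendsto_natCast_atTop_atTop.atTop_add tendsto_const_nhds)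
  have hmd := measurable_deriv g
  have hmg := hg.continuous.measurable
  have hmv := (dV_cont hp).measurable
  refine le_of_tendsto_of_tendsto' (hcov.lintegral_tendsto_of_countably_generated
    (by fun_prop)) (hcov.lintegral_tendsto_of_countably_generated (by fun_prop)) fun n => ?_
  set R : ℝ := (n:ℝ)+1
  have hR : 1 ≤ R := by simp [R]
  have hRR : -R ≤ R := by linarith
  have i1 := ii_D hp hg (-R) R (1-δ) ((1-δ)/4) 0 0 hRR
  have i2 := ii_D hp hg (-R) R 1 (1/4) 1 ((1 + (p-1)^2) / (4 * δ)) hRR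
  have hs := symD hp hδ hg hR
  have hle := sub_nonneg.1 (hs.trans_eq (by
    rw [← intervalIntegral.integral_sub i2 i1]; congr 1; ext x; ring))
  rw [intervalIntegral.integral_of_le hRR, intervalIntegral.integral_of_le hRR] at hle
  rw [intervalIntegrable_iff_integrableOn_Ioc_of_le hRR] at i1 i2
  have hC : 0 ≤ (1 + (p-1)^2) / (4 * δ) := by positivity
  have hle2 := ENNReal.ofReal_le_ofReal hle
  rw [ofReal_integral_eq_lintegral_ofReal i1, ofReal_integral_eq_lintegral_ofReal i2] at hle2
  · refine (le_of_eq ?_).trans (hle2.trans_eq ?_) <;>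
    · refine lintegral_congr fun x => ?_
      congr 1; ring
  · refine ae_of_all _ fun x => ?_
    have : 0 ≤ (deriv g x + dV p x * g x / 2) ^ 2 +
      ((1 + (p-1)^2) / (4 * δ)) * g x ^ 2 := by positivity
    refine this.trans_eq ?_
    ring
  · refine ae_of_all _ fun x => ?_
    have h1 : 0 ≤ 1 - δ := by linarith
    have : 0 ≤ (1 - δ) * (deriv g x ^ 2 + dV p x ^ 2 * g x ^ 2 / 4) := by positivity
    refine this.trans_eq ?_
    ring

theorem upper1D {p : ℝ} (hp : 1 < p) {δ : ℝ} (hδ : 0 < δ) (hδ1 : δ < 1) {h : ℝ → ℝ}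
    (hh : LocallyLipschitz h) (g : ℝ → ℝ)
    (hgdef : ∀ s, g s = h s * Real.exp ((-1/2) * (|s| ^ p / p))) :
    ∫⁻ x, ENNReal.ofReal ((1 - δ) * (deriv g x ^ 2 + dV p x ^ 2 * g x ^ 2 / 4)) ≤
    ∫⁻ x, ENNReal.ofReal (deriv h x ^ 2 * Real.exp (-(|x| ^ p / p)) +
      ((1 + (p-1)^2) / (4 * δ)) * g x ^ 2) := by
  have hg : LocallyLipschitz g := by
    have : g = fun s => h s * Real.exp ((-1/2) * (|s| ^ p / p)) := funext hgdef
    rw [this]; exact LL_mul hh (expV_LL hp _)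
  refine (upper_g hp hδ hδ1 hg).trans_eq (lintegral_congr_ae ?_)
  filter_upwards [LL_ae hh] with x hx
  have e : HasDerivAt g (deriv h x * Real.exp ((-1/2) * (|x| ^ p / p)) +
      h x * (Real.exp ((-1/2) * (|x| ^ p / p)) * ((-1/2) * dV p x))) x := by
    have : g = fun s => h s * Real.exp ((-1/2) * (|s| ^ p / p)) := funext hgdef
    rw [this]
    exact hx.hasDerivAt.mul ((dV_hasDeriv hp x).const_mul (-1/2)).exp
  have ee : Real.exp (-(|x| ^ p / p)) = Real.exp ((-1/2) * (|x| ^ p / p)) ^ 2 := by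
    rw [← Real.exp_nat_mul]; congr 1; push_cast; ring
  rw [e.deriv, hgdef, ee]
  congr 1
  ring

end Weyl


namespace Weyl

theorem dV_mono {p : ℝ} (hp : 1 < p) : Monotone (dV p) := by
  have h1 : MonotoneOn (dV p) (Set.Ici 0) := by
    intro a ha b hb hab
    rw [dV_eq hp ha, dV_eq hp hb]
    exact Real.rpow_le_rpow ha hab (by linarith)
  have h2 : MonotoneOn (dV p) (Set.Iic 0) := by
    intro a ha b hb hab
    have := h1 (a := -b) (b := -a) (by simpa using hb) (by simpa using ha) (by linarith)
    rw [dV_neg, dV_neg] at this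
    linarith
  exact h2.Iic_union_Ici h1

theorem dV_diff {p : ℝ} (s : ℝ) (hs : s ≠ 0) : DifferentiableAt ℝ (dV p) s := by
  unfold dV
  refine DifferentiableAt.mul ?_ differentiableAt_id
  exact (differentiableAt_abs hs).rpow_const (Or.inl (abs_ne_zero.2 hs))

theorem lower_cross {p : ℝ} (hp : 1 < p) {H H1 : ℝ → ℝ} (hH : Continuous H) {S : Set ℝ}
    (hS : S.Countable) (hd : ∀ s, s ∉ S → HasDerivAt H (H1 s) s) (hm : Measurable H1) {K : ℝ}
    (hK : ∀ s, |H1 s| ≤ K) {R : ℝ} (hR : 0 < R) (h0 : H R = 0) (h0' : H (-R) = 0) :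
    ∫ x in (-R)..R, H x * H1 x * dV p x ≤ 0 := by
  have hRR : -R ≤ R := by linarith
  have i1 : IntervalIntegrable (fun x => (H x * dV p x) * H1 x) volume (-R) R :=
    (ii_of_bdd (K := K) hm (fun x _ => hK x) hRR).continuousOn_mul
      (hH.mul (dV_cont hp)).continuousOn
  have i2 : IntervalIntegrable (fun x => (1/2 * H x ^ 2) * deriv (dV p) x) volume (-R) R :=
    (MonotoneOn.intervalIntegrable_deriv ((dV_mono hp).monotoneOn _)).continuousOn_mul
      (by fun_prop)
  have hF := integral_eq_of_hasDerivAt_off_countable (fun x => 1/2 * H x ^ 2 * dV p x)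
    (fun x => (H x * dV p x) * H1 x + (1/2 * H x ^ 2) * deriv (dV p) x) (a := -R) (b := R)
    (s := S ∪ {0}) (hS.union (Set.countable_singleton 0))
    (by have := dV_cont hp; fun_prop) (fun x hx => by
      have hx2 := hx.2
      simp only [Set.union_singleton, Set.mem_insert_iff, not_or] at hx2
      have := (((hd x hx2.2).pow 2).const_mul (1/2)).mul (dV_diff (p := p) x hx2.1).hasDerivAt
      refine this.congr_deriv ?_
      simp only [Pi.pow_apply]; push_cast; ring) (i1.add i2)
  rw [intervalIntegral.integral_add i1 i2, h0, h0'] at hF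
  have hn : 0 ≤ ∫ x in (-R)..R, (1/2 * H x ^ 2) * deriv (dV p) x :=
    intervalIntegral.integral_nonneg hRR fun x _ =>
      mul_nonneg (by positivity) ((dV_mono hp).deriv_nonneg)
  have : ∫ x in (-R)..R, H x * H1 x * dV p x = ∫ x in (-R)..R, (H x * dV p x) * H1 x := by
    congr 1; ext x; ring
  rw [this]
  simp at hF
  simp at hn
  linarith

theorem lower1D {p : ℝ} (hp : 1 < p) {H H1 : ℝ → ℝ} (hH : Continuous H) {S : Set ℝ}
    (hS : S.Countable) (hd : ∀ s, s ∉ S → HasDerivAt H (H1 s) s) (hm : Measurable H1) {K : ℝ}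
    (hK : ∀ s, |H1 s| ≤ K) {R : ℝ} (hR : 0 < R) (h0 : ∀ s, R ≤ |s| → H s = 0)
    (h1 : ∀ s, R ≤ |s| → H1 s = 0) (h : ℝ → ℝ)
    (hhdef : ∀ s, h s = H s * Real.exp ((1/2) * (|s| ^ p / p))) :
    ∫⁻ x, ENNReal.ofReal (deriv h x ^ 2 * Real.exp (-(|x| ^ p / p))) ≤
    ∫⁻ x, ENNReal.ofReal (H1 x ^ 2 + dV p x ^ 2 * H x ^ 2 / 4) := by
  have hRR : -R ≤ R := by linarith
  have hdv := dV_cont hp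
  have step : ∫⁻ x, ENNReal.ofReal (deriv h x ^ 2 * Real.exp (-(|x| ^ p / p))) =
      ∫⁻ x, ENNReal.ofReal ((H1 x + dV p x * H x / 2) ^ 2) := by
    refine lintegral_congr_ae ?_
    filter_upwards [hS.ae_notMem volume] with x hx
    have e : HasDerivAt h (H1 x * Real.exp ((1/2) * (|x| ^ p / p)) +
        H x * (Real.exp ((1/2) * (|x| ^ p / p)) * ((1/2) * dV p x))) x := by
      have : h = fun s => H s * Real.exp ((1/2) * (|s| ^ p / p)) := funext hhdef
      rw [this]
      exact (hd x hx).mul ((dV_hasDeriv hp x).const_mul (1/2)).exp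
    have ee : Real.exp ((1/2) * (|x| ^ p / p)) ^ 2 * Real.exp (-(|x| ^ p / p)) = 1 := by
      rw [← Real.exp_nat_mul, ← Real.exp_add, Real.exp_eq_one_iff]; push_cast; ring
    rw [e.deriv]
    congr 1
    linear_combination (H1 x + dV p x * H x / 2) ^ 2 * ee
  rw [step]
  have i0 : IntervalIntegrable H1 volume (-R) R := ii_of_bdd (K := K) hm (fun x _ => hK x) hRR
  have i1 : IntervalIntegrable (fun x => (H x * dV p x) * H1 x) volume (-R) R :=
    i0.continuousOn_mul (hH.mul hdv).continuousOn
  have i2 : IntervalIntegrable (fun x => H1 x ^ 2) volume (-R) R := by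
    refine ii_of_bdd (K := K ^ 2) (by fun_prop) (fun x hx => ?_) hRR
    rw [abs_pow]; exact pow_le_pow_left₀ (abs_nonneg _) (hK x) 2
  have i3 : IntervalIntegrable (fun x => dV p x ^ 2 * H x ^ 2 / 4) volume (-R) R :=
    Continuous.intervalIntegrable (by fun_prop) _ _
  have key := lower_cross hp hH hS hd hm hK hR (h0 R (le_abs_self R))
    (h0 (-R) (by rw [abs_neg]; exact le_abs_self R))
  have hle : ∫ x in (-R)..R, ((H1 x + dV p x * H x / 2) ^ 2) ≤
      ∫ x in (-R)..R, (H1 x ^ 2 + dV p x ^ 2 * H x ^ 2 / 4) := by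
    have : ∫ x in (-R)..R, ((H1 x + dV p x * H x / 2) ^ 2) =
        ∫ x in (-R)..R, ((H1 x ^ 2 + dV p x ^ 2 * H x ^ 2 / 4) + (H x * dV p x) * H1 x) := by
      congr 1; ext x; ring
    rw [this, intervalIntegral.integral_add (i2.add i3) i1]
    have : ∫ x in (-R)..R, H x * H1 x * dV p x = ∫ x in (-R)..R, (H x * dV p x) * H1 x := by
      congr 1; ext x; ring
    linarith
  have i4 : IntervalIntegrable (fun x => (H1 x + dV p x * H x / 2) ^ 2) volume (-R) R := by
    have := (i2.add i3).add i1
    refine this.congr (fun x _ => ?_)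
    ring
  have res : ∀ F : ℝ → ℝ, (∀ s, R ≤ |s| → F s = 0) →
      ∫⁻ x, ENNReal.ofReal (F x) = ∫⁻ x in Set.Ioc (-R) R, ENNReal.ofReal (F x) := by
    intro F hF
    rw [setLIntegral_eq_of_support_subset]
    intro x hx
    by_contra hc
    apply hx
    simp only [Set.mem_Ioc, not_and_or, not_lt, not_le] at hc
    show ENNReal.ofReal (F x) = 0
    rw [hF x, ENNReal.ofReal_zero]
    rcases hc with hc | hc
    · rw [abs_of_nonpos (by linarith)]; linarith
    · rw [abs_of_pos (by linarith)]; exact hc.le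
  rw [res _ (fun s hs => by simp [h0 s hs, h1 s hs]), res _ (fun s hs => by simp [h0 s hs, h1 s hs])]
  rw [intervalIntegral.integral_of_le hRR, intervalIntegral.integral_of_le hRR] at hle
  have i5 := i2.add i3
  rw [intervalIntegrable_iff_integrableOn_Ioc_of_le hRR] at i4 i5
  rw [← ofReal_integral_eq_lintegral_ofReal i4 (ae_of_all _ fun x => by positivity),
    ← ofReal_integral_eq_lintegral_ofReal i5 (ae_of_all _ fun x => by simp only [Pi.zero_apply]; positivity)]
  exact ENNReal.ofReal_le_ofReal hle

end Weyl

namespace Weyl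

lemma LL_aeE {n : ℕ} {f : EuclideanSpace ℝ (Fin n) → ℝ} (hf : LocallyLipschitz f) :
    ∀ᵐ x, DifferentiableAt ℝ f x := by
  rw [ae_iff]
  apply measure_null_of_locally_null
  intro x _
  obtain ⟨K, t, ht, hK⟩ := hf x
  obtain ⟨u, hut, huo, hxu⟩ := mem_nhds_iff.1 ht
  refine ⟨{a | ¬DifferentiableAt ℝ f a} ∩ u, inter_mem_nhdsWithin _ (huo.mem_nhds hxu), ?_⟩
  have h1 := (hK.mono hut).ae_differentiableWithinAt_of_mem_of_real (μ := volume)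
  refine measure_mono_null ?_ (ae_iff.1 h1)
  rintro y ⟨hy, hyu⟩ h
  exact hy ((h hyu).differentiableAt (huo.mem_nhds hyu))

lemma localLip_eq {n : ℕ} (hn : 1 ≤ n) {f : EuclideanSpace ℝ (Fin n) → ℝ} {x}
    (hf : DifferentiableAt ℝ f x) : localLip f x = ‖fderiv ℝ f x‖ := by
  have : Nonempty (Fin n) := ⟨⟨0, hn⟩⟩
  have : Nontrivial (EuclideanSpace ℝ (Fin n)) := inferInstance
  have hne : (𝓝[{x}ᶜ] x).NeBot := Module.punctured_nhds_neBot ℝ _ x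
  set L := fderiv ℝ f x with hL
  have hfd : HasFDerivAt f L x := hf.hasFDerivAt
  have key : ∀ ε > 0, ∀ᶠ y in 𝓝[{x}ᶜ] x, |(f y - f x) - L (y - x)| ≤ ε * ‖y - x‖ := by
    intro ε hε
    exact nhdsWithin_le_nhds ((hasFDerivAt_iff_isLittleO.1 hfd).def hε)
  have up : ∀ ε > 0, ∀ᶠ y in 𝓝[{x}ᶜ] x, |f y - f x| / dist y x ≤ ‖L‖ + ε := by
    intro ε hε
    filter_upwards [key ε hε, self_mem_nhdsWithin] with y hy hyx
    have hpos : 0 < ‖y - x‖ := norm_pos_iff.2 (sub_ne_zero.2 hyx)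
    rw [dist_eq_norm, div_le_iff₀ hpos]
    have h2 : |L (y - x)| ≤ ‖L‖ * ‖y - x‖ := L.le_opNorm _
    have := abs_add_le ((f y - f x) - L (y - x)) (L (y - x))
    rw [sub_add_cancel] at this
    linarith
  have bb : IsBoundedUnder (· ≤ ·) (𝓝[{x}ᶜ] x) (fun y => |f y - f x| / dist y x) :=
    ⟨‖L‖ + 1, by simpa using up 1 one_pos⟩
  have cb : IsCoboundedUnder (· ≤ ·) (𝓝[{x}ᶜ] x) (fun y => |f y - f x| / dist y x) := by
    apply IsBoundedUnder.isCoboundedUnder_le (u := fun y => |f y - f x| / dist y x)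
    exact ⟨0, by simpa using Eventually.of_forall (fun y => by positivity)⟩
  apply le_antisymm
  · apply _root_.le_of_forall_pos_le_add
    intro ε hε
    exact limsup_le_of_le cb (up ε hε)
  · apply ContinuousLinearMap.opNorm_le_bound
    · unfold localLip
      apply le_limsup_of_frequently_le _ bb
      exact (Eventually.of_forall (fun y => by positivity)).frequently
    intro v
    by_cases hv0 : v = 0
    · simp [hv0]
    have hvp : 0 < ‖v‖ := norm_pos_iff.2 hv0
    rw [← div_le_iff₀ hvp]
    apply _root_.le_of_forall_pos_le_add
    intro ε hε
    rw [← sub_le_iff_le_add]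
    unfold localLip
    apply le_limsup_of_frequently_le _ bb
    have ht : Tendsto (fun t : ℝ => x + t • v) (𝓝[>] 0) (𝓝[{x}ᶜ] x) := by
      rw [tendsto_nhdsWithin_iff]
      constructor
      · have : Continuous (fun t : ℝ => x + t • v) := by fun_prop
        have := this.tendsto 0
        simp only [zero_smul, add_zero] at this
        exact this.mono_left nhdsWithin_le_nhds
      · filter_upwards [self_mem_nhdsWithin] with t ht
        simp only [Set.mem_compl_iff, Set.mem_singleton_iff, add_eq_left, smul_eq_zero, not_or]
        exact ⟨ne_of_gt ht, hv0⟩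
    apply ht.frequently
    apply Eventually.frequently
    filter_upwards [ht.eventually (key ε hε), self_mem_nhdsWithin] with t h1 ht0
    have ht0 : (0:ℝ) < t := ht0
    simp only [add_sub_cancel_left, map_smul, smul_eq_mul, norm_smul, Real.norm_eq_abs, abs_of_pos ht0, dist_eq_norm] at h1 ⊢
    rw [le_div_iff₀ (by positivity)]
    have h3 := abs_sub_abs_le_abs_sub (t * L v) (f (x + t • v) - f x)
    rw [abs_sub_comm (t * L v), abs_mul, abs_of_pos ht0] at h3
    have : (|L v| / ‖v‖ - ε) * (t * ‖v‖) = t * |L v| - ε * (t * ‖v‖) := by field_simp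
    rw [this]; linarith

noncomputable def pd {n : ℕ} (i : Fin n) (F : (Fin n → ℝ) → ℝ) (y : Fin n → ℝ) : ℝ :=
  deriv (fun s => F (Function.update y i s)) (y i)

lemma pd_fderiv {n : ℕ} {f : EuclideanSpace ℝ (Fin n) → ℝ} {y : Fin n → ℝ}
    (hf : DifferentiableAt ℝ f (WithLp.toLp 2 y)) (i : Fin n) :
    pd i (fun y => f (WithLp.toLp 2 y)) y
      = fderiv ℝ f (WithLp.toLp 2 y) (EuclideanSpace.single i 1) := by
  unfold pd
  apply HasDerivAt.deriv
  have h1 := hasDerivAt_update y i (y i)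
  have h2 : HasDerivAt (fun s => WithLp.toLp 2 (Function.update y i s)) (EuclideanSpace.single i (1:ℝ)) (y i) :=
    ((PiLp.continuousLinearEquiv 2 ℝ (fun _ : Fin n => ℝ)).symm.toContinuousLinearMap.hasFDerivAt.comp_hasDerivAt _ h1)
  have h3 : HasFDerivAt f (fderiv ℝ f (WithLp.toLp 2 y)) (WithLp.toLp 2 (Function.update y i (y i))) := by
    simpa using hf.hasFDerivAt
  exact h3.comp_hasDerivAt (y i) h2

lemma norm_fderiv_sq {n : ℕ} (L : EuclideanSpace ℝ (Fin n) →L[ℝ] ℝ) :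
    ‖L‖ ^ 2 = ∑ i, (L (EuclideanSpace.single i 1)) ^ 2 := by
  have := (EuclideanSpace.basisFun (Fin n) ℝ).norm_dual L
  rw [this]
  simp

lemma pd_meas {n : ℕ} (i : Fin n) {F : (Fin n → ℝ) → ℝ} (hF : Continuous F) :
    Measurable (pd i F) := by
  have h := measurable_deriv_with_param (f := fun (y : Fin n → ℝ) (s : ℝ) => F (Function.update y i s))
    (𝕜 := ℝ) (hF.comp (continuous_fst.update i continuous_snd))
  exact h.comp (measurable_id.prodMk (measurable_pi_apply i))

end Weyl

namespace Weyl

noncomputable def rho {n : ℕ} (p : ℝ) (y : Fin n → ℝ) : ℝ := Real.exp (-(∑ i, |y i| ^ p) / p)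

lemma rho_pos {n : ℕ} (p : ℝ) (y : Fin n → ℝ) : 0 < rho p y := Real.exp_pos _

lemma rho_cont {n : ℕ} {p : ℝ} (hp : 1 < p) : Continuous (rho p : (Fin n → ℝ) → ℝ) := by
  unfold rho
  refine Real.continuous_exp.comp (Continuous.div_const (Continuous.neg ?_) _)
  refine continuous_finsetSum _ fun i _ => ?_
  exact (continuous_abs.comp (continuous_apply i)).rpow_const (fun _ => Or.inr (by linarith))

lemma rho_prod {n : ℕ} (p : ℝ) (y : Fin n → ℝ) : rho p y = ∏ i, Real.exp (-(|y i| ^ p / p)) := by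
  rw [rho, ← Real.exp_sum, neg_div, Finset.sum_div, Finset.sum_neg_distrib]

lemma int1_ne {p : ℝ} (hp : 1 < p) : ∫ x : ℝ, Real.exp (-(|x| ^ p / p)) ≠ 0 := by
  have h := integral_comp_abs (f := fun x : ℝ => Real.exp (-(x ^ p / p)))
  rw [h]
  have h2 := integral_exp_neg_mul_rpow (p := p) (b := 1 / p) (by linarith) (by positivity)
  have : ∫ x in Set.Ioi (0:ℝ), Real.exp (-(x ^ p / p)) = ∫ x in Set.Ioi (0:ℝ), Real.exp (-(1/p) * x ^ p) := by
    congr 1; ext x; congr 1; ring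
  rw [this, h2]
  have hp0 : 0 < p := by linarith
  have := Real.Gamma_pos_of_pos (s := 1 / p + 1) (by positivity)
  positivity

lemma rho_int {n : ℕ} {p : ℝ} (hp : 1 < p) : Integrable (rho p : (Fin n → ℝ) → ℝ) := by
  apply Integrable.of_integral_ne_zero
  have := integral_fintype_prod_volume_eq_prod (fun (_ : Fin n) (x : ℝ) => Real.exp (-(|x| ^ p / p)))
  simp_rw [rho_prod]
  rw [this]
  exact Finset.prod_ne_zero_iff.2 fun i _ => int1_ne hp

noncomputable def ZZ (n : ℕ) (p : ℝ) : ℝ≥0∞ := ((volume.withDensity fun x : EuclideanSpace ℝ (Fin n) =>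
      ENNReal.ofReal (Real.exp (-(∑ i, |x i| ^ p) / p))) Set.univ)

lemma lint_vol {n : ℕ} (φ : EuclideanSpace ℝ (Fin n) → ℝ≥0∞) :
    ∫⁻ x, φ x = ∫⁻ y : Fin n → ℝ, φ (WithLp.toLp 2 y) :=
  (PiLp.volume_preserving_toLp (Fin n)).lintegral_map_equiv φ (MeasurableEquiv.toLp 2 (Fin n → ℝ))

lemma lint_wd {n : ℕ} {p : ℝ} (hp : 1 < p) (φ : EuclideanSpace ℝ (Fin n) → ℝ≥0∞) :
    ∫⁻ x, φ x ∂(volume.withDensity fun x : EuclideanSpace ℝ (Fin n) =>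
      ENNReal.ofReal (Real.exp (-(∑ i, |x i| ^ p) / p))) =
    ∫⁻ y : Fin n → ℝ, φ (WithLp.toLp 2 y) * ENNReal.ofReal (rho p y) := by
  have hm : Measurable fun x : EuclideanSpace ℝ (Fin n) =>
      ENNReal.ofReal (Real.exp (-(∑ i, |x i| ^ p) / p)) := by
    have : Measurable fun x : EuclideanSpace ℝ (Fin n) => rho p (WithLp.ofLp x) :=
      (rho_cont hp).measurable.comp (MeasurableEquiv.toLp 2 (Fin n → ℝ)).symm.measurable
    exact this.ennreal_ofReal
  rw [lintegral_withDensity_eq_lintegral_mul_non_measurable _ hm (by simp), lint_vol]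
  refine lintegral_congr fun y => ?_
  simp [mul_comm, rho]

lemma ZZ_ne_zero {n : ℕ} {p : ℝ} (hp : 1 < p) : ZZ n p ≠ 0 := by
  rw [ZZ, ← lintegral_one, lint_wd hp]
  simp only [one_mul]
  rw [← ofReal_integral_eq_lintegral_ofReal (rho_int hp) (Eventually.of_forall fun y => (rho_pos p y).le)]
  simp only [ne_eq, ofReal_eq_zero, not_le]
  rw [integral_pos_iff_support_of_nonneg (fun y => (rho_pos p y).le) (rho_int hp)]
  have : Function.support (rho p : (Fin n → ℝ) → ℝ) = Set.univ := by
    ext y; simp [(rho_pos p y).ne']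
  rw [this]; exact isOpen_univ.measure_pos volume Set.univ_nonempty

lemma ZZ_ne_top {n : ℕ} {p : ℝ} (hp : 1 < p) : ZZ n p ≠ ⊤ := by
  rw [ZZ, ← lintegral_one, lint_wd hp]
  simp only [one_mul]
  rw [← ofReal_integral_eq_lintegral_ofReal (rho_int hp) (Eventually.of_forall fun y => (rho_pos p y).le)]
  simp

lemma lint_nu {n : ℕ} {p : ℝ} (hp : 1 < p) (φ : EuclideanSpace ℝ (Fin n) → ℝ≥0∞) :
    ∫⁻ x, φ x ∂(nuP n p) = (ZZ n p)⁻¹ * ∫⁻ y : Fin n → ℝ, φ (WithLp.toLp 2 y) * ENNReal.ofReal (rho p y) := by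
  rw [nuP, lintegral_smul_measure, lint_wd hp]; rfl

lemma nu_ac {n : ℕ} {p : ℝ} : nuP n p ≪ volume :=
  (withDensity_absolutelyContinuous _ _).smul_left _

/-- coordinates version of a function -/
def co {n : ℕ} (f : EuclideanSpace ℝ (Fin n) → ℝ) (y : Fin n → ℝ) : ℝ := f (WithLp.toLp 2 y)

noncomputable def Ms {n : ℕ} (p : ℝ) (F : (Fin n → ℝ) → ℝ) : ℝ≥0∞ := ∫⁻ y, ENNReal.ofReal (F y ^ 2 * rho p y)
noncomputable def En {n : ℕ} (p : ℝ) (F : (Fin n → ℝ) → ℝ) : ℝ≥0∞ :=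
  ∑ i, ∫⁻ y, ENNReal.ofReal (pd i F y ^ 2 * rho p y)

lemma co_LL {n : ℕ} {f : EuclideanSpace ℝ (Fin n) → ℝ} (hf : LocallyLipschitz f) :
    LocallyLipschitz (co f) :=
  hf.comp (PiLp.lipschitzWith_toLp 2 (fun _ : Fin n => ℝ)).locallyLipschitz

lemma Ms_eq {n : ℕ} {p : ℝ} (hp : 1 < p) (f : EuclideanSpace ℝ (Fin n) → ℝ) :
    ∫⁻ x, ENNReal.ofReal (f x ^ 2) ∂(nuP n p) = (ZZ n p)⁻¹ * Ms p (co f) := by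
  rw [lint_nu hp, Ms]
  congr 1
  refine lintegral_congr fun y => ?_
  rw [ENNReal.ofReal_mul (sq_nonneg _)]; rfl

lemma localLip_ae {n : ℕ} (hn : 1 ≤ n) {f : EuclideanSpace ℝ (Fin n) → ℝ} (hf : LocallyLipschitz f) :
    ∀ᵐ x, localLip f x = ‖fderiv ℝ f x‖ := by
  filter_upwards [LL_aeE hf] with x hx using localLip_eq hn hx

lemma En_eq {n : ℕ} (hn : 1 ≤ n) {p : ℝ} (hp : 1 < p) {f : EuclideanSpace ℝ (Fin n) → ℝ} (hf : LocallyLipschitz f) :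
    ∫⁻ x, ENNReal.ofReal (localLip f x ^ 2) ∂(nuP n p) = (ZZ n p)⁻¹ * En p (co f) := by
  rw [lint_nu hp, En]
  congr 1
  rw [← lintegral_finsetSum]
  · apply lintegral_congr_ae
    have h := (PiLp.volume_preserving_toLp (Fin n)).quasiMeasurePreserving.ae (LL_aeE hf)
    filter_upwards [h] with y hy
    rw [localLip_eq hn hy, norm_fderiv_sq, ← ENNReal.ofReal_mul (Finset.sum_nonneg fun _ _ => sq_nonneg _), Finset.sum_mul,
      ENNReal.ofReal_sum_of_nonneg (fun i _ => mul_nonneg (sq_nonneg _) (rho_pos p y).le)]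
    refine Finset.sum_congr rfl fun i _ => ?_
    rw [← pd_fderiv hy]; rfl
  · intro i _
    exact (((pd_meas i (co_LL hf).continuous).pow_const 2).mul (rho_cont hp).measurable).ennreal_ofReal

lemma mem_iff {n : ℕ} (hn : 1 ≤ n) {p : ℝ} (hp : 1 < p) {f : EuclideanSpace ℝ (Fin n) → ℝ} :
    memW12Lip (nuP n p) f ↔ LocallyLipschitz f ∧ Ms p (co f) < ⊤ ∧ En p (co f) < ⊤ := by
  unfold memW12Lip
  refine and_congr_right fun hf => ?_
  rw [Ms_eq hp, En_eq hn hp hf, ENNReal.add_lt_top]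
  have h0 : (ZZ n p)⁻¹ ≠ 0 := ENNReal.inv_ne_zero.2 (ZZ_ne_top hp)
  have h1 : (ZZ n p)⁻¹ ≠ ⊤ := ENNReal.inv_ne_top.2 (ZZ_ne_zero hp)
  have : ∀ a : ℝ≥0∞, (ZZ n p)⁻¹ * a < ⊤ ↔ a < ⊤ := by
    intro a
    rw [ENNReal.mul_lt_top_iff]
    constructor
    · rintro (h | h | h)
      · exact h.2
      · exact absurd h h0
      · simp [h]
    · exact fun h => Or.inl ⟨h1.lt_top, h⟩
  rw [this, this]

lemma int_f {n : ℕ} {p : ℝ} (hp : 1 < p) {f : EuclideanSpace ℝ (Fin n) → ℝ} (hf : LocallyLipschitz f) :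
    ∫ x, f x ^ 2 ∂(nuP n p) = ((ZZ n p)⁻¹).toReal * (Ms p (co f)).toReal := by
  rw [integral_eq_lintegral_of_nonneg_ae (Eventually.of_forall fun x => sq_nonneg _)
    (hf.continuous.pow 2).aestronglyMeasurable, Ms_eq hp, ENNReal.toReal_mul]

lemma int_g {n : ℕ} (hn : 1 ≤ n) {p : ℝ} (hp : 1 < p) {f : EuclideanSpace ℝ (Fin n) → ℝ} (hf : LocallyLipschitz f) :
    ∫ x, localLip f x ^ 2 ∂(nuP n p) = ((ZZ n p)⁻¹).toReal * (En p (co f)).toReal := by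
  rw [integral_eq_lintegral_of_nonneg_ae (Eventually.of_forall fun x => sq_nonneg _) ?_, En_eq hn hp hf, ENNReal.toReal_mul]
  have h : (fun x => localLip f x ^ 2) =ᵐ[nuP n p] fun x => ‖fderiv ℝ f x‖ ^ 2 := by
    filter_upwards [nu_ac.ae_le (localLip_ae hn hf)] with x hx
    rw [hx]
  exact (((measurable_fderiv ℝ f).norm.pow_const 2).aestronglyMeasurable).congr h.symm

lemma ratio {n : ℕ} (hn : 1 ≤ n) {p : ℝ} (hp : 1 < p) {f : EuclideanSpace ℝ (Fin n) → ℝ} (hf : LocallyLipschitz f) :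
    (∫ x, localLip f x ^ 2 ∂(nuP n p)) / (∫ x, f x ^ 2 ∂(nuP n p)) = (En p (co f)).toReal / (Ms p (co f)).toReal := by
  rw [int_f hp hf, int_g hn hp hf, mul_div_mul_left]
  exact (ENNReal.toReal_pos (ENNReal.inv_ne_zero.2 (ZZ_ne_top hp)) (ENNReal.inv_ne_top.2 (ZZ_ne_zero hp))).ne'

end Weyl

namespace Weyl

lemma slice_le {n : ℕ} (i : Fin n) {f g : (Fin n → ℝ) → ℝ≥0∞} (hf : Measurable f) (hg : Measurable g)
    (h : ∀ x : Fin n → ℝ, ∫⁻ s, f (Function.update x i s) ≤ ∫⁻ s, g (Function.update x i s)) :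
    ∫⁻ y, f y ≤ ∫⁻ y, g y := by
  rw [volume_pi]
  refine lintegral_le_of_lmarginal_le {i} hf hg fun x => ?_
  rw [lmarginal_singleton, lmarginal_singleton]
  exact h x

noncomputable def gg {n : ℕ} (p : ℝ) (F : (Fin n → ℝ) → ℝ) (y : Fin n → ℝ) : ℝ :=
  F y * ∏ i, Real.exp ((-1 / 2) * (|y i| ^ p / p))

lemma pd_update {n : ℕ} (i : Fin n) (F : (Fin n → ℝ) → ℝ) (x : Fin n → ℝ) (s : ℝ) :
    pd i F (Function.update x i s) = deriv (fun s => F (Function.update x i s)) s := by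
  simp [pd]

lemma prod_update {n : ℕ} (i : Fin n) (φ : ℝ → ℝ) (x : Fin n → ℝ) (s : ℝ) :
    ∏ k, φ (Function.update x i s k) = (∏ k ∈ Finset.univ.erase i, φ (x k)) * φ s := by
  rw [← Finset.prod_erase_mul _ _ (Finset.mem_univ i)]
  congr 1
  · refine Finset.prod_congr rfl fun k hk => ?_
    rw [Function.update_of_ne (Finset.ne_of_mem_erase hk)]
  · simp

lemma gg_LL {n : ℕ} {p : ℝ} (hp : 1 < p) {F : (Fin n → ℝ) → ℝ} (hF : LocallyLipschitz F) :
    LocallyLipschitz (gg p F) := by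
  unfold gg
  refine LL_mul hF ?_
  refine LL_prod Finset.univ fun i _ => ?_
  have h1 : LipschitzWith 1 (fun y : Fin n → ℝ => y i) := LipschitzWith.eval (α := fun _ : Fin n => ℝ) i
  exact (expV_LL hp (-1 / 2)).comp h1.locallyLipschitz

lemma gg_sq {n : ℕ} (p : ℝ) (F : (Fin n → ℝ) → ℝ) (y : Fin n → ℝ) : gg p F y ^ 2 = F y ^ 2 * rho p y := by
  rw [gg, rho_prod, mul_pow, ← Finset.prod_pow]
  congr 1
  refine Finset.prod_congr rfl fun k _ => ?_
  rw [← Real.exp_nat_mul]; congr 1; push_cast; ring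

lemma upd_LL {n : ℕ} {F : (Fin n → ℝ) → ℝ} (hF : LocallyLipschitz F) (x : Fin n → ℝ) (i : Fin n) :
    LocallyLipschitz (fun s => F (Function.update x i s)) := by
  refine hF.comp (LipschitzWith.locallyLipschitz (K := 1) ?_)
  refine LipschitzWith.of_dist_le_mul fun a b => ?_
  simp only [NNReal.coe_one, one_mul]
  rw [dist_pi_le_iff dist_nonneg]
  intro k
  by_cases hk : k = i
  · subst hk; simp
  · simp [Function.update_of_ne hk]

lemma upperI {n : ℕ} {p : ℝ} (hp : 1 < p) {δ : ℝ} (hδ : 0 < δ) (hδ1 : δ < 1)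
    {F : (Fin n → ℝ) → ℝ} (hF : LocallyLipschitz F) (i : Fin n) :
    ∫⁻ y, ENNReal.ofReal ((1 - δ) * (pd i (gg p F) y ^ 2 + dV p (y i) ^ 2 * gg p F y ^ 2 / 4))
      ≤ ∫⁻ y, ENNReal.ofReal (pd i F y ^ 2 * rho p y + ((1 + (p - 1) ^ 2) / (4 * δ)) * gg p F y ^ 2) := by
  have m1 := pd_meas i (gg_LL hp hF).continuous
  have m2 := (gg_LL hp hF).continuous.measurable
  have m3 := pd_meas i hF.continuous
  have m4 : Measurable (fun y : Fin n → ℝ => dV p (y i)) := (dV_cont hp).measurable.comp (measurable_pi_apply i)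
  have m5 := (rho_cont (n := n) hp).measurable
  refine slice_le i (by fun_prop) (by fun_prop) fun x => ?_
  set c : ℝ := ∏ k ∈ Finset.univ.erase i, Real.exp ((-1 / 2) * (|x k| ^ p / p)) with hc
  have key := upper1D hp hδ hδ1 (h := fun s => F (Function.update x i s) * c)
    (LL_mul (upd_LL hF x i) (LocallyLipschitz.const c)) (fun s => gg p F (Function.update x i s)) (by
      intro s
      rw [gg, prod_update i (fun t => Real.exp ((-1 / 2) * (|t| ^ p / p)))]
      simp only [hc]; ring)
  simp only [pd_update, Function.update_self]
  refine key.trans (le_of_eq ?_)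
  refine lintegral_congr fun s => ?_
  congr 2
  rw [deriv_mul_const_field, rho_prod, prod_update i (fun t => Real.exp (-(|t| ^ p / p)))]
  have : c ^ 2 = ∏ k ∈ Finset.univ.erase i, Real.exp (-(|x k| ^ p / p)) := by
    rw [hc, ← Finset.prod_pow]
    refine Finset.prod_congr rfl fun k _ => ?_
    rw [← Real.exp_nat_mul]; congr 1; push_cast; ring
  rw [← this]; ring

lemma upperAll {n : ℕ} {p : ℝ} (hp : 1 < p) {δ : ℝ} (hδ : 0 < δ) (hδ1 : δ < 1)
    {F : (Fin n → ℝ) → ℝ} (hF : LocallyLipschitz F) :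
    ENNReal.ofReal (1 - δ) * ∫⁻ y, ENNReal.ofReal (∑ i, (pd i (gg p F) y ^ 2 + dV p (y i) ^ 2 * gg p F y ^ 2 / 4))
      ≤ En p F + ENNReal.ofReal (n * ((1 + (p - 1) ^ 2) / (4 * δ))) * Ms p F := by
  have m1 := fun i => pd_meas i (gg_LL hp hF).continuous
  have m2 := (gg_LL hp hF).continuous.measurable
  have m3 := fun i => pd_meas i hF.continuous
  have m4 : ∀ i, Measurable (fun y : Fin n → ℝ => dV p (y i)) := fun i => (dV_cont hp).measurable.comp (measurable_pi_apply i)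
  have m5 := (rho_cont (n := n) hp).measurable
  have m6 := hF.continuous.measurable
  set C := (1 + (p - 1) ^ 2) / (4 * δ) with hC
  have hC0 : 0 ≤ C := by positivity
  rw [← lintegral_const_mul _ (by have := m1; have := m4; fun_prop)]
  calc _ = ∑ i, ∫⁻ y, ENNReal.ofReal ((1 - δ) * (pd i (gg p F) y ^ 2 + dV p (y i) ^ 2 * gg p F y ^ 2 / 4)) := by
        rw [← lintegral_finsetSum _ (by intro i _; have := m1 i; have := m4 i; fun_prop)]
        refine lintegral_congr fun y => ?_
        rw [← ENNReal.ofReal_mul (by linarith), Finset.mul_sum, ENNReal.ofReal_sum_of_nonneg]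
        intro i _
        have : 0 < 1 - δ := by linarith
        positivity
    _ ≤ ∑ i, ∫⁻ y, ENNReal.ofReal (pd i F y ^ 2 * rho p y + C * gg p F y ^ 2) :=
        Finset.sum_le_sum fun i _ => upperI hp hδ hδ1 hF i
    _ = ∑ i : Fin n, ((∫⁻ y, ENNReal.ofReal (pd i F y ^ 2 * rho p y)) + ENNReal.ofReal C * Ms p F) := by
        refine Finset.sum_congr rfl fun i _ => ?_
        rw [Ms, ← lintegral_const_mul _ (by fun_prop), ← lintegral_add_left (by have := m3 i; fun_prop)]
        refine lintegral_congr fun y => ?_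
        have := rho_pos p y
        rw [← ENNReal.ofReal_mul hC0, ← ENNReal.ofReal_add (by positivity) (by positivity), gg_sq]
    _ = _ := by
        rw [Finset.sum_add_distrib, En, ENNReal.ofReal_mul (by positivity)]
        simp [mul_assoc]

end Weyl

namespace Weyl

def cell (l : ℝ) (j : ℤ) : Set ℝ := Set.Ico (j * l) (j * l + l)

lemma cell_meas (l : ℝ) (j : ℤ) : MeasurableSet (cell l j) := measurableSet_Ico

lemma cell_disj {l : ℝ} (hl : 0 < l) {j k : ℤ} {s : ℝ} (h1 : s ∈ cell l j) (h2 : s ∈ cell l k) : j = k := by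
  unfold cell at h1 h2
  have a1 : (j:ℝ) < k + 1 := by
    have := h1.1.trans_lt h2.2
    have h3 : (k:ℝ) * l + l = (k+1) * l := by ring
    rw [h3] at this
    exact lt_of_mul_lt_mul_right this hl.le
  have a2 : (k:ℝ) < j + 1 := by
    have := h2.1.trans_lt h1.2
    have h3 : (j:ℝ) * l + l = (j+1) * l := by ring
    rw [h3] at this
    exact lt_of_mul_lt_mul_right this hl.le
  norm_cast at a1 a2
  omega

lemma cell_ex {l : ℝ} (hl : 0 < l) (s : ℝ) : s ∈ cell l ⌊s / l⌋ := by
  unfold cell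
  have h1 := Int.floor_le (s / l)
  have h2 := Int.lt_floor_add_one (s / l)
  constructor
  · calc _ ≤ s / l * l := by gcongr
      _ = s := by field_simp
  · calc s = s / l * l := by field_simp
      _ < (⌊s/l⌋ + 1) * l := by gcongr
      _ = _ := by ring

noncomputable def NN (l : ℝ) (m : ℕ) : ℝ := √(if m = 0 then 1 / l else 2 / l)
noncomputable def ce0 (l : ℝ) (q : ℤ × ℕ) (s : ℝ) : ℝ := NN l q.2 * Real.cos (q.2 * Real.pi / l * (s - q.1 * l))
noncomputable def se0 (l : ℝ) (q : ℤ × ℕ) (s : ℝ) : ℝ := NN l q.2 * Real.sin (q.2 * Real.pi / l * (s - q.1 * l))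
noncomputable def ce (l : ℝ) (q : ℤ × ℕ) : ℝ → ℝ := (cell l q.1).indicator (ce0 l q)
noncomputable def se (l : ℝ) (q : ℤ × ℕ) : ℝ → ℝ := (cell l q.1).indicator (se0 l q)

lemma ce0_cont (l q) : Continuous (ce0 l q) := by unfold ce0; fun_prop
lemma se0_cont (l q) : Continuous (se0 l q) := by unfold se0; fun_prop
lemma ce_meas (l q) : Measurable (ce l q) := (ce0_cont l q).measurable.indicator (cell_meas _ _)
lemma se_meas (l q) : Measurable (se l q) := (se0_cont l q).measurable.indicator (cell_meas _ _)

lemma J_int {l : ℝ} (hl : 0 < l) (a : ℝ) (k : ℤ) :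
    ∫ s in a..a + l, Real.cos (k * Real.pi / l * (s - a)) = if k = 0 then l else 0 := by
  split_ifs with hk
  · subst hk; simp
  · have hk' : (k:ℝ) ≠ 0 := by exact_mod_cast hk
    have hc : (k * Real.pi / l) ≠ 0 := by have := Real.pi_ne_zero; positivity
    have : ∀ s ∈ Set.uIcc a (a+l), HasDerivAt (fun s => Real.sin (k * Real.pi / l * (s - a)) / (k * Real.pi / l))
        (Real.cos (k * Real.pi / l * (s - a))) s := by
      intro s _
      have h1 : HasDerivAt (fun s => k * Real.pi / l * (s - a)) (k * Real.pi / l) s := by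
        simpa using ((hasDerivAt_id s).sub_const a).const_mul (k * Real.pi / l)
      refine (h1.sin.div_const _).congr_deriv ?_
      field_simp
    rw [intervalIntegral.integral_eq_sub_of_hasDerivAt this (by apply Continuous.intervalIntegrable; fun_prop)]
    have e : k * Real.pi / l * (a + l - a) = k * Real.pi := by field_simp; ring
    rw [e, Real.sin_int_mul_pi]; simp

lemma ind_int {l : ℝ} (hl : 0 < l) (j : ℤ) (φ : ℝ → ℝ) :
    ∫ s, (cell l j).indicator φ s = ∫ s in (j * l)..(j * l + l), φ s := by
  rw [integral_indicator (cell_meas _ _), cell, intervalIntegral.integral_of_le (by linarith)]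
  exact setIntegral_congr_set Ico_ae_eq_Ioc

lemma ind_integrable {l : ℝ} (j : ℤ) {φ : ℝ → ℝ} (h : Continuous φ) :
    Integrable ((cell l j).indicator φ) := by
  rw [integrable_indicator_iff (cell_meas _ _)]
  exact (h.integrableOn_Icc (a := j * l) (b := j * l + l)).mono_set Set.Ico_subset_Icc_self

lemma ce_sq_int (l q) : Integrable (fun s => ce l q s ^ 2) := by
  have : (fun s => ce l q s ^ 2) = (cell l q.1).indicator (fun s => ce0 l q s ^ 2) := by
    ext s; by_cases h : s ∈ cell l q.1 <;> simp [ce, h]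
  rw [this]; exact ind_integrable _ ((ce0_cont l q).pow 2)

lemma se_sq_int (l q) : Integrable (fun s => se l q s ^ 2) := by
  have : (fun s => se l q s ^ 2) = (cell l q.1).indicator (fun s => se0 l q s ^ 2) := by
    ext s; by_cases h : s ∈ cell l q.1 <;> simp [se, h]
  rw [this]; exact ind_integrable _ ((se0_cont l q).pow 2)

lemma NN_sq {l : ℝ} (hl : 0 < l) (m : ℕ) : NN l m * NN l m = if m = 0 then 1 / l else 2 / l := by
  unfold NN
  rw [Real.mul_self_sqrt]
  split_ifs <;> positivity

lemma NN_pos {l : ℝ} (hl : 0 < l) (m : ℕ) : 0 < NN l m := by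
  unfold NN
  apply Real.sqrt_pos.2
  split_ifs <;> positivity

lemma ce_orth {l : ℝ} (hl : 0 < l) (q r : ℤ × ℕ) :
    ∫ s, ce l q s * ce l r s = if q = r then 1 else 0 := by
  by_cases hj : q.1 = r.1
  · have e1 : (fun s => ce l q s * ce l r s) = (cell l q.1).indicator (fun s => NN l q.2 * NN l r.2 / 2 *
        (Real.cos (((q.2:ℤ) - (r.2:ℤ) : ℤ) * Real.pi / l * (s - q.1 * l))
          + Real.cos (((q.2:ℤ) + (r.2:ℤ) : ℤ) * Real.pi / l * (s - q.1 * l)))) := by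
      ext s
      by_cases h : s ∈ cell l q.1
      · have h' := h
        rw [hj] at h'
        simp only [ce, h, h', Set.indicator_of_mem, ce0]
        rw [hj]
        push_cast
        have c1 := Real.cos_sub (q.2 * Real.pi / l * (s - r.1 * l)) (r.2 * Real.pi / l * (s - r.1 * l))
        have c2 := Real.cos_add (q.2 * Real.pi / l * (s - r.1 * l)) (r.2 * Real.pi / l * (s - r.1 * l))
        have g1 : q.2 * Real.pi / l * (s - r.1 * l) - r.2 * Real.pi / l * (s - r.1 * l) = ((q.2:ℝ) - r.2) * Real.pi / l * (s - r.1 * l) := by ring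
        have g2 : q.2 * Real.pi / l * (s - r.1 * l) + r.2 * Real.pi / l * (s - r.1 * l) = ((q.2:ℝ) + r.2) * Real.pi / l * (s - r.1 * l) := by ring
        rw [← g1, ← g2, c1, c2]; ring
      · simp [ce, h]
    rw [e1, ind_int hl, intervalIntegral.integral_const_mul, intervalIntegral.integral_add
      (by apply Continuous.intervalIntegrable; fun_prop) (by apply Continuous.intervalIntegrable; fun_prop),
      J_int hl, J_int hl]
    by_cases hm : q.2 = r.2
    · have : q = r := Prod.ext hj hm
      subst this
      rw [NN_sq hl]
      by_cases h0 : q.2 = 0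
      · simp [h0]; field_simp; norm_num
      · have : (q.2:ℤ) + q.2 ≠ 0 := by omega
        simp only [h0, sub_self, this, if_true, if_false]; field_simp; simp
    · have : q ≠ r := fun h => hm (by rw [h])
      have t1 : (q.2:ℤ) - r.2 ≠ 0 := by omega
      have t2 : (q.2:ℤ) + r.2 ≠ 0 := by omega
      simp [this, t1, t2]
  · have : q ≠ r := fun h => hj (by rw [h])
    rw [if_neg this]
    have : (fun s => ce l q s * ce l r s) = fun _ => 0 := by
      ext s
      by_cases h : s ∈ cell l q.1
      · have h' : s ∉ cell l r.1 := fun h' => hj (cell_disj hl h h')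
        simp [ce, h']
      · simp [ce, h]
    rw [this]; simp

lemma se_orth {l : ℝ} (hl : 0 < l) (q r : ℤ × ℕ) :
    ∫ s, se l q s * se l r s = if q = r then (if q.2 = 0 then 0 else 1) else 0 := by
  by_cases hj : q.1 = r.1
  · have e1 : (fun s => se l q s * se l r s) = (cell l q.1).indicator (fun s => NN l q.2 * NN l r.2 / 2 *
        (Real.cos (((q.2:ℤ) - (r.2:ℤ) : ℤ) * Real.pi / l * (s - q.1 * l))
          - Real.cos (((q.2:ℤ) + (r.2:ℤ) : ℤ) * Real.pi / l * (s - q.1 * l)))) := by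
      ext s
      by_cases h : s ∈ cell l q.1
      · have h' := h
        rw [hj] at h'
        simp only [se, h, h', Set.indicator_of_mem, se0]
        rw [hj]
        push_cast
        have c1 := Real.cos_sub (q.2 * Real.pi / l * (s - r.1 * l)) (r.2 * Real.pi / l * (s - r.1 * l))
        have c2 := Real.cos_add (q.2 * Real.pi / l * (s - r.1 * l)) (r.2 * Real.pi / l * (s - r.1 * l))
        have g1 : q.2 * Real.pi / l * (s - r.1 * l) - r.2 * Real.pi / l * (s - r.1 * l) = ((q.2:ℝ) - r.2) * Real.pi / l * (s - r.1 * l) := by ring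
        have g2 : q.2 * Real.pi / l * (s - r.1 * l) + r.2 * Real.pi / l * (s - r.1 * l) = ((q.2:ℝ) + r.2) * Real.pi / l * (s - r.1 * l) := by ring
        rw [← g1, ← g2, c1, c2]; ring
      · simp [se, h]
    rw [e1, ind_int hl, intervalIntegral.integral_const_mul, intervalIntegral.integral_sub
      (by apply Continuous.intervalIntegrable; fun_prop) (by apply Continuous.intervalIntegrable; fun_prop),
      J_int hl, J_int hl]
    by_cases hm : q.2 = r.2
    · have : q = r := Prod.ext hj hm
      subst this
      rw [NN_sq hl]
      by_cases h0 : q.2 = 0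
      · simp [h0]
      · have : (q.2:ℤ) + q.2 ≠ 0 := by omega
        simp only [h0, sub_self, this, if_true, if_false]; field_simp; simp
    · have : q ≠ r := fun h => hm (by rw [h])
      have t1 : (q.2:ℤ) - r.2 ≠ 0 := by omega
      have t2 : (q.2:ℤ) + r.2 ≠ 0 := by omega
      simp [this, t1, t2]
  · have : q ≠ r := fun h => hj (by rw [h])
    rw [if_neg this]
    have : (fun s => se l q s * se l r s) = fun _ => 0 := by
      ext s
      by_cases h : s ∈ cell l q.1
      · have h' : s ∉ cell l r.1 := fun h' => hj (cell_disj hl h h')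
        simp [se, h']
      · simp [se, h]
    rw [this]; simp

lemma se0_deriv (l : ℝ) (q : ℤ × ℕ) (s : ℝ) : HasDerivAt (se0 l q) (q.2 * Real.pi / l * ce0 l q s) s := by
  have h1 : HasDerivAt (fun s => q.2 * Real.pi / l * (s - q.1 * l)) (q.2 * Real.pi / l) s := by
    simpa using ((hasDerivAt_id s).sub_const (q.1 * l)).const_mul (q.2 * Real.pi / l)
  refine (h1.sin.const_mul (NN l q.2)).congr_deriv ?_
  unfold ce0; ring

lemma se0_left (l : ℝ) (q : ℤ × ℕ) : se0 l q (q.1 * l) = 0 := by simp [se0]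
lemma se0_right {l : ℝ} (hl : 0 < l) (q : ℤ × ℕ) : se0 l q (q.1 * l + l) = 0 := by
  unfold se0
  have : q.2 * Real.pi / l * (q.1 * l + l - q.1 * l) = q.2 * Real.pi := by field_simp; ring
  rw [this, Real.sin_nat_mul_pi]; simp

lemma se0_LL (l q) : LocallyLipschitz (se0 l q) := by
  have : ContDiff ℝ 1 (se0 l q) := by unfold se0; fun_prop
  exact this.locallyLipschitz

lemma ibp1 {l : ℝ} (hl : 0 < l) (q : ℤ × ℕ) {g : ℝ → ℝ} (hg : LocallyLipschitz g) :
    Integrable (fun s => deriv g s * se l q s + q.2 * Real.pi / l * (g s * ce l q s)) ∧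
    ∫ s, (deriv g s * se l q s + q.2 * Real.pi / l * (g s * ce l q s)) = 0 := by
  have hu : LocallyLipschitz (fun s => g s * se0 l q s) := LL_mul hg (se0_LL l q)
  have hac := LL_ac hu (q.1 * l) (q.1 * l + l)
  have e1 : (fun s => deriv g s * se l q s + q.2 * Real.pi / l * (g s * ce l q s)) =ᵐ[volume]
      (cell l q.1).indicator (deriv (fun s => g s * se0 l q s)) := by
    filter_upwards [LL_ae hg] with s hs
    by_cases h : s ∈ cell l q.1
    · simp only [se, ce, h, Set.indicator_of_mem]
      have := hs.hasDerivAt.mul (se0_deriv l q s)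
      have h2 : deriv (fun s => g s * se0 l q s) s = _ := this.deriv
      rw [h2]; ring
    · simp [se, ce, h]
  have hi := hac.intervalIntegrable_deriv
  constructor
  · refine Integrable.congr ?_ e1.symm
    rw [integrable_indicator_iff (cell_meas _ _)]
    rw [intervalIntegrable_iff_integrableOn_Ico_of_le (by linarith)] at hi
    exact hi
  · rw [integral_congr_ae e1, ind_int hl, hac.integral_deriv_eq_sub]
    simp only [se0_left, se0_right hl]; simp

end Weyl

namespace Weyl

lemma expand {X ι : Type*} [MeasurableSpace X] {μ : Measure X} [DecidableEq ι] (M : Finset ι) {F : X → ℝ} {E : ι → X → ℝ}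
    (hF : MemLp F 2 μ) (hE : ∀ α ∈ M, MemLp (E α) 2 μ) {D : ι → ℝ}
    (ho : ∀ α ∈ M, ∀ β ∈ M, ∫ x, E α x * E β x ∂μ = if α = β then D α else 0) (a : ι → ℝ) :
    ∫ x, (F x - ∑ α ∈ M, a α * E α x) ^ 2 ∂μ =
      ∫ x, F x ^ 2 ∂μ - 2 * ∑ α ∈ M, a α * ∫ x, F x * E α x ∂μ + ∑ α ∈ M, D α * a α ^ 2 := by
  have hFE : ∀ α ∈ M, Integrable (fun x => F x * E α x) μ := fun α hα => hF.integrable_mul (hE α hα)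
  have hEE : ∀ α ∈ M, ∀ β ∈ M, Integrable (fun x => E α x * E β x) μ :=
    fun α hα β hβ => (hE α hα).integrable_mul (hE β hβ)
  have e : ∀ x, (F x - ∑ α ∈ M, a α * E α x) ^ 2 = F x ^ 2 - 2 * (∑ α ∈ M, a α * (F x * E α x))
      + ∑ α ∈ M, ∑ β ∈ M, a α * a β * (E α x * E β x) := by
    intro x
    have h1 : ∑ α ∈ M, a α * (F x * E α x) = F x * ∑ α ∈ M, a α * E α x := by
      rw [Finset.mul_sum]; exact Finset.sum_congr rfl fun _ _ => by ring
    have h2 : ∑ α ∈ M, ∑ β ∈ M, a α * a β * (E α x * E β x) = (∑ α ∈ M, a α * E α x) * ∑ α ∈ M, a α * E α x := by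
      rw [Finset.sum_mul_sum]; exact Finset.sum_congr rfl fun _ _ => Finset.sum_congr rfl fun _ _ => by ring
    rw [h1, h2]; ring
  simp_rw [e]
  have i1 : Integrable (fun x => ∑ α ∈ M, a α * (F x * E α x)) μ :=
    integrable_finsetSum _ fun α hα => (hFE α hα).const_mul _
  have i2 : Integrable (fun x => ∑ α ∈ M, ∑ β ∈ M, a α * a β * (E α x * E β x)) μ :=
    integrable_finsetSum _ fun α hα => integrable_finsetSum _ fun β hβ => (hEE α hα β hβ).const_mul _
  have i3 : Integrable (fun x => F x ^ 2 - 2 * ∑ α ∈ M, a α * (F x * E α x)) μ := hF.integrable_sq.sub (i1.const_mul 2)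
  rw [integral_add i3 i2, integral_sub hF.integrable_sq (i1.const_mul 2),
    integral_const_mul, integral_finsetSum _ fun α hα => (hFE α hα).const_mul _,
    integral_finsetSum _ fun α hα => integrable_finsetSum _ fun β hβ => (hEE α hα β hβ).const_mul _]
  congr 1
  · congr 2
    exact Finset.sum_congr rfl fun α _ => integral_const_mul _ _
  · refine Finset.sum_congr rfl fun α hα => ?_
    rw [integral_finsetSum _ fun β hβ => (hEE α hα β hβ).const_mul _]
    have : ∀ β ∈ M, ∫ x, a α * a β * (E α x * E β x) ∂μ = if α = β then D α * a α ^ 2 else 0 := by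
      intro β hβ
      rw [integral_const_mul, ho α hα β hβ]
      split_ifs with h
      · subst h; ring
      · simp
    rw [Finset.sum_congr rfl this, Finset.sum_ite_eq, if_pos hα]

lemma bessel {X ι : Type*} [MeasurableSpace X] {μ : Measure X} [DecidableEq ι] (M : Finset ι) {F : X → ℝ} {E : ι → X → ℝ}
    (hF : MemLp F 2 μ) (hE : ∀ α ∈ M, MemLp (E α) 2 μ) {D : ι → ℝ} (hD : ∀ α, D α ≤ 1)
    (ho : ∀ α ∈ M, ∀ β ∈ M, ∫ x, E α x * E β x ∂μ = if α = β then D α else 0) :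
    ∑ α ∈ M, (∫ x, F x * E α x ∂μ) ^ 2 ≤ ∫ x, F x ^ 2 ∂μ := by
  have h := expand M hF hE ho (fun α => ∫ x, F x * E α x ∂μ)
  have h0 : 0 ≤ ∫ x, (F x - ∑ α ∈ M, (∫ x, F x * E α x ∂μ) * E α x) ^ 2 ∂μ := integral_nonneg fun x => sq_nonneg _
  rw [h] at h0
  have h1 : ∑ α ∈ M, D α * (∫ x, F x * E α x ∂μ) ^ 2 ≤ ∑ α ∈ M, (∫ x, F x * E α x ∂μ) ^ 2 :=
    Finset.sum_le_sum fun α _ => mul_le_of_le_one_left (sq_nonneg _) (hD α)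
  have h2 : ∑ α ∈ M, (∫ x, F x * E α x ∂μ) * (∫ x, F x * E α x ∂μ) = ∑ α ∈ M, (∫ x, F x * E α x ∂μ) ^ 2 :=
    Finset.sum_congr rfl fun _ _ => by ring
  rw [h2] at h0
  linarith

/-- product families -/
def PP {n : ℕ} (φ : Fin n → ℤ × ℕ → ℝ → ℝ) (α : Fin n → ℤ × ℕ) (y : Fin n → ℝ) : ℝ := ∏ k, φ k (α k) (y k)

lemma PP_meas {n : ℕ} {φ : Fin n → ℤ × ℕ → ℝ → ℝ} (hm : ∀ k q, Measurable (φ k q)) (α) : Measurable (PP φ α) := by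
  unfold PP
  exact Finset.measurable_prod _ fun k _ => (hm k _).comp (measurable_pi_apply k)

lemma PP_mem {n : ℕ} {φ : Fin n → ℤ × ℕ → ℝ → ℝ} (hm : ∀ k q, Measurable (φ k q))
    (hi : ∀ k q, Integrable (fun s => φ k q s ^ 2)) (α) : MemLp (PP φ α) 2 := by
  rw [memLp_two_iff_integrable_sq (PP_meas hm α).aestronglyMeasurable]
  have := Integrable.fintype_prod (f := fun k s => φ k (α k) s ^ 2) (fun k => hi k (α k))
  simpa [PP, Finset.prod_pow, volume_pi] using this

lemma PP_orth {n : ℕ} {φ : Fin n → ℤ × ℕ → ℝ → ℝ} {D : Fin n → ℤ × ℕ → ℝ}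
    (ho : ∀ k q r, ∫ s, φ k q s * φ k r s = if q = r then D k q else 0) (α β) :
    ∫ y, PP φ α y * PP φ β y = if α = β then ∏ k, D k (α k) else 0 := by
  have := integral_fintype_prod_volume_eq_prod (fun k s => φ k (α k) s * φ k (β k) s)
  simp only [PP, ← Finset.prod_mul_distrib]
  rw [this]
  simp_rw [ho]
  split_ifs with h
  · subst h; simp
  · obtain ⟨k, hk⟩ := Function.ne_iff.1 h
    exact Finset.prod_eq_zero (Finset.mem_univ k) (if_neg hk)

lemma slice_zero {n : ℕ} (i : Fin n) {H : (Fin n → ℝ) → ℝ} (hm : Measurable H) (hi : Integrable H)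
    (h : ∀ x : Fin n → ℝ, Integrable (fun s => H (Function.update x i s)) ∧ ∫ s, H (Function.update x i s) = 0) :
    ∫ y, H y = 0 := by
  have key : ∀ x : Fin n → ℝ, ∫⁻ s, ENNReal.ofReal (H (Function.update x i s)) = ∫⁻ s, ENNReal.ofReal (-H (Function.update x i s)) := by
    intro x
    obtain ⟨h1, h2⟩ := h x
    rw [integral_eq_lintegral_pos_part_sub_lintegral_neg_part h1, sub_eq_zero] at h2
    exact (ENNReal.toReal_eq_toReal_iff' h1.lintegral_lt_top.ne h1.neg.lintegral_lt_top.ne).1 h2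
  have : ∫⁻ y, ENNReal.ofReal (H y) = ∫⁻ y, ENNReal.ofReal (- H y) := by
    apply le_antisymm
    · exact slice_le i (by fun_prop) (by fun_prop) fun x => (key x).le
    · exact slice_le i (by fun_prop) (by fun_prop) fun x => (key x).ge
  rw [integral_eq_lintegral_pos_part_sub_lintegral_neg_part hi, this, sub_self]

noncomputable def CE {n : ℕ} (l : ℝ) : (Fin n → ℤ × ℕ) → (Fin n → ℝ) → ℝ := PP (fun _ => ce l)
noncomputable def SE {n : ℕ} (l : ℝ) (i : Fin n) : (Fin n → ℤ × ℕ) → (Fin n → ℝ) → ℝ :=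
  PP (Function.update (fun _ => ce l) i (se l))

lemma PP_slice {n : ℕ} (φ : Fin n → ℤ × ℕ → ℝ → ℝ) (i : Fin n) (ψ : ℤ × ℕ → ℝ → ℝ) (α : Fin n → ℤ × ℕ) (x : Fin n → ℝ) (s : ℝ) :
    PP (Function.update φ i ψ) α (Function.update x i s) = (∏ k ∈ Finset.univ.erase i, φ k (α k) (x k)) * ψ (α i) s := by
  unfold PP
  rw [← Finset.prod_erase_mul _ _ (Finset.mem_univ i)]
  congr 1
  · refine Finset.prod_congr rfl fun k hk => ?_
    rw [Function.update_of_ne (Finset.ne_of_mem_erase hk), Function.update_of_ne (Finset.ne_of_mem_erase hk)]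
  · simp

lemma CE_mem {n : ℕ} (l : ℝ) (α : Fin n → ℤ × ℕ) : MemLp (CE l α) 2 :=
  PP_mem (fun _ => ce_meas l) (fun _ => ce_sq_int l) α

lemma SE_aux {n : ℕ} (l : ℝ) (i : Fin n) (P : (ℤ × ℕ → ℝ → ℝ) → Prop) (h1 : P (ce l)) (h2 : P (se l)) (k : Fin n) :
    P (Function.update (fun _ => ce l) i (se l) k) := by
  by_cases h : k = i
  · subst h; simpa
  · simpa [Function.update_of_ne h]

lemma SE_meas {n : ℕ} (l : ℝ) (i : Fin n) (α : Fin n → ℤ × ℕ) : Measurable (SE l i α) :=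
  PP_meas (fun k => SE_aux l i (fun φ => ∀ q, Measurable (φ q)) (ce_meas l) (se_meas l) k) α

lemma SE_mem {n : ℕ} (l : ℝ) (i : Fin n) (α : Fin n → ℤ × ℕ) : MemLp (SE l i α) 2 :=
  PP_mem (fun k => SE_aux l i (fun φ => ∀ q, Measurable (φ q)) (ce_meas l) (se_meas l) k)
    (fun k => SE_aux l i (fun φ => ∀ q, Integrable (fun s => φ q s ^ 2)) (ce_sq_int l) (se_sq_int l) k) α

lemma CE_orth {n : ℕ} {l : ℝ} (hl : 0 < l) (α β : Fin n → ℤ × ℕ) :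
    ∫ y, CE l α y * CE l β y = if α = β then 1 else 0 := by
  have := PP_orth (φ := fun _ : Fin n => ce l) (D := fun _ _ => 1) (fun k => ce_orth hl) α β
  simpa [CE] using this

lemma SE_orth {n : ℕ} {l : ℝ} (hl : 0 < l) (i : Fin n) (α β : Fin n → ℤ × ℕ) :
    ∫ y, SE l i α y * SE l i β y = if α = β then (if (α i).2 = 0 then 0 else 1) else 0 := by
  have := PP_orth (φ := Function.update (fun _ : Fin n => ce l) i (se l))
    (D := Function.update (fun _ _ => (1:ℝ)) i (fun q => if q.2 = 0 then 0 else 1)) (by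
      intro k
      by_cases h : k = i
      · subst h; simpa using se_orth hl
      · simpa [Function.update_of_ne h] using ce_orth hl) α β
  rw [SE, this]
  congr 1
  rw [← Finset.prod_erase_mul _ _ (Finset.mem_univ i), Finset.prod_eq_one]
  · simp
  · intro k hk
    rw [Function.update_of_ne (Finset.ne_of_mem_erase hk)]

lemma ibpN {n : ℕ} {l : ℝ} (hl : 0 < l) (i : Fin n) (α : Fin n → ℤ × ℕ) {G : (Fin n → ℝ) → ℝ}
    (hG : LocallyLipschitz G) (h2 : MemLp G 2) (h3 : MemLp (pd i G) 2) :
    ∫ y, pd i G y * SE l i α y = - ((α i).2 * Real.pi / l) * ∫ y, G y * CE l α y := by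
  have i1 : Integrable (fun y => pd i G y * SE l i α y) := h3.integrable_mul (SE_mem l i α)
  have i2 : Integrable (fun y => G y * CE l α y) := h2.integrable_mul (CE_mem l α)
  have m1 := pd_meas i hG.continuous
  have m2 := hG.continuous.measurable
  have m3 := SE_meas l i α
  have m4 : Measurable (CE l α) := PP_meas (fun _ => ce_meas l) α
  have key := slice_zero i (H := fun y => pd i G y * SE l i α y + ((α i).2 * Real.pi / l) * (G y * CE l α y))
    (by fun_prop) (i1.add (i2.const_mul _)) (by
      intro x
      obtain ⟨a, b⟩ := ibp1 hl (α i) (upd_LL hG x i)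
      have e : ∀ s, pd i G (Function.update x i s) * SE l i α (Function.update x i s) + ((α i).2 * Real.pi / l) * (G (Function.update x i s) * CE l α (Function.update x i s))
        = (∏ k ∈ Finset.univ.erase i, ce l (α k) (x k)) * (deriv (fun s => G (Function.update x i s)) s * se l (α i) s + (α i).2 * Real.pi / l * (G (Function.update x i s) * ce l (α i) s)) := by
        intro s
        have t1 := PP_slice (fun _ => ce l) i (se l) α x s
        have t2 := PP_slice (fun _ => ce l) i (ce l) α x s
        rw [Function.update_eq_self_iff.2 rfl] at t2
        rw [pd_update, SE, t1, CE, t2]; ring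
      simp_rw [e]
      exact ⟨a.const_mul _, by rw [integral_const_mul, b, mul_zero]⟩)
  rw [integral_add i1 (i2.const_mul _), integral_const_mul] at key
  linarith

end Weyl

namespace Weyl

section SW
variable {n : ℕ} (l : ℝ) (j : Fin n → ℤ)

abbrev bx : Set (Fin n → ℝ) := Set.univ.pi (fun k => Set.Icc (j k * l) (j k * l + l))

noncomputable def cp (m : Fin n → ℕ) : C(bx l j, ℝ) :=
  ⟨fun y => ∏ k, Real.cos (m k * Real.pi / l * (y.1 k - j k * l)),
    (show Continuous fun y : Fin n → ℝ => ∏ k, Real.cos (m k * Real.pi / l * (y k - j k * l)) by fun_prop).comp continuous_subtype_val⟩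

noncomputable def gen (i : Fin n) : C(bx l j, ℝ) :=
  ⟨fun y => Real.cos (Real.pi / l * (y.1 i - j i * l)),
    (show Continuous fun y : Fin n → ℝ => Real.cos (Real.pi / l * (y i - j i * l)) by fun_prop).comp continuous_subtype_val⟩

lemma cos_step (k : ℕ) (t : ℝ) : Real.cos t * Real.cos ((k + 1 : ℕ) * t) =
    (1/2) * Real.cos ((k + 2 : ℕ) * t) + (1/2) * Real.cos (k * t) := by
  have h1 := Real.cos_add ((k + 1 : ℕ) * t) t
  have h2 := Real.cos_sub ((k + 1 : ℕ) * t) t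
  have e1 : ((k + 1 : ℕ) : ℝ) * t + t = (k + 2 : ℕ) * t := by push_cast; ring
  have e2 : ((k + 1 : ℕ) : ℝ) * t - t = k * t := by push_cast; ring
  rw [e1] at h1; rw [e2] at h2
  rw [h1, h2]; ring

lemma cp_split (m : Fin n → ℕ) (i : Fin n) (y : bx l j) : cp l j m y =
    (∏ k ∈ Finset.univ.erase i, Real.cos (m k * Real.pi / l * (y.1 k - j k * l))) * Real.cos (m i * (Real.pi / l * (y.1 i - j i * l))) := by
  show ∏ k, Real.cos (m k * Real.pi / l * (y.1 k - j k * l)) = _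
  rw [← Finset.prod_erase_mul _ _ (Finset.mem_univ i)]
  congr 2; ring

lemma cp_split_up (m : Fin n → ℕ) (i : Fin n) (r : ℕ) (y : bx l j) : cp l j (Function.update m i r) y =
    (∏ k ∈ Finset.univ.erase i, Real.cos (m k * Real.pi / l * (y.1 k - j k * l))) * Real.cos (r * (Real.pi / l * (y.1 i - j i * l))) := by
  rw [cp_split l j _ i]
  congr 1
  · refine Finset.prod_congr rfl fun k hk => ?_
    rw [Function.update_of_ne (Finset.ne_of_mem_erase hk)]
  · simp

lemma gen_cp (i : Fin n) (m : Fin n → ℕ) : gen l j i * cp l j m ∈ Submodule.span ℝ (Set.range (cp l j)) := by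
  rcases hm : m i with _ | k
  · have : gen l j i * cp l j m = cp l j (Function.update m i 1) := by
      ext y
      rw [ContinuousMap.mul_apply, cp_split_up, cp_split l j m i, hm]
      simp [gen, mul_comm]
    rw [this]; exact Submodule.subset_span ⟨_, rfl⟩
  · have : gen l j i * cp l j m = (1/2 : ℝ) • cp l j (Function.update m i (k+2)) + (1/2 : ℝ) • cp l j (Function.update m i k) := by
      ext y
      rw [ContinuousMap.mul_apply, ContinuousMap.add_apply, ContinuousMap.smul_apply, ContinuousMap.smul_apply, cp_split_up, cp_split_up, cp_split l j m i, hm]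
      have := cos_step k (Real.pi / l * (y.1 i - j i * l))
      simp only [gen, ContinuousMap.coe_mk, smul_eq_mul]
      linear_combination (∏ k ∈ Finset.univ.erase i, Real.cos (m k * Real.pi / l * (y.1 k - j k * l))) * this
    rw [this]
    exact Submodule.add_mem _ (Submodule.smul_mem _ _ (Submodule.subset_span ⟨_, rfl⟩)) (Submodule.smul_mem _ _ (Submodule.subset_span ⟨_, rfl⟩))

lemma gen_span (i : Fin n) (x : C(bx l j, ℝ)) (hx : x ∈ Submodule.span ℝ (Set.range (cp l j))) :
    gen l j i * x ∈ Submodule.span ℝ (Set.range (cp l j)) := by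
  induction hx using Submodule.span_induction with
  | mem x h => obtain ⟨m, rfl⟩ := h; exact gen_cp l j i m
  | zero => simp
  | add x y _ _ hx hy => rw [mul_add]; exact Submodule.add_mem _ hx hy
  | smul a x _ hx => rw [mul_smul_comm]; exact Submodule.smul_mem _ _ hx

lemma adjoin_span (x : C(bx l j, ℝ)) (hx : x ∈ Algebra.adjoin ℝ (Set.range (gen l j))) :
    x ∈ Submodule.span ℝ (Set.range (cp l j)) := by
  have h : x ∈ Subalgebra.toSubmodule (Algebra.adjoin ℝ (Set.range (gen l j))) := hx
  rw [Algebra.adjoin_eq_span] at h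
  refine Submodule.span_le.2 ?_ h
  intro z hz
  induction hz using Submonoid.closure_induction_left with
  | one =>
    apply Submodule.subset_span
    refine ⟨0, ?_⟩
    ext y; simp [cp]
  | mul_left x hx y _ ih =>
    obtain ⟨i, rfl⟩ := hx
    exact gen_span l j i y ih

lemma sw {l : ℝ} (hl : 0 < l) (j : Fin n → ℤ) {G : (Fin n → ℝ) → ℝ} (hG : Continuous G) {ε : ℝ} (hε : 0 < ε) :
    ∃ (M : Finset (Fin n → ℕ)) (b : (Fin n → ℕ) → ℝ), ∀ y, (∀ k, y k ∈ cell l (j k)) →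
      |G y - ∑ m ∈ M, b m * ∏ k, Real.cos (m k * Real.pi / l * (y k - j k * l))| ≤ ε := by
  have : CompactSpace (bx l j) := isCompact_iff_compactSpace.1 (isCompact_univ_pi fun k => isCompact_Icc)
  have hsep : (Algebra.adjoin ℝ (Set.range (gen l j))).SeparatesPoints := by
    intro x y hxy
    have : ∃ i, x.1 i ≠ y.1 i := by
      by_contra h; push Not at h
      exact hxy (Subtype.ext (funext h))
    obtain ⟨i, hi⟩ := this
    refine ⟨gen l j i, ⟨gen l j i, Algebra.subset_adjoin ⟨i, rfl⟩, rfl⟩, ?_⟩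
    intro h
    have hmem : ∀ z : bx l j, Real.pi / l * (z.1 i - j i * l) ∈ Set.Icc 0 Real.pi := by
      intro z
      have hz := z.2 i (Set.mem_univ i)
      have hp := Real.pi_pos
      constructor
      · have := hz.1
        exact mul_nonneg (by positivity) (by linarith)
      · have := hz.2
        calc _ ≤ Real.pi / l * l := by gcongr; linarith
          _ = Real.pi := by field_simp
    have := Real.injOn_cos (hmem x) (hmem y) h
    have hp : Real.pi / l ≠ 0 := by have := Real.pi_pos; positivity
    have := mul_left_cancel₀ hp this
    exact hi (by linarith)
  obtain ⟨g, hg⟩ := ContinuousMap.exists_mem_subalgebra_near_continuousMap_of_separatesPoints _ hsep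
    (⟨fun y => G y.1, by fun_prop⟩ : C(bx l j, ℝ)) ε hε
  obtain ⟨c, hc⟩ := (Finsupp.mem_span_range_iff_exists_finsupp).1 (adjoin_span l j g.1 g.2)
  refine ⟨c.support, c, fun y hy => ?_⟩
  let z : bx l j := ⟨y, fun k _ => Set.Ico_subset_Icc_self (hy k)⟩
  have h1 := ContinuousMap.norm_coe_le_norm (g.1 - (⟨fun y => G y.1, by fun_prop⟩ : C(bx l j, ℝ))) z
  have h2 : (g : C(bx l j, ℝ)) z = ∑ m ∈ c.support, c m * ∏ k, Real.cos (m k * Real.pi / l * (y k - j k * l)) := by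
    rw [← hc, Finsupp.sum, ContinuousMap.sum_apply]
    rfl
  rw [← h2, abs_sub_comm]
  exact h1.trans hg.le
end SW

lemma parse {n : ℕ} {l : ℝ} (hl : 0 < l) (j : Fin n → ℤ) {G : (Fin n → ℝ) → ℝ} (hG : Continuous G)
    {ε : ℝ} (hε : 0 < ε) :
    ∃ M : Finset (Fin n → ℤ × ℕ), (∀ α ∈ M, ∀ k, (α k).1 = j k) ∧
      ∫ y in Set.univ.pi (fun k => cell l (j k)), G y ^ 2 ≤ ∑ α ∈ M, (∫ y, G y * CE l α y) ^ 2 + ε := by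
  classical
  set B := Set.univ.pi (fun k => cell l (j k)) with hB
  have hBm : MeasurableSet B := MeasurableSet.univ_pi fun k => cell_meas _ _
  have hBv : volume B = ENNReal.ofReal (l ^ n) := by
    rw [hB, volume_pi_pi]; simp [cell, ENNReal.ofReal_pow hl.le]
  have hln : 0 < l ^ n := by positivity
  obtain ⟨M, b, hb⟩ := sw hl j hG (ε := √(ε / l ^ n)) (by positivity)
  set A : (Fin n → ℕ) → (Fin n → ℤ × ℕ) := fun m k => (j k, m k) with hA
  have hAi : Function.Injective A := fun m m' h => funext fun k => (Prod.ext_iff.1 (congrFun h k)).2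
  refine ⟨M.image A, ?_, ?_⟩
  · intro α hα k
    obtain ⟨m, _, rfl⟩ := Finset.mem_image.1 hα
    rfl
  have hCB : ∀ m y, y ∈ B → CE l (A m) y = (∏ k, NN l (m k)) * ∏ k, Real.cos (m k * Real.pi / l * (y k - j k * l)) := by
    intro m y hy
    rw [CE, PP, ← Finset.prod_mul_distrib]
    refine Finset.prod_congr rfl fun k _ => ?_
    rw [ce, Set.indicator_of_mem (hy k (Set.mem_univ k))]; rfl
  have hCN : ∀ m y, y ∉ B → CE l (A m) y = 0 := by
    intro m y hy
    simp only [hB, Set.mem_pi, Set.mem_univ, true_imp_iff, not_forall] at hy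
    obtain ⟨k, hk⟩ := hy
    rw [CE, PP]
    exact Finset.prod_eq_zero (Finset.mem_univ k) (by rw [ce, Set.indicator_of_notMem hk])
  have hGm : MemLp (B.indicator G) 2 := by
    have hb2 : Bornology.IsBounded B := by
      rw [hB]; exact Bornology.IsBounded.pi fun k => Metric.isBounded_Ico _ _
    have : IntegrableOn (fun y => G y ^ 2) B :=
      ((hG.pow 2).continuousOn.integrableOn_compact hb2.isCompact_closure).mono_set subset_closure
    rw [memLp_two_iff_integrable_sq (hG.measurable.indicator hBm).aestronglyMeasurable]
    rw [← integrable_indicator_iff hBm] at this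
    refine this.congr (Eventually.of_forall fun y => ?_)
    by_cases h : y ∈ B <;> simp [h]
  have hex := expand (M.image A) hGm (fun α _ => CE_mem l α) (fun α _ β _ => CE_orth hl α β)
    (fun α => b (fun k => (α k).2) / ∏ k, NN l (α k).2)
  have hc : ∀ m, ∫ y, B.indicator G y * CE l (A m) y = ∫ y, G y * CE l (A m) y := by
    intro m
    congr 1; ext y
    by_cases h : y ∈ B
    · simp [h]
    · simp [hCN m y h]
  have h1 : ∫ y, (B.indicator G y - ∑ α ∈ M.image A, (b (fun k => (α k).2) / ∏ k, NN l (α k).2) * CE l α y) ^ 2 ≤ ε := by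
    have : ∀ y, (B.indicator G y - ∑ α ∈ M.image A, (b (fun k => (α k).2) / ∏ k, NN l (α k).2) * CE l α y) ^ 2
        ≤ B.indicator (fun _ => ε / l ^ n) y := by
      intro y
      rw [Finset.sum_image (fun _ _ _ _ h => hAi h)]
      by_cases h : y ∈ B
      · rw [Set.indicator_of_mem h, Set.indicator_of_mem h]
        have := hb y (fun k => h k (Set.mem_univ k))
        rw [← Real.sq_sqrt (show 0 ≤ ε / l ^ n by positivity)]
        apply sq_le_sq'
        · have h3 : ∑ x ∈ M, (b (fun k => (A x k).2) / ∏ k, NN l (A x k).2) * CE l (A x) y = ∑ m ∈ M, b m * ∏ k, Real.cos (m k * Real.pi / l * (y k - j k * l)) := by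
            refine Finset.sum_congr rfl fun m _ => ?_
            rw [hCB m y h]
            have : ∏ k, NN l (m k) ≠ 0 := Finset.prod_ne_zero_iff.2 fun k _ => (NN_pos hl _).ne'
            simp only [hA]
            rw [← mul_assoc, div_mul_cancel₀ _ this]
          rw [h3]; exact (abs_le.1 this).1
        · have h3 : ∑ x ∈ M, (b (fun k => (A x k).2) / ∏ k, NN l (A x k).2) * CE l (A x) y = ∑ m ∈ M, b m * ∏ k, Real.cos (m k * Real.pi / l * (y k - j k * l)) := by
            refine Finset.sum_congr rfl fun m _ => ?_
            rw [hCB m y h]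
            have : ∏ k, NN l (m k) ≠ 0 := Finset.prod_ne_zero_iff.2 fun k _ => (NN_pos hl _).ne'
            simp only [hA]
            rw [← mul_assoc, div_mul_cancel₀ _ this]
          rw [h3]; exact (abs_le.1 this).2
      · simp [h, hCN _ y h]
    calc _ ≤ ∫ y, B.indicator (fun _ => ε / l ^ n) y := by
          apply integral_mono_of_nonneg (Eventually.of_forall fun y => sq_nonneg _) _ (Eventually.of_forall this)
          rw [integrable_indicator_iff hBm]
          exact integrableOn_const (by rw [hBv]; simp)
      _ = ε := by
          rw [integral_indicator hBm, setIntegral_const, Measure.real, hBv, ENNReal.toReal_ofReal hln.le, smul_eq_mul]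
          field_simp
  rw [hex] at h1
  have h2 : ∫ y, B.indicator G y ^ 2 = ∫ y in B, G y ^ 2 := by
    rw [← integral_indicator hBm]
    congr 1; ext y
    by_cases h : y ∈ B <;> simp [h]
  rw [h2, Finset.sum_image (fun _ _ _ _ h => hAi h), Finset.sum_image (fun _ _ _ _ h => hAi h)] at h1
  rw [Finset.sum_image (fun _ _ _ _ h => hAi h)]
  simp_rw [hc] at h1
  have h4 : ∑ m ∈ M, (2 * ((b (fun k => (A m k).2) / ∏ k, NN l (A m k).2) * ∫ y, G y * CE l (A m) y)
      - 1 * (b (fun k => (A m k).2) / ∏ k, NN l (A m k).2) ^ 2) ≤ ∑ m ∈ M, (∫ y, G y * CE l (A m) y) ^ 2 := by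
    refine Finset.sum_le_sum fun m _ => ?_
    nlinarith [sq_nonneg ((b (fun k => (A m k).2) / ∏ k, NN l (A m k).2) - ∫ y, G y * CE l (A m) y)]
  rw [Finset.sum_sub_distrib, ← Finset.mul_sum] at h4
  linarith

end Weyl

namespace Weyl

def absn : ℤ → ℕ
  | Int.ofNat k => k
  | Int.negSucc k => k

noncomputable def wm (p l : ℝ) (j : ℤ) : ℝ := (absn j * l) ^ (2 * (p - 1)) / 4
noncomputable def wp (p l : ℝ) (j : ℤ) : ℝ := ((absn j + 1) * l) ^ (2 * (p - 1)) / 4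

lemma absn_cell {l : ℝ} (hl : 0 < l) {j : ℤ} {s : ℝ} (h : s ∈ cell l j) : absn j * l ≤ |s| ∧ |s| ≤ (absn j + 1) * l := by
  unfold cell at h
  rcases j with k | k
  · have h1 := h.1; have h2 := h.2
    simp only [Int.ofNat_eq_natCast, Int.cast_natCast] at h1 h2
    have : 0 ≤ (k:ℝ) * l := by positivity
    rw [abs_of_nonneg (by linarith)]
    simp only [absn]
    constructor <;> linarith
  · have h1 := h.1; have h2 := h.2
    simp only [Int.cast_negSucc] at h1 h2
    push_cast at h1 h2
    have : 0 ≤ (k:ℝ) * l := by positivity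
    rw [abs_of_nonpos (by linarith)]
    simp only [absn]
    constructor <;> linarith

lemma dV_sq {p : ℝ} (s : ℝ) (hp : 1 < p) : dV p s ^ 2 = |s| ^ (2 * (p - 1)) := by
  rw [← sq_abs, dV_abs hp, mul_comm, Real.rpow_mul (abs_nonneg s)]
  norm_cast

lemma wm_le {p l : ℝ} (hp : 1 < p) (hl : 0 < l) {j : ℤ} {s : ℝ} (h : s ∈ cell l j) : wm p l j ≤ dV p s ^ 2 / 4 := by
  rw [dV_sq s hp, wm]
  have := (absn_cell hl h).1
  have h2 : 0 ≤ 2 * (p - 1) := by linarith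
  gcongr

lemma wp_ge {p l : ℝ} (hp : 1 < p) (hl : 0 < l) {j : ℤ} {s : ℝ} (h : s ∈ cell l j) : dV p s ^ 2 / 4 ≤ wp p l j := by
  rw [dV_sq s hp, wp]
  have := (absn_cell hl h).2
  have h2 : 0 ≤ 2 * (p - 1) := by linarith
  gcongr

lemma wm_nonneg {p l : ℝ} (hl : 0 < l) (j : ℤ) : 0 ≤ wm p l j := by unfold wm; positivity
lemma wp_nonneg {p l : ℝ} (hl : 0 < l) (j : ℤ) : 0 ≤ wp p l j := by unfold wp; positivity

noncomputable def lev {n : ℕ} (p l : ℝ) (α : Fin n → ℤ × ℕ) : ℝ := ∑ i, (wm p l (α i).1 + ((α i).2 * Real.pi / l) ^ 2)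

lemma CE_pot {n : ℕ} {p l : ℝ} (hl : 0 < l) (i : Fin n) (α : Fin n → ℤ × ℕ) (G : (Fin n → ℝ) → ℝ) :
    ∫ y, (√(wm p l ⌊y i / l⌋) * G y) * CE l α y = √(wm p l (α i).1) * ∫ y, G y * CE l α y := by
  rw [← integral_const_mul]
  congr 1; ext y
  by_cases h : y i ∈ cell l (α i).1
  · rw [cell_disj hl (cell_ex hl (y i)) h]; ring
  · have : CE l α y = 0 := by
      rw [CE, PP]
      exact Finset.prod_eq_zero (Finset.mem_univ i) (by rw [ce, Set.indicator_of_notMem h])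
    rw [this]; ring

lemma upper_fin {n : ℕ} {p l : ℝ} (hp : 1 < p) (hl : 0 < l) {G : (Fin n → ℝ) → ℝ}
    (hG : LocallyLipschitz G) (h2 : MemLp G 2) (h3 : ∀ i, MemLp (pd i G) 2)
    (h4 : ∀ i, MemLp (fun y => dV p (y i) * G y / 2) 2) (M : Finset (Fin n → ℤ × ℕ)) :
    ∑ α ∈ M, lev p l α * (∫ y, G y * CE l α y) ^ 2 ≤
      ∑ i, ((∫ y, pd i G y ^ 2) + ∫ y, (dV p (y i) * G y / 2) ^ 2) := by
  classical
  have e : ∑ α ∈ M, lev p l α * (∫ y, G y * CE l α y) ^ 2 = ∑ i, (∑ α ∈ M, (∫ y, pd i G y * SE l i α y) ^ 2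
      + ∑ α ∈ M, (∫ y, (√(wm p l ⌊y i / l⌋) * G y) * CE l α y) ^ 2) := by
    simp_rw [← Finset.sum_add_distrib]
    rw [Finset.sum_comm]
    refine Finset.sum_congr rfl fun α _ => ?_
    rw [lev, Finset.sum_mul]
    refine Finset.sum_congr rfl fun i _ => ?_
    rw [ibpN hl i α hG h2 (h3 i), CE_pot hl, mul_pow, mul_pow, Real.sq_sqrt (wm_nonneg hl _)]
    ring
  rw [e]
  refine Finset.sum_le_sum fun i _ => ?_
  refine add_le_add ?_ ?_
  · exact bessel M (h3 i) (fun α _ => SE_mem l i α) (D := fun α => if (α i).2 = 0 then 0 else 1)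
      (fun α => by split_ifs <;> norm_num) (fun α _ β _ => SE_orth hl i α β)
  · have hle : ∀ y : Fin n → ℝ, (√(wm p l ⌊y i / l⌋) * G y) ^ 2 ≤ (dV p (y i) * G y / 2) ^ 2 := by
      intro y
      rw [mul_pow, Real.sq_sqrt (wm_nonneg hl _)]
      have := wm_le hp hl (cell_ex hl (y i))
      calc _ ≤ dV p (y i) ^ 2 / 4 * G y ^ 2 := by gcongr
        _ = _ := by ring
    have hm : Measurable fun y : Fin n → ℝ => √(wm p l ⌊y i / l⌋) * G y := by
      refine Measurable.mul ?_ hG.continuous.measurable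
      have a1 : Measurable fun y : Fin n → ℝ => ⌊y i / l⌋ :=
        Measurable.floor (show Measurable fun y : Fin n → ℝ => y i / l by fun_prop)
      exact (measurable_of_countable (fun j : ℤ => √(wm p l j))).comp a1
    have hmem : MemLp (fun y : Fin n → ℝ => √(wm p l ⌊y i / l⌋) * G y) 2 := by
      refine (h4 i).mono hm.aestronglyMeasurable (Eventually.of_forall fun y => ?_)
      exact sq_le_sq.1 (hle y)
    refine (bessel M hmem (fun α _ => CE_mem l α) (D := fun _ => 1) (fun α => le_rfl) (fun α _ β _ => CE_orth hl α β)).trans ?_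
    exact integral_mono hmem.integrable_sq (h4 i).integrable_sq hle

lemma upper_core {n : ℕ} {p l : ℝ} (hp : 1 < p) (hl : 0 < l) {G : (Fin n → ℝ) → ℝ}
    (hG : LocallyLipschitz G) (h2 : MemLp G 2) (h3 : ∀ i, MemLp (pd i G) 2)
    (h4 : ∀ i, MemLp (fun y => dV p (y i) * G y / 2) 2) {L : ℝ} (hL : 0 ≤ L)
    (h0 : ∀ α, lev p l α ≤ L → ∫ y, G y * CE l α y = 0) :
    L * ∫ y, G y ^ 2 ≤ ∑ i, ((∫ y, pd i G y ^ 2) + ∫ y, (dV p (y i) * G y / 2) ^ 2) := by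
  classical
  set E := ∑ i, ((∫ y, pd i G y ^ 2) + ∫ y, (dV p (y i) * G y / 2) ^ 2) with hE
  let B : (Fin n → ℤ) → Set (Fin n → ℝ) := fun j => Set.univ.pi (fun k => cell l (j k))
  have hBm : ∀ j, MeasurableSet (B j) := fun j => MeasurableSet.univ_pi fun k => cell_meas _ _
  have hBU : (⋃ j, B j) = Set.univ := by
    ext y
    simp only [Set.mem_iUnion, Set.mem_univ, iff_true]
    exact ⟨fun k => ⌊y k / l⌋, fun k _ => cell_ex hl (y k)⟩
  have hBd : Pairwise (Function.onFun Disjoint B) := by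
    intro j k hjk
    rw [Function.onFun, Set.disjoint_left]
    intro y h1 h2
    exact hjk (funext fun i => cell_disj hl (h1 i (Set.mem_univ i)) (h2 i (Set.mem_univ i)))
  have hs := hasSum_integral_iUnion (f := fun y => G y ^ 2) hBm hBd (μ := volume) (by rw [hBU]; exact h2.integrable_sq.integrableOn)
  rw [hBU, setIntegral_univ] at hs
  refine hasSum_le_of_sum_le (hs.mul_left L) fun T => ?_
  apply _root_.le_of_forall_pos_le_add
  intro ε hε
  have hc : 0 < (L + 1) * (T.card + 1) := by positivity
  choose M hM1 hM2 using fun j => parse hl j hG.continuous (ε := ε / ((L + 1) * (T.card + 1))) (by positivity)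
  have hdisj : (T : Set (Fin n → ℤ)).PairwiseDisjoint M := by
    intro j _ k _ hjk
    rw [Function.onFun, Finset.disjoint_left]
    intro α h1 h2
    exact hjk (funext fun i => (hM1 j α h1 i).symm.trans (hM1 k α h2 i))
  calc ∑ j ∈ T, L * ∫ y in B j, G y ^ 2 ≤ ∑ j ∈ T, L * (∑ α ∈ M j, (∫ y, G y * CE l α y) ^ 2 + ε / ((L + 1) * (T.card + 1))) := by
        gcongr with j _; exact hM2 j
    _ = ∑ j ∈ T, ∑ α ∈ M j, L * (∫ y, G y * CE l α y) ^ 2 + T.card * (L * (ε / ((L + 1) * (T.card + 1)))) := by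
        simp_rw [mul_add, Finset.sum_add_distrib, Finset.mul_sum]; simp
    _ ≤ ∑ α ∈ T.biUnion M, lev p l α * (∫ y, G y * CE l α y) ^ 2 + ε := by
        refine add_le_add ?_ ?_
        · rw [Finset.sum_biUnion hdisj]
          refine Finset.sum_le_sum fun j _ => Finset.sum_le_sum fun α _ => ?_
          by_cases h : lev p l α ≤ L
          · rw [h0 α h]; simp
          · gcongr; linarith
        · have : (T.card:ℝ) * (L * (ε / ((L + 1) * (T.card + 1)))) = ε * ((T.card * L) / ((L + 1) * (T.card + 1))) := by ring
          rw [this]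
          have : (T.card * L) / ((L + 1) * (T.card + 1)) ≤ 1 := by
            rw [div_le_one hc]
            have : (0:ℝ) ≤ T.card := by positivity
            nlinarith
          exact mul_le_of_le_one_right hε.le this
    _ ≤ E + ε := by
        gcongr
        exact upper_fin hp hl hG h2 h3 h4 _

lemma memLp_of_lint {X : Type*} [MeasurableSpace X] {μ : Measure X} {f : X → ℝ} (hf : Measurable f)
    (h : ∫⁻ x, ENNReal.ofReal (f x ^ 2) ∂μ < ⊤) : MemLp f 2 μ := by
  rw [memLp_two_iff_integrable_sq hf.aestronglyMeasurable]
  refine ⟨(hf.pow_const 2).aestronglyMeasurable, ?_⟩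
  rwa [hasFiniteIntegral_iff_ofReal (Eventually.of_forall fun x => sq_nonneg _)]

lemma upper_final {n : ℕ} {p l : ℝ} (hp : 1 < p) (hl : 0 < l) {δ : ℝ} (hδ : 0 < δ) (hδ1 : δ < 1)
    {F : (Fin n → ℝ) → ℝ} (hF : LocallyLipschitz F) (hM : Ms p F < ⊤) (hEn : En p F < ⊤) {L : ℝ} (hL : 0 ≤ L)
    (h0 : ∀ α, lev p l α ≤ L → ∫ y, gg p F y * CE l α y = 0) :
    ((1 - δ) * L - n * ((1 + (p - 1) ^ 2) / (4 * δ))) * (Ms p F).toReal ≤ (En p F).toReal := by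
  have hG := gg_LL hp hF
  set C := n * ((1 + (p - 1) ^ 2) / (4 * δ)) with hC
  have hC0 : 0 ≤ C := by positivity
  have hup := upperAll hp hδ hδ1 hF
  rw [← hC] at hup
  set EG := ∫⁻ y, ENNReal.ofReal (∑ i, (pd i (gg p F) y ^ 2 + dV p (y i) ^ 2 * gg p F y ^ 2 / 4)) with hEG
  have hfin : En p F + ENNReal.ofReal C * Ms p F < ⊤ :=
    ENNReal.add_lt_top.2 ⟨hEn, ENNReal.mul_lt_top ENNReal.ofReal_lt_top hM⟩
  have hEGf : EG < ⊤ := by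
    by_contra h
    rw [not_lt, top_le_iff] at h
    rw [h, ENNReal.mul_top (by simpa using hδ1)] at hup
    exact absurd hfin (by rw [top_le_iff.1 hup]; simp)
  have m1 := fun i => pd_meas i hG.continuous
  have m2 := hG.continuous.measurable
  have m4 : ∀ i, Measurable (fun y : Fin n → ℝ => dV p (y i)) := fun i => (dV_cont hp).measurable.comp (measurable_pi_apply i)
  have hnn : ∀ y : Fin n → ℝ, ∀ i ∈ Finset.univ, 0 ≤ pd i (gg p F) y ^ 2 + dV p (y i) ^ 2 * gg p F y ^ 2 / 4 := fun y i _ => by positivity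
  have h2 : MemLp (gg p F) 2 := by
    refine memLp_of_lint m2 ?_
    simp_rw [gg_sq]; exact hM
  have h3 : ∀ i, MemLp (pd i (gg p F)) 2 := fun i => by
    refine memLp_of_lint (m1 i) (lt_of_le_of_lt (lintegral_mono fun y => ?_) hEGf)
    refine ENNReal.ofReal_le_ofReal (le_trans ?_ (Finset.single_le_sum (hnn y) (Finset.mem_univ i)))
    have : 0 ≤ dV p (y i) ^ 2 * gg p F y ^ 2 / 4 := by positivity
    linarith
  have h4 : ∀ i, MemLp (fun y => dV p (y i) * gg p F y / 2) 2 := fun i => by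
    refine memLp_of_lint (((m4 i).mul m2).div_const 2) (lt_of_le_of_lt (lintegral_mono fun y => ?_) hEGf)
    refine ENNReal.ofReal_le_ofReal (le_trans ?_ (Finset.single_le_sum (hnn y) (Finset.mem_univ i)))
    have : 0 ≤ pd i (gg p F) y ^ 2 := by positivity
    have e : (dV p (y i) * gg p F y / 2) ^ 2 = dV p (y i) ^ 2 * gg p F y ^ 2 / 4 := by ring
    linarith
  have core := upper_core hp hl hG h2 h3 h4 hL h0
  have e1 : EG = ENNReal.ofReal (∑ i, ((∫ y, pd i (gg p F) y ^ 2) + ∫ y, (dV p (y i) * gg p F y / 2) ^ 2)) := by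
    have hi : ∀ i, Integrable (fun y => pd i (gg p F) y ^ 2 + dV p (y i) ^ 2 * gg p F y ^ 2 / 4) := fun i => by
      refine ((h3 i).integrable_sq.add (h4 i).integrable_sq).congr (Eventually.of_forall fun y => ?_)
      simp only [Pi.add_apply]; ring
    rw [hEG, ← ofReal_integral_eq_lintegral_ofReal (integrable_finsetSum _ fun i _ => hi i)
      (Eventually.of_forall fun y => Finset.sum_nonneg (hnn y)), integral_finsetSum _ fun i _ => hi i]
    congr 1
    refine Finset.sum_congr rfl fun i _ => ?_
    rw [← integral_add (h3 i).integrable_sq (h4 i).integrable_sq]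
    congr 1; ext y; ring
  have e2 : ∫ y, gg p F y ^ 2 = (Ms p F).toReal := by
    rw [integral_eq_lintegral_of_nonneg_ae (Eventually.of_forall fun x => sq_nonneg _) (m2.pow_const 2).aestronglyMeasurable]
    simp_rw [gg_sq]; rfl
  have hup2 := ENNReal.toReal_mono hfin.ne hup
  rw [ENNReal.toReal_mul, ENNReal.toReal_add hEn.ne (ENNReal.mul_lt_top ENNReal.ofReal_lt_top hM).ne, ENNReal.toReal_mul,
    ENNReal.toReal_ofReal (by linarith), ENNReal.toReal_ofReal hC0] at hup2
  have h5 : L * (Ms p F).toReal ≤ EG.toReal := by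
    rw [e1, ENNReal.toReal_ofReal, ← e2]
    · exact core
    · exact Finset.sum_nonneg fun i _ => add_nonneg (integral_nonneg fun _ => sq_nonneg _) (integral_nonneg fun _ => sq_nonneg _)
  have h6 := mul_le_mul_of_nonneg_left h5 (show 0 ≤ 1 - δ by linarith)
  nlinarith

end Weyl

namespace Weyl

lemma gg_mem {n : ℕ} {p : ℝ} (hp : 1 < p) {F : (Fin n → ℝ) → ℝ} (hF : LocallyLipschitz F) (hM : Ms p F < ⊤) :
    MemLp (gg p F) 2 := by
  refine memLp_of_lint (gg_LL hp hF).continuous.measurable ?_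
  simp_rw [gg_sq]; exact hM

lemma gg_int {n : ℕ} {p : ℝ} (hp : 1 < p) {F : (Fin n → ℝ) → ℝ} (hF : LocallyLipschitz F) :
    ∫ y, gg p F y ^ 2 = (Ms p F).toReal := by
  rw [integral_eq_lintegral_of_nonneg_ae (Eventually.of_forall fun x => sq_nonneg _)
    ((gg_LL hp hF).continuous.measurable.pow_const 2).aestronglyMeasurable]
  simp_rw [gg_sq]; rfl

lemma Ms_zero {n : ℕ} {p : ℝ} (hp : 1 < p) {f : EuclideanSpace ℝ (Fin n) → ℝ} (hf : LocallyLipschitz f)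
    (h : Ms p (co f) = 0) : f = 0 := by
  have hc := (co_LL hf).continuous
  rw [Ms, lintegral_eq_zero_iff (by have := (rho_cont (n := n) hp).measurable; have := hc.measurable; fun_prop)] at h
  have h2 : co f =ᵐ[volume] fun _ => 0 := by
    filter_upwards [h] with y hy
    have := rho_pos p y
    simp only [Pi.zero_apply, ofReal_eq_zero] at hy
    have h3 : co f y ^ 2 * rho p y = 0 := le_antisymm hy (by positivity)
    rcases mul_eq_zero.1 h3 with h4 | h4
    · exact pow_eq_zero_iff (two_ne_zero) |>.1 h4
    · exact absurd h4 this.ne'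
  have h3 := Continuous.ae_eq_iff_eq volume hc continuous_const |>.1 h2
  ext x
  have := congrFun h3 (WithLp.ofLp x)
  simpa [co] using this

lemma pd_add_ae {n : ℕ} {f g : EuclideanSpace ℝ (Fin n) → ℝ} (hf : LocallyLipschitz f) (hg : LocallyLipschitz g) (i : Fin n) :
    ∀ᵐ y, pd i (co (f + g)) y = pd i (co f) y + pd i (co g) y := by
  have h := (PiLp.volume_preserving_toLp (Fin n)).quasiMeasurePreserving.ae (LL_aeE hf)
  have h' := (PiLp.volume_preserving_toLp (Fin n)).quasiMeasurePreserving.ae (LL_aeE hg)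
  filter_upwards [h, h'] with y h1 h2
  have a := pd_fderiv h1 i
  have b := pd_fderiv h2 i
  have c := pd_fderiv (h1.add h2) i
  have e : (fun y => (f + g) (WithLp.toLp 2 y)) = co (f + g) := rfl
  rw [e] at c
  have e : (fun y => f (WithLp.toLp 2 y)) = co f := rfl
  rw [e] at a
  have e : (fun y => g (WithLp.toLp 2 y)) = co g := rfl
  rw [e] at b
  rw [a, b, c, fderiv_add h1 h2]; rfl

lemma pd_smul {n : ℕ} (c : ℝ) (f : EuclideanSpace ℝ (Fin n) → ℝ) (i : Fin n) (y) :
    pd i (co (c • f)) y = c * pd i (co f) y := by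
  unfold pd co
  simp only [Pi.smul_apply, smul_eq_mul]
  exact deriv_const_mul_field c

noncomputable def dd {n : ℕ} (p : ℝ) (i : Fin n) (F : (Fin n → ℝ) → ℝ) (y : Fin n → ℝ) : ℝ := pd i F y * √(rho p y)

lemma dd_sq {n : ℕ} (p : ℝ) (i : Fin n) (F : (Fin n → ℝ) → ℝ) (y : Fin n → ℝ) : dd p i F y ^ 2 = pd i F y ^ 2 * rho p y := by
  rw [dd, mul_pow, Real.sq_sqrt (rho_pos p y).le]

lemma dd_meas {n : ℕ} {p : ℝ} (hp : 1 < p) (i : Fin n) {F : (Fin n → ℝ) → ℝ} (hF : Continuous F) : Measurable (dd p i F) :=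
  (pd_meas i hF).mul (rho_cont hp).measurable.sqrt

lemma dd_mem {n : ℕ} {p : ℝ} (hp : 1 < p) (i : Fin n) {F : (Fin n → ℝ) → ℝ} (hF : Continuous F) (hE : En p F < ⊤) :
    MemLp (dd p i F) 2 := by
  refine memLp_of_lint (dd_meas hp i hF) ?_
  simp_rw [dd_sq]
  exact (ENNReal.sum_lt_top.1 hE) i (Finset.mem_univ i)

lemma toLp_norm_sq {X : Type*} [MeasurableSpace X] {μ : Measure X} {f : X → ℝ} (hf : MemLp f 2 μ) :
    ‖hf.toLp f‖ ^ 2 = ∫ x, f x ^ 2 ∂μ := by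
  rw [← real_inner_self_eq_norm_sq, L2.inner_def]
  apply integral_congr_ae
  filter_upwards [hf.coeFn_toLp] with x hx
  rw [hx]; simp [sq]

lemma dd_int {n : ℕ} {p : ℝ} (hp : 1 < p) {F : (Fin n → ℝ) → ℝ} (hF : Continuous F) (hE : En p F < ⊤) :
    ∑ i, ∫ y, dd p i F y ^ 2 = (En p F).toReal := by
  rw [En, ENNReal.toReal_sum (fun i hi => ((ENNReal.sum_lt_top.1 hE) i hi).ne)]
  refine Finset.sum_congr rfl fun i _ => ?_
  rw [integral_eq_lintegral_of_nonneg_ae (Eventually.of_forall fun x => sq_nonneg _)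
    ((dd_meas hp i hF).pow_const 2).aestronglyMeasurable]
  simp_rw [dd_sq]

section
variable {n : ℕ} {p : ℝ} (hp : 1 < p) (W : Submodule ℝ (EuclideanSpace ℝ (Fin n) → ℝ))
  (hW : ∀ f ∈ W, LocallyLipschitz f ∧ Ms p (co f) < ⊤ ∧ En p (co f) < ⊤)

lemma gg_lin_add (f g : EuclideanSpace ℝ (Fin n) → ℝ) (y) : gg p (co (f + g)) y = gg p (co f) y + gg p (co g) y := by
  simp [gg, co, add_mul]
lemma gg_lin_smul (c : ℝ) (f : EuclideanSpace ℝ (Fin n) → ℝ) (y) : gg p (co (c • f)) y = c * gg p (co f) y := by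
  simp [gg, co, mul_assoc]

noncomputable def PhiL : W →ₗ[ℝ] Lp ℝ 2 (volume : Measure (Fin n → ℝ)) where
  toFun f := (gg_mem hp (co_LL (hW f.1 f.2).1) (hW f.1 f.2).2.1).toLp _
  map_add' f g := by
    rw [← MemLp.toLp_add]
    apply MemLp.toLp_congr
    exact Eventually.of_forall fun y => gg_lin_add f.1 g.1 y
  map_smul' c f := by
    rw [RingHom.id_apply, ← MemLp.toLp_const_smul]
    apply MemLp.toLp_congr
    exact Eventually.of_forall fun y => gg_lin_smul c f.1 y

noncomputable def PsiL (i : Fin n) : W →ₗ[ℝ] Lp ℝ 2 (volume : Measure (Fin n → ℝ)) where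
  toFun f := (dd_mem hp i (co_LL (hW f.1 f.2).1).continuous (hW f.1 f.2).2.2).toLp _
  map_add' f g := by
    rw [← MemLp.toLp_add]
    apply MemLp.toLp_congr
    filter_upwards [pd_add_ae (hW f.1 f.2).1 (hW g.1 g.2).1 i] with y hy
    have : pd i (co (f + g : W).1) y = _ := hy
    simp only [dd, Pi.add_apply]
    rw [this, add_mul]
  map_smul' c f := by
    rw [RingHom.id_apply, ← MemLp.toLp_const_smul]
    apply MemLp.toLp_congr
    refine Eventually.of_forall fun y => ?_
    have : pd i (co (c • f : W).1) y = _ := pd_smul c f.1 i y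
    simp only [dd, Pi.smul_apply, smul_eq_mul]
    rw [this, mul_assoc]

include hp hW in
lemma ray_bdd [FiniteDimensional ℝ W] : ∃ K : ℝ, 0 ≤ K ∧ ∀ f ∈ W, (En p (co f)).toReal ≤ K * (Ms p (co f)).toReal := by
  have hinj : Function.Injective (PhiL hp W hW) := by
    rw [injective_iff_map_eq_zero]
    intro f hf
    have h1 := toLp_norm_sq (gg_mem hp (co_LL (hW f.1 f.2).1) (hW f.1 f.2).2.1)
    have h2 : (gg_mem hp (co_LL (hW f.1 f.2).1) (hW f.1 f.2).2.1).toLp _ = (0 : Lp ℝ 2 (volume : Measure (Fin n → ℝ))) := hf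
    rw [h2, norm_zero, gg_int hp (co_LL (hW f.1 f.2).1)] at h1
    have h3 : (Ms p (co f.1)).toReal = 0 := by rw [← h1]; norm_num
    rcases (ENNReal.toReal_eq_zero_iff _).1 h3 with h4 | h4
    · exact Subtype.ext (Ms_zero hp (hW f.1 f.2).1 h4)
    · exact absurd h4 (hW f.1 f.2).2.1.ne
  let e := LinearEquiv.ofInjective _ hinj
  have hfd : FiniteDimensional ℝ (LinearMap.range (PhiL hp W hW)) := inferInstance
  let A : Fin n → (LinearMap.range (PhiL hp W hW) →L[ℝ] Lp ℝ 2 (volume : Measure (Fin n → ℝ))) :=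
    fun i => LinearMap.toContinuousLinearMap ((PsiL hp W hW i).comp e.symm.toLinearMap)
  refine ⟨∑ i, ‖A i‖ ^ 2, Finset.sum_nonneg fun i _ => sq_nonneg _, fun f hf => ?_⟩
  rw [← dd_int hp (co_LL (hW f hf).1).continuous (hW f hf).2.2, Finset.sum_mul]
  refine Finset.sum_le_sum fun i _ => ?_
  rw [← gg_int hp (co_LL (hW f hf).1), ← toLp_norm_sq (gg_mem hp (co_LL (hW f hf).1) (hW f hf).2.1),
    ← toLp_norm_sq (dd_mem hp i (co_LL (hW f hf).1).continuous (hW f hf).2.2), ← mul_pow]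
  have h := (A i).le_opNorm (e ⟨f, hf⟩)
  have h1 : A i (e ⟨f, hf⟩) = PsiL hp W hW i ⟨f, hf⟩ := by simp [A]
  rw [h1] at h
  exact pow_le_pow_left₀ (norm_nonneg _) h 2

include hp hW in
lemma upper_count {l : ℝ} (hl : 0 < l) {δ : ℝ} (hδ : 0 < δ) (hδ1 : δ < 1) {L κ : ℝ} (hL : 0 ≤ L)
    (hfin : {α : Fin n → ℤ × ℕ | lev p l α ≤ L}.Finite)
    (hκ : ∀ f ∈ W, (En p (co f)).toReal ≤ κ * (Ms p (co f)).toReal)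
    (hlt : κ < (1 - δ) * L - n * ((1 + (p - 1) ^ 2) / (4 * δ))) :
    Module.finrank ℝ W ≤ {α : Fin n → ℤ × ℕ | lev p l α ≤ L}.ncard := by
  set I := {α : Fin n → ℤ × ℕ | lev p l α ≤ L} with hI
  have := hfin.fintype
  let T : W →ₗ[ℝ] (I → ℝ) :=
    { toFun := fun f α => ∫ y, gg p (co f.1) y * CE l α.1 y
      map_add' := fun f g => by
        ext α
        have h1 : Integrable (fun y => gg p (co f.1) y * CE l α.1 y) := (gg_mem hp (co_LL (hW f.1 f.2).1) (hW f.1 f.2).2.1).integrable_mul (CE_mem l α.1)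
        have h2 : Integrable (fun y => gg p (co g.1) y * CE l α.1 y) := (gg_mem hp (co_LL (hW g.1 g.2).1) (hW g.1 g.2).2.1).integrable_mul (CE_mem l α.1)
        rw [Pi.add_apply, ← integral_add h1 h2]
        congr 1; ext y
        have := gg_lin_add (p := p) f.1 g.1 y
        rw [Submodule.coe_add, this]; simp [add_mul]
      map_smul' := fun c f => by
        ext α
        rw [RingHom.id_apply, Pi.smul_apply, smul_eq_mul, ← integral_const_mul]
        congr 1; ext y
        have := gg_lin_smul (p := p) c f.1 y
        rw [Submodule.coe_smul, this, mul_assoc] }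
  have hinj : Function.Injective T := by
    rw [injective_iff_map_eq_zero]
    intro f hf
    obtain ⟨w1, w2, w3⟩ := hW f.1 f.2
    have h := upper_final hp hl hδ hδ1 (co_LL w1) w2 w3 hL (fun α hα => congrFun hf ⟨α, hα⟩)
    have h1 := hκ f.1 f.2
    have h0 : (0:ℝ) ≤ (Ms p (co f.1)).toReal := ENNReal.toReal_nonneg
    have h3 : (Ms p (co f.1)).toReal = 0 := by
      by_contra h3
      have : 0 < (Ms p (co f.1)).toReal := lt_of_le_of_ne h0 (Ne.symm h3)
      nlinarith
    rcases (ENNReal.toReal_eq_zero_iff _).1 h3 with h4 | h4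
    · exact Subtype.ext (Ms_zero hp w1 h4)
    · exact absurd h4 w2.ne
  have := LinearMap.finrank_le_finrank_of_injective hinj
  rwa [Module.finrank_fintype_fun_eq_card, ← Nat.card_eq_fintype_card, Nat.card_coe_set_eq] at this
end

end Weyl

namespace Weyl

lemma se_clamp {l : ℝ} (hl : 0 < l) (q : ℤ × ℕ) (s : ℝ) :
    se l q s = se0 l q (max (q.1 * l) (min s (q.1 * l + l))) := by
  by_cases h : s ∈ cell l q.1
  · rw [se, Set.indicator_of_mem h]
    rw [min_eq_left h.2.le, max_eq_right h.1]
  · rw [se, Set.indicator_of_notMem h]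
    by_cases h1 : s < q.1 * l
    · rw [min_eq_left (by linarith), max_eq_left h1.le, se0_left]
    · have h2 : q.1 * l + l ≤ s := by
        by_contra h3
        exact h ⟨not_lt.1 h1, not_le.1 h3⟩
      rw [min_eq_right h2, max_eq_right (by linarith), se0_right hl]

lemma se_LL {l : ℝ} (hl : 0 < l) (q : ℤ × ℕ) : LocallyLipschitz (se l q) := by
  have e : se l q = fun s => se0 l q (max (q.1 * l) (min s (q.1 * l + l))) := funext (se_clamp hl q)
  rw [e]
  have h1 : LipschitzWith 1 (fun s : ℝ => max (q.1 * l) (min s (q.1 * l + l))) :=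
    (LipschitzWith.id.min_const _).const_max _
  exact (se0_LL l q).comp h1.locallyLipschitz

lemma se_deriv {l : ℝ} (q : ℤ × ℕ) (s : ℝ) (h1 : s ≠ q.1 * l) (h2 : s ≠ q.1 * l + l) :
    HasDerivAt (se l q) (q.2 * Real.pi / l * ce l q s) s := by
  by_cases h : s ∈ cell l q.1
  · have hn : Set.Ioo (q.1 * l : ℝ) (q.1 * l + l) ∈ 𝓝 s :=
      Ioo_mem_nhds (lt_of_le_of_ne h.1 h1.symm) h.2
    rw [ce, Set.indicator_of_mem h]
    refine (se0_deriv l q s).congr_of_eventuallyEq ?_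
    filter_upwards [hn] with t ht
    rw [se, Set.indicator_of_mem (show t ∈ cell l q.1 from ⟨ht.1.le, ht.2⟩)]
  · rw [ce, Set.indicator_of_notMem h, mul_zero]
    have hn : (Set.Icc (q.1 * l : ℝ) (q.1 * l + l))ᶜ ∈ 𝓝 s := by
      refine isClosed_Icc.isOpen_compl.mem_nhds fun h3 => h ⟨h3.1, lt_of_le_of_ne h3.2 h2⟩
    refine (hasDerivAt_const s (0:ℝ)).congr_of_eventuallyEq ?_
    filter_upwards [hn] with t ht
    rw [se, Set.indicator_of_notMem]
    exact fun h3 => ht ⟨h3.1, h3.2.le⟩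

lemma cell_far {l : ℝ} (hl : 0 < l) (j : ℤ) (s : ℝ) (h : |j * l| + l ≤ |s|) : s ∉ cell l j := by
  intro hs
  have h1 := hs.1; have h2 := hs.2
  have h3 := neg_abs_le (j * l : ℝ)
  have h4 := le_abs_self (j * l : ℝ)
  rcases abs_cases s with h5 | h5 <;> linarith

lemma ce_bdd (l : ℝ) (q : ℤ × ℕ) (s : ℝ) : |ce l q s| ≤ NN l q.2 := by
  have h0 : 0 ≤ NN l q.2 := Real.sqrt_nonneg _
  by_cases h : s ∈ cell l q.1
  · rw [ce, Set.indicator_of_mem h, ce0, abs_mul, abs_of_nonneg h0]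
    exact mul_le_of_le_one_right h0 (Real.abs_cos_le_one _)
  · rw [ce, Set.indicator_of_notMem h, abs_zero]; exact h0

section
variable {n : ℕ}

noncomputable def S0 (l : ℝ) : (Fin n → ℤ × ℕ) → (Fin n → ℝ) → ℝ := PP (fun _ => se l)
noncomputable def S1 (l : ℝ) (i : Fin n) : (Fin n → ℤ × ℕ) → (Fin n → ℝ) → ℝ :=
  PP (Function.update (fun _ => se l) i (ce l))
noncomputable def GS (l : ℝ) (M : Finset (Fin n → ℤ × ℕ)) (a : (Fin n → ℤ × ℕ) → ℝ) (y : Fin n → ℝ) : ℝ :=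
  ∑ α ∈ M, a α * S0 l α y
noncomputable def FS (p l : ℝ) (M : Finset (Fin n → ℤ × ℕ)) (a : (Fin n → ℤ × ℕ) → ℝ) (y : Fin n → ℝ) : ℝ :=
  GS l M a y * ∏ i, Real.exp ((1 / 2) * (|y i| ^ p / p))

lemma S0_LL {l : ℝ} (hl : 0 < l) (α : Fin n → ℤ × ℕ) : LocallyLipschitz (S0 l α) := by
  unfold S0 PP
  refine LL_prod Finset.univ fun i _ => ?_
  have h1 : LipschitzWith 1 (fun y : Fin n → ℝ => y i) := LipschitzWith.eval (α := fun _ : Fin n => ℝ) i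
  exact (se_LL hl _).comp h1.locallyLipschitz

lemma GS_LL {l : ℝ} (hl : 0 < l) (M) (a : (Fin n → ℤ × ℕ) → ℝ) : LocallyLipschitz (GS l M a) := by
  unfold GS
  exact LL_sum M fun α _ => LL_mul (LocallyLipschitz.const (a α)) (S0_LL hl α)

lemma FS_LL {p l : ℝ} (hp : 1 < p) (hl : 0 < l) (M) (a : (Fin n → ℤ × ℕ) → ℝ) : LocallyLipschitz (FS p l M a) := by
  unfold FS
  refine LL_mul (GS_LL hl M a) (LL_prod Finset.univ fun i _ => ?_)
  have h1 : LipschitzWith 1 (fun y : Fin n → ℝ => y i) := LipschitzWith.eval (α := fun _ : Fin n => ℝ) i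
  exact (expV_LL hp (1 / 2)).comp h1.locallyLipschitz

lemma S1_aux (l : ℝ) (i : Fin n) (P : (ℤ × ℕ → ℝ → ℝ) → Prop) (h1 : P (ce l)) (h2 : P (se l)) (k : Fin n) :
    P (Function.update (fun _ => se l) i (ce l) k) := by
  by_cases h : k = i
  · subst h; simpa
  · simpa [Function.update_of_ne h]

lemma S1_meas (l : ℝ) (i : Fin n) (α : Fin n → ℤ × ℕ) : Measurable (S1 l i α) :=
  PP_meas (fun k => S1_aux l i (fun φ => ∀ q, Measurable (φ q)) (ce_meas l) (se_meas l) k) α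

lemma S1_mem (l : ℝ) (i : Fin n) (α : Fin n → ℤ × ℕ) : MemLp (S1 l i α) 2 :=
  PP_mem (fun k => S1_aux l i (fun φ => ∀ q, Measurable (φ q)) (ce_meas l) (se_meas l) k)
    (fun k => S1_aux l i (fun φ => ∀ q, Integrable (fun s => φ q s ^ 2)) (ce_sq_int l) (se_sq_int l) k) α

lemma S0_mem (l : ℝ) (α : Fin n → ℤ × ℕ) : MemLp (S0 l α) 2 :=
  PP_mem (fun _ => se_meas l) (fun _ => se_sq_int l) α

lemma S0_orth {l : ℝ} (hl : 0 < l) (α β : Fin n → ℤ × ℕ) (hα : ∀ i, (α i).2 ≠ 0) :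
    ∫ y, S0 l α y * S0 l β y = if α = β then 1 else 0 := by
  have := PP_orth (φ := fun _ : Fin n => se l) (D := fun _ q => if q.2 = 0 then 0 else 1) (fun k => se_orth hl) α β
  simpa [S0, hα] using this

lemma S1_orth {l : ℝ} (hl : 0 < l) (i : Fin n) (α β : Fin n → ℤ × ℕ) (hα : ∀ i, (α i).2 ≠ 0) :
    ∫ y, S1 l i α y * S1 l i β y = if α = β then 1 else 0 := by
  have := PP_orth (φ := Function.update (fun _ : Fin n => se l) i (ce l))
    (D := Function.update (fun _ q => if q.2 = 0 then (0:ℝ) else 1) i (fun q => 1)) (by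
      intro k
      by_cases h : k = i
      · subst h; simpa using ce_orth hl
      · simpa [Function.update_of_ne h] using se_orth hl) α β
  rw [S1, this]
  congr 1
  refine Finset.prod_eq_one fun k _ => ?_
  by_cases h : k = i
  · subst h; simp
  · simp [Function.update_of_ne h, hα]

lemma sumsq {X ι : Type*} [MeasurableSpace X] {μ : Measure X} [DecidableEq ι] (M : Finset ι) {E : ι → X → ℝ}
    (hE : ∀ α ∈ M, MemLp (E α) 2 μ)
    (ho : ∀ α ∈ M, ∀ β ∈ M, ∫ x, E α x * E β x ∂μ = if α = β then 1 else 0) (a : ι → ℝ) :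
    ∫⁻ x, ENNReal.ofReal ((∑ α ∈ M, a α * E α x) ^ 2) ∂μ = ENNReal.ofReal (∑ α ∈ M, a α ^ 2) := by
  have h := expand M (F := fun _ => 0) (D := fun _ => 1) (memLp_const_iff (by norm_num) (by norm_num) |>.2 (Or.inl rfl)) hE ho a
  have h1 : MemLp (fun x => ∑ α ∈ M, a α * E α x) 2 μ := memLp_finsetSum M fun α hα => (hE α hα).const_mul (a α)
  rw [← ofReal_integral_eq_lintegral_ofReal h1.integrable_sq (Eventually.of_forall fun x => sq_nonneg _)]
  congr 1
  simpa using h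

lemma lowerI {p l : ℝ} (hp : 1 < p) (hl : 0 < l) (M) (a : (Fin n → ℤ × ℕ) → ℝ) (i : Fin n) :
    ∫⁻ y, ENNReal.ofReal (pd i (FS p l M a) y ^ 2 * rho p y) ≤
    ∫⁻ y, ENNReal.ofReal ((∑ α ∈ M, (a α * ((α i).2 * Real.pi / l)) * S1 l i α y) ^ 2
      + dV p (y i) ^ 2 * GS l M a y ^ 2 / 4) := by
  have m1 := pd_meas i (FS_LL hp hl M a).continuous
  have m2 := (GS_LL hl M a).continuous.measurable
  have m3 : Measurable (fun y => ∑ α ∈ M, (a α * ((α i).2 * Real.pi / l)) * S1 l i α y) :=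
    Finset.measurable_sum _ fun α _ => (S1_meas l i α).const_mul _
  have m4 : Measurable (fun y : Fin n → ℝ => dV p (y i)) := (dV_cont hp).measurable.comp (measurable_pi_apply i)
  have m5 := (rho_cont (n := n) hp).measurable
  refine slice_le i (by fun_prop) (by fun_prop) fun x => ?_
  set c : ℝ := ∏ k ∈ Finset.univ.erase i, Real.exp ((1 / 2) * (|x k| ^ p / p)) with hc
  set b : (Fin n → ℤ × ℕ) → ℝ := fun α => a α * ∏ k ∈ Finset.univ.erase i, se l (α k) (x k) with hb
  have e0 : ∀ s, GS l M a (Function.update x i s) = ∑ α ∈ M, b α * se l (α i) s := by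
    intro s
    refine Finset.sum_congr rfl fun α _ => ?_
    have := PP_slice (fun _ => se l) i (se l) α x s
    rw [Function.update_eq_self i (fun _ : Fin n => se l)] at this
    rw [S0, this, hb]; ring
  have e1 : ∀ s, ∑ α ∈ M, (a α * ((α i).2 * Real.pi / l)) * S1 l i α (Function.update x i s)
      = ∑ α ∈ M, b α * ((α i).2 * Real.pi / l * ce l (α i) s) := by
    intro s
    refine Finset.sum_congr rfl fun α _ => ?_
    rw [S1, PP_slice, hb]; ring
  set R : ℝ := 1 + ∑ α ∈ M, (|(α i).1 * l| + l) with hR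
  have hR0 : ∀ α ∈ M, |(α i).1 * l| + l ≤ R := fun α hα => by
    have := Finset.single_le_sum (f := fun α : Fin n → ℤ × ℕ => |((α i).1:ℝ) * l| + l) (fun β _ => by positivity) hα
    linarith
  have key := lower1D hp (H := fun s => ∑ α ∈ M, b α * se l (α i) s)
    (H1 := fun s => ∑ α ∈ M, b α * ((α i).2 * Real.pi / l * ce l (α i) s))
    (continuous_finsetSum _ fun α _ => continuous_const.mul (se_LL hl _).continuous)
    (S := ⋃ α ∈ M, {((α i).1 * l : ℝ), (α i).1 * l + l})
    (Finset.countable_toSet M |>.biUnion fun α _ => (Set.toFinite _).countable)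
    (fun s hs => by
      refine HasDerivAt.fun_sum fun α hα => HasDerivAt.const_mul _ (se_deriv _ _ ?_ ?_)
      · intro h; apply hs; simp only [Set.mem_iUnion]; exact ⟨α, hα, by simp [h]⟩
      · intro h; apply hs; simp only [Set.mem_iUnion]; exact ⟨α, hα, by simp [h]⟩)
    (Finset.measurable_sum _ fun α _ => ((ce_meas l _).const_mul _).const_mul _)
    (K := ∑ α ∈ M, |b α| * (|(α i).2 * Real.pi / l| * NN l (α i).2))
    (fun s => by
      refine (Finset.abs_sum_le_sum_abs _ _).trans (Finset.sum_le_sum fun α _ => ?_)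
      rw [abs_mul, abs_mul (((α i).2:ℝ) * Real.pi / l)]
      have := ce_bdd l (α i) s
      gcongr)
    (R := R) (by positivity)
    (fun s hs => Finset.sum_eq_zero fun α hα => by
      rw [se, Set.indicator_of_notMem (cell_far hl _ _ ((hR0 α hα).trans hs)), mul_zero])
    (fun s hs => Finset.sum_eq_zero fun α hα => by
      rw [ce, Set.indicator_of_notMem (cell_far hl _ _ ((hR0 α hα).trans hs)), mul_zero, mul_zero])
    (fun s => (∑ α ∈ M, b α * se l (α i) s) * Real.exp ((1/2) * (|s| ^ p / p))) (fun s => rfl)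
  simp only [pd_update, Function.update_self, e0, e1]
  refine le_trans (le_of_eq ?_) key
  refine lintegral_congr fun s => ?_
  congr 1
  have e2 : (fun s => FS p l M a (Function.update x i s)) =
      fun s => ((∑ α ∈ M, b α * se l (α i) s) * Real.exp ((1/2) * (|s| ^ p / p))) * c := by
    ext s
    rw [FS, e0, prod_update i (fun t => Real.exp ((1 / 2) * (|t| ^ p / p)))]; ring
  rw [e2, deriv_mul_const_field, rho_prod, prod_update i (fun t => Real.exp (-(|t| ^ p / p)))]
  have : c ^ 2 * ∏ k ∈ Finset.univ.erase i, Real.exp (-(|x k| ^ p / p)) = 1 := by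
    rw [hc, ← Finset.prod_pow, ← Finset.prod_mul_distrib]
    refine Finset.prod_eq_one fun k _ => ?_
    rw [← Real.exp_nat_mul, ← Real.exp_add, Real.exp_eq_one_iff]; push_cast; ring
  linear_combination (deriv (fun s => (∑ α ∈ M, b α * se l (α i) s) * Real.exp ((1/2) * (|s| ^ p / p))) s) ^ 2
    * Real.exp (-(|s| ^ p / p)) * this

lemma pot_le {p l : ℝ} (hp : 1 < p) (hl : 0 < l) (M) (a : (Fin n → ℤ × ℕ) → ℝ) (i : Fin n) (y : Fin n → ℝ) :
    dV p (y i) ^ 2 * GS l M a y ^ 2 / 4 ≤ (∑ α ∈ M, (a α * √(wp p l (α i).1)) * S0 l α y) ^ 2 := by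
  have hc := cell_ex hl (y i)
  set j := ⌊y i / l⌋
  have : ∑ α ∈ M, (a α * √(wp p l (α i).1)) * S0 l α y = √(wp p l j) * GS l M a y := by
    rw [GS, Finset.mul_sum]
    refine Finset.sum_congr rfl fun α _ => ?_
    by_cases h : y i ∈ cell l (α i).1
    · rw [cell_disj hl h hc]; ring
    · have : S0 l α y = 0 := by
        rw [S0, PP]
        exact Finset.prod_eq_zero (Finset.mem_univ i) (by rw [se, Set.indicator_of_notMem h])
      rw [this]; ring
  rw [this, mul_pow, Real.sq_sqrt (wp_nonneg hl j)]
  have := wp_ge hp hl hc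
  have := mul_le_mul_of_nonneg_right this (sq_nonneg (GS l M a y))
  linarith

noncomputable def levp (p l : ℝ) (α : Fin n → ℤ × ℕ) : ℝ := ∑ i, (wp p l (α i).1 + ((α i).2 * Real.pi / l) ^ 2)

lemma FS_En {p l : ℝ} (hp : 1 < p) (hl : 0 < l) (M) (hM : ∀ α ∈ M, ∀ i, (α i).2 ≠ 0) (a : (Fin n → ℤ × ℕ) → ℝ) :
    En p (FS p l M a) ≤ ENNReal.ofReal (∑ α ∈ M, levp p l α * a α ^ 2) := by
  have h : ∀ i, ∫⁻ y, ENNReal.ofReal (pd i (FS p l M a) y ^ 2 * rho p y) ≤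
      ENNReal.ofReal (∑ α ∈ M, (wp p l (α i).1 + ((α i).2 * Real.pi / l) ^ 2) * a α ^ 2) := by
    intro i
    refine (lowerI hp hl M a i).trans ?_
    have h1 := sumsq M (fun α _ => S1_mem l i α) (fun α hα β _ => S1_orth hl i α β (hM α hα)) (fun α => a α * ((α i).2 * Real.pi / l))
    have h2 := sumsq M (fun α _ => S0_mem l α) (fun α hα β _ => S0_orth hl α β (hM α hα)) (fun α => a α * √(wp p l (α i).1))
    calc _ ≤ ∫⁻ y, (ENNReal.ofReal ((∑ α ∈ M, (a α * ((α i).2 * Real.pi / l)) * S1 l i α y) ^ 2)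
          + ENNReal.ofReal ((∑ α ∈ M, (a α * √(wp p l (α i).1)) * S0 l α y) ^ 2)) := by
          refine lintegral_mono fun y => ?_
          rw [← ENNReal.ofReal_add (sq_nonneg _) (sq_nonneg _)]
          exact ENNReal.ofReal_le_ofReal (by have := pot_le hp hl M a i y; linarith)
      _ = _ := by
          rw [lintegral_add_left, h1, h2, ← ENNReal.ofReal_add (Finset.sum_nonneg fun _ _ => sq_nonneg _) (Finset.sum_nonneg fun _ _ => sq_nonneg _), ← Finset.sum_add_distrib]
          · congr 1
            refine Finset.sum_congr rfl fun α _ => ?_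
            rw [mul_pow, mul_pow, Real.sq_sqrt (wp_nonneg hl _)]; ring
          · have m3 : Measurable (fun y => ∑ α ∈ M, (a α * ((α i).2 * Real.pi / l)) * S1 l i α y) :=
              Finset.measurable_sum _ fun α _ => (S1_meas l i α).const_mul _
            fun_prop
  unfold En
  refine (Finset.sum_le_sum fun i _ => h i).trans (le_of_eq ?_)
  rw [← ENNReal.ofReal_sum_of_nonneg, Finset.sum_comm]
  · congr 1
    refine Finset.sum_congr rfl fun α _ => ?_
    rw [levp, Finset.sum_mul]
  · intro i _
    exact Finset.sum_nonneg fun α _ => mul_nonneg (add_nonneg (wp_nonneg hl _) (sq_nonneg _)) (sq_nonneg _)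

lemma FS_Ms {p l : ℝ} (hl : 0 < l) (M) (hM : ∀ α ∈ M, ∀ i, (α i).2 ≠ 0) (a : (Fin n → ℤ × ℕ) → ℝ) :
    Ms p (FS p l M a) = ENNReal.ofReal (∑ α ∈ M, a α ^ 2) := by
  rw [← sumsq M (fun α _ => S0_mem l α) (fun α hα β _ => S0_orth hl α β (hM α hα)) a, Ms]
  refine lintegral_congr fun y => ?_
  congr 1
  rw [FS, rho_prod, mul_pow, mul_assoc, ← Finset.prod_pow, ← Finset.prod_mul_distrib]
  rw [Finset.prod_eq_one, mul_one]; · rfl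
  intro k _
  rw [← Real.exp_nat_mul, ← Real.exp_add, Real.exp_eq_one_iff]; push_cast; ring

/-- a `k`-dimensional space of test functions -/
lemma lower_space {p l : ℝ} (hn : 1 ≤ n) (hp : 1 < p) (hl : 0 < l) (M : Finset (Fin n → ℤ × ℕ)) (hM : ∀ α ∈ M, ∀ i, (α i).2 ≠ 0) {lam : ℝ}
    (hlev : ∀ α ∈ M, levp p l α ≤ lam) :
    ∃ W : Submodule ℝ (EuclideanSpace ℝ (Fin n) → ℝ), Module.finrank ℝ W = M.card ∧
      (∀ f ∈ W, memW12Lip (nuP n p) f ∧ (En p (co f)).toReal ≤ lam * (Ms p (co f)).toReal) := by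
  let T : (M → ℝ) →ₗ[ℝ] (EuclideanSpace ℝ (Fin n) → ℝ) :=
    { toFun := fun a x => (∑ α : M, a α * S0 l α.1 (WithLp.ofLp x)) * ∏ i, Real.exp ((1 / 2) * (|x i| ^ p / p))
      map_add' := fun a b => by ext x; simp [add_mul, Finset.sum_add_distrib]
      map_smul' := fun c a => by ext x; simp [Finset.mul_sum, mul_assoc, Finset.sum_mul] }
  have hT : ∀ a, ∃ b : (Fin n → ℤ × ℕ) → ℝ, (∀ α : M, b α.1 = a α) ∧ co (T a) = FS p l M b := by
    intro a
    refine ⟨fun α => if h : α ∈ M then a ⟨α, h⟩ else 0, fun α => by simp, ?_⟩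
    ext y
    simp only [co, T, FS, GS, LinearMap.coe_mk, AddHom.coe_mk]
    congr 1
    rw [← Finset.sum_coe_sort M]
    refine Finset.sum_congr rfl fun α _ => ?_
    simp
  have hLL : ∀ a, LocallyLipschitz (T a) := by
    intro a
    obtain ⟨b, -, hb⟩ := hT a
    have : T a = (co (T a)) ∘ (WithLp.ofLp) := by ext x; simp [co]
    rw [this, hb]
    exact (FS_LL hp hl M b).comp (PiLp.lipschitzWith_ofLp 2 (fun _ : Fin n => ℝ)).locallyLipschitz
  have hinj : Function.Injective T := by
    rw [injective_iff_map_eq_zero]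
    intro a ha
    obtain ⟨b, h1, hb⟩ := hT a
    have h2 := FS_Ms (p := p) hl M hM b
    rw [← hb, ha] at h2
    have h3 : Ms p (co (0 : EuclideanSpace ℝ (Fin n) → ℝ)) = 0 := by simp [Ms, co]
    rw [h3] at h2
    have h4 := ENNReal.ofReal_eq_zero.1 h2.symm
    have h5 := (Finset.sum_eq_zero_iff_of_nonneg (fun α _ => sq_nonneg (b α))).1 (le_antisymm h4 (Finset.sum_nonneg fun _ _ => sq_nonneg _))
    ext α
    rw [← h1 α]; simpa using h5 α.1 α.2
  refine ⟨LinearMap.range T, ?_, ?_⟩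
  · rw [LinearMap.finrank_range_of_inj hinj, Module.finrank_fintype_fun_eq_card, Fintype.card_coe]
  · rintro f ⟨a, rfl⟩
    obtain ⟨b, h1, hb⟩ := hT a
    have h2 := FS_Ms (p := p) hl M hM b
    have h3 := FS_En hp hl M hM b
    refine ⟨(mem_iff hn hp).2 ⟨hLL a, ?_, ?_⟩, ?_⟩
    · rw [hb, h2]; exact ENNReal.ofReal_lt_top
    · rw [hb]; exact h3.trans_lt ENNReal.ofReal_lt_top
    · rw [hb, h2, ENNReal.toReal_ofReal (Finset.sum_nonneg fun _ _ => sq_nonneg _)]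
      refine (ENNReal.toReal_mono ENNReal.ofReal_ne_top h3).trans ?_
      have h6 : ∑ α ∈ M, levp p l α * b α ^ 2 ≤ lam * ∑ α ∈ M, b α ^ 2 := by
        rw [Finset.mul_sum]
        exact Finset.sum_le_sum fun α hα => mul_le_mul_of_nonneg_right (hlev α hα) (sq_nonneg _)
      rw [ENNReal.toReal_ofReal]; · exact h6
      exact Finset.sum_nonneg fun α _ => mul_nonneg (Finset.sum_nonneg fun i _ => add_nonneg (wp_nonneg hl _) (sq_nonneg _)) (sq_nonneg _)
end

end Weyl

namespace Weyl

section
variable {ι : Type*} [Fintype ι]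

noncomputable def Ph (r : ι → ℝ) (y : ι → ℝ) : ℝ := ∑ i, y i ^ r i
def Sp (r : ι → ℝ) (t : ℝ) : Set (ι → ℝ) := {y | (∀ i, 0 < y i) ∧ Ph r y ≤ t}
def Sc (r : ι → ℝ) (t : ℝ) : Set (ι → ℝ) := {y | (∀ i, 0 ≤ y i) ∧ Ph r y ≤ t}
def Su (r : ι → ℝ) : Set (ι → ℝ) := {y | (∀ i, 0 < y i) ∧ Ph r y < 1}

lemma Ph_cont {r : ι → ℝ} (hr : ∀ i, 0 < r i) : Continuous (Ph r) :=
  continuous_finsetSum _ fun i _ => (Real.continuous_rpow_const (hr i).le).comp (continuous_apply i)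

lemma orth_open : IsOpen {y : ι → ℝ | ∀ i, 0 < y i} := by
  simp only [Set.ofPred_forall]
  exact isOpen_iInter_of_finite fun i => isOpen_lt continuous_const (continuous_apply i)

lemma Sc_closed {r : ι → ℝ} (hr : ∀ i, 0 < r i) (t : ℝ) : IsClosed (Sc r t) := by
  refine IsClosed.inter (s₁ := {y : ι → ℝ | ∀ i, 0 ≤ y i}) ?_ (isClosed_le (Ph_cont hr) continuous_const)
  simp only [Set.ofPred_forall]
  exact isClosed_iInter fun i => isClosed_le continuous_const (continuous_apply i)

lemma Su_open {r : ι → ℝ} (hr : ∀ i, 0 < r i) : IsOpen (Su r) :=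
  orth_open.inter (isOpen_lt (Ph_cont hr) continuous_const)

lemma Sp_meas {r : ι → ℝ} (hr : ∀ i, 0 < r i) (t : ℝ) : MeasurableSet (Sp r t) :=
  orth_open.measurableSet.inter (isClosed_le (Ph_cont hr) continuous_const).measurableSet

lemma Su_Sp (r : ι → ℝ) : Su r ⊆ Sp r 1 := fun _ h => ⟨h.1, h.2.le⟩
lemma Sp_Sc (r : ι → ℝ) (t) : Sp r t ⊆ Sc r t := fun _ h => ⟨fun i => (h.1 i).le, h.2⟩

lemma Sc_bdd {r : ι → ℝ} (hr : ∀ i, 0 < r i) : Sc r 1 ⊆ Set.Icc 0 1 := by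
  intro y hy
  refine ⟨fun i => hy.1 i, fun i => ?_⟩
  have h1 : y i ^ r i ≤ 1 := (Finset.single_le_sum (f := fun i => y i ^ r i) (fun j _ => Real.rpow_nonneg (hy.1 j) _) (Finset.mem_univ i)).trans hy.2
  by_contra h
  exact absurd h1 (not_le.2 (Real.one_lt_rpow (not_le.1 h) (hr i)))

lemma Sp_fin {r : ι → ℝ} (hr : ∀ i, 0 < r i) : volume (Sp r 1) < ⊤ :=
  ((measure_mono ((Sp_Sc r 1).trans (Sc_bdd hr)))).trans_lt isCompact_Icc.measure_lt_top

lemma Sp_vol {r : ι → ℝ} (hr : ∀ i, 0 < r i) {t : ℝ} (ht : 0 < t) :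
    volume (Sp r t) = ENNReal.ofReal (t ^ (∑ i, 1 / r i)) * volume (Sp r 1) := by
  classical
  set D : ι → ℝ := fun i => t ^ (1 / r i) with hD
  have hD0 : ∀ i, 0 < D i := fun i => Real.rpow_pos_of_pos ht _
  have hdet : (Matrix.diagonal D).det = t ^ (∑ i, 1 / r i) := by
    rw [Matrix.det_diagonal, Real.rpow_sum_of_pos ht]
  have h0 : 0 < t ^ (∑ i, 1 / r i) := Real.rpow_pos_of_pos ht _
  have h := Real.smul_map_diagonal_volume_pi (D := D) (by rw [hdet]; exact h0.ne')
  conv_lhs => rw [← h]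
  rw [Measure.smul_apply, smul_eq_mul, hdet, abs_of_pos h0]
  congr 1
  rw [Measure.map_apply (LinearMap.continuous_on_pi _).measurable (Sp_meas hr t)]
  congr 1
  ext y
  have e : ∀ i, (Matrix.toLin' (Matrix.diagonal D) y) i = D i * y i := fun i => by
    simp [Matrix.toLin'_apply, Matrix.mulVec_diagonal]
  simp only [Set.mem_preimage, Sp, Set.mem_ofPred_eq, e, Ph]
  have e1 : (∀ i, 0 < D i * y i) ↔ ∀ i, 0 < y i := forall_congr' fun i => mul_pos_iff_of_pos_left (hD0 i)
  rw [e1]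
  refine and_congr_right fun hy => ?_
  have : ∑ i, (D i * y i) ^ r i = t * ∑ i, y i ^ r i := by
    rw [Finset.mul_sum]
    refine Finset.sum_congr rfl fun i _ => ?_
    rw [Real.mul_rpow (hD0 i).le (hy i).le, hD, ← Real.rpow_mul ht.le, one_div_mul_cancel (hr i).ne', Real.rpow_one]
  rw [this]
  exact mul_le_iff_le_one_right ht

lemma exp_lint {r : ι → ℝ} (hr : ∀ i, 0 < r i) :
    ∫⁻ y in {y : ι → ℝ | ∀ i, 0 < y i}, ENNReal.ofReal (Real.exp (-Ph r y)) = ENNReal.ofReal (∏ i, Real.Gamma (1 / r i + 1)) := by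
  have h1 := integral_fintype_prod_eq_prod (μ := fun _ : ι => (volume.restrict (Set.Ioi (0:ℝ)))) (fun i x => Real.exp (- x ^ r i))
  simp_rw [fun i => integral_exp_neg_rpow (hr i)] at h1
  have e : volume.restrict {y : ι → ℝ | ∀ i, 0 < y i} = Measure.pi (fun _ : ι => (volume.restrict (Set.Ioi (0:ℝ)))) := by
    rw [← Measure.restrict_pi_pi, volume_pi]; congr 1; ext y; simp
  have e2 : ∀ y : ι → ℝ, ∏ i, Real.exp (- y i ^ r i) = Real.exp (-Ph r y) := fun y => by
    rw [← Real.exp_sum, Ph, Finset.sum_neg_distrib]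
  simp_rw [e2] at h1
  rw [e, ← h1, ofReal_integral_eq_lintegral_ofReal _ (Eventually.of_forall fun y => (Real.exp_pos _).le)]
  apply Integrable.of_integral_ne_zero
  rw [h1]
  refine Finset.prod_ne_zero_iff.2 fun i _ => (Real.Gamma_pos_of_pos ?_).ne'
  have := hr i; positivity

lemma exp_layer (a : ℝ) (ha : 0 ≤ a) : ENNReal.ofReal (Real.exp (-a)) =
    ∫⁻ t in Set.Ioi (0:ℝ), ENNReal.ofReal (Real.exp (-t)) * (Set.Ici a).indicator 1 t := by
  have h1 : ∀ t, ENNReal.ofReal (Real.exp (-t)) * (Set.Ici a).indicator 1 t = (Set.Ici a).indicator (fun t => ENNReal.ofReal (Real.exp (-t))) t := by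
    intro t; by_cases h : t ∈ Set.Ici a <;> simp [h]
  simp_rw [h1]
  rw [lintegral_indicator measurableSet_Ici, Measure.restrict_restrict measurableSet_Ici,
    ← integral_exp_neg_Ioi a, ofReal_integral_eq_lintegral_ofReal (integrableOn_exp_neg_Ioi a) (Eventually.of_forall fun y => (Real.exp_pos _).le)]
  refine setLIntegral_congr ?_
  have : Set.Ioi a ⊆ Set.Ici a ∩ Set.Ioi 0 := fun x hx => ⟨Set.Ioi_subset_Ici_self hx, lt_of_le_of_lt ha hx⟩
  refine Filter.EventuallyLE.antisymm (HasSubset.Subset.eventuallyLE this) ?_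
  have h2 : (Set.Ici a : Set ℝ) =ᵐ[volume] Set.Ioi a := Ioi_ae_eq_Ici.symm
  exact (HasSubset.Subset.eventuallyLE Set.inter_subset_left).trans h2.le

lemma Sp_one {r : ι → ℝ} (hr : ∀ i, 0 < r i) :
    volume (Sp r 1) = ENNReal.ofReal ((∏ i, Real.Gamma (1 / r i + 1)) / Real.Gamma ((∑ i, 1 / r i) + 1)) := by
  set d := ∑ i, 1 / r i with hd
  have hd0 : 0 ≤ d := Finset.sum_nonneg fun i _ => by have := hr i; positivity
  have hG : 0 < Real.Gamma (d + 1) := Real.Gamma_pos_of_pos (by linarith)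
  have hO : MeasurableSet {y : ι → ℝ | ∀ i, 0 < y i} := orth_open.measurableSet
  have mPh := (Ph_cont hr).measurable
  have key : ENNReal.ofReal (∏ i, Real.Gamma (1 / r i + 1)) = ENNReal.ofReal (Real.Gamma (d + 1)) * volume (Sp r 1) := by
    rw [← exp_lint hr]
    calc _ = ∫⁻ y in {y : ι → ℝ | ∀ i, 0 < y i}, ∫⁻ t in Set.Ioi (0:ℝ), ENNReal.ofReal (Real.exp (-t)) * {q : (ι → ℝ) × ℝ | Ph r q.1 ≤ q.2}.indicator 1 (y, t) := by
          refine setLIntegral_congr_fun hO fun y hy => ?_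
          rw [exp_layer (Ph r y) (Finset.sum_nonneg fun i _ => Real.rpow_nonneg (hy i).le _)]
          rfl
      _ = ∫⁻ t in Set.Ioi (0:ℝ), ∫⁻ y in {y : ι → ℝ | ∀ i, 0 < y i}, ENNReal.ofReal (Real.exp (-t)) * {q : (ι → ℝ) × ℝ | Ph r q.1 ≤ q.2}.indicator 1 (y, t) := by
          apply lintegral_lintegral_swap
          apply Measurable.aemeasurable
          apply Measurable.mul (by fun_prop)
          refine measurable_one.indicator ?_
          exact measurableSet_le (mPh.comp measurable_fst) measurable_snd
      _ = ∫⁻ t in Set.Ioi (0:ℝ), ENNReal.ofReal (Real.exp (-t) * t ^ d) * volume (Sp r 1) := by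
          refine setLIntegral_congr_fun measurableSet_Ioi fun t ht => ?_
          have e : ∀ y, {q : (ι → ℝ) × ℝ | Ph r q.1 ≤ q.2}.indicator (1 : (ι → ℝ) × ℝ → ℝ≥0∞) (y, t) = {y | Ph r y ≤ t}.indicator 1 y := fun y => rfl
          simp_rw [e]
          have hm : MeasurableSet {y | Ph r y ≤ t} := measurableSet_le mPh measurable_const
          rw [lintegral_const_mul _ (measurable_one.indicator hm), lintegral_indicator_one hm, Measure.restrict_apply hm]
          have : {y | Ph r y ≤ t} ∩ {y : ι → ℝ | ∀ i, 0 < y i} = Sp r t := by ext y; simp [Sp, and_comm]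
          rw [this, Sp_vol hr ht, ← mul_assoc, ← ENNReal.ofReal_mul (Real.exp_pos _).le]
      _ = _ := by
          rw [lintegral_mul_const _ (by fun_prop)]
          congr 1
          rw [Real.Gamma_eq_integral (by linarith), ofReal_integral_eq_lintegral_ofReal (Real.GammaIntegral_convergent (by linarith)) (by
            refine (ae_restrict_iff' measurableSet_Ioi).2 (Eventually.of_forall fun t ht => ?_)
            have := Real.rpow_nonneg (le_of_lt ht) (d + 1 - 1)
            have := Real.exp_pos (-t)
            simp only [Pi.zero_apply]; positivity)]
          simp
  rw [ENNReal.ofReal_div_of_pos hG, key, mul_comm, ENNReal.mul_div_cancel_right (by simpa using hG) ENNReal.ofReal_ne_top]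

lemma Su_vol {r : ι → ℝ} (hr : ∀ i, 0 < r i) : volume (Sp r 1) ≤ volume (Su r) := by
  have h : ∀ t : ℝ, 0 < t → t < 1 → ENNReal.ofReal (t ^ (∑ i, 1 / r i)) * volume (Sp r 1) ≤ volume (Su r) := by
    intro t h0 h1
    rw [← Sp_vol hr h0]
    exact measure_mono fun y hy => ⟨hy.1, hy.2.trans_lt h1⟩
  have hd0 : 0 ≤ ∑ i, 1 / r i := Finset.sum_nonneg fun i _ => by have := hr i; positivity
  have ht : Tendsto (fun t : ℝ => ENNReal.ofReal (t ^ (∑ i, 1 / r i)) * volume (Sp r 1)) (𝓝[<] 1) (𝓝 (volume (Sp r 1))) := by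
    have h1 : Tendsto (fun t : ℝ => ENNReal.ofReal (t ^ (∑ i, 1 / r i))) (𝓝[<] 1) (𝓝 1) := by
      have : Continuous fun t : ℝ => ENNReal.ofReal (t ^ (∑ i, 1 / r i)) := ENNReal.continuous_ofReal.comp (Real.continuous_rpow_const hd0)
      have := this.tendsto 1
      rw [Real.one_rpow, ENNReal.ofReal_one] at this
      exact this.mono_left nhdsWithin_le_nhds
    have := ENNReal.Tendsto.mul_const h1 (Or.inr (Sp_fin hr).ne)
    rwa [one_mul] at this
  refine le_of_tendsto ht ?_
  filter_upwards [Ioo_mem_nhdsLT (show (0:ℝ) < 1 by norm_num)] with t ht using h t ht.1 ht.2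

lemma hyper_null (i : ι) : volume {y : ι → ℝ | y i = 0} = 0 := by
  have := Measure.pi_hyperplane (fun _ : ι => (volume : Measure ℝ)) i 0
  rwa [← volume_pi] at this

lemma Sc_null {r : ι → ℝ} (hr : ∀ i, 0 < r i) : volume (Sc r 1 \ Su r) = 0 := by
  have h : Sc r 1 \ Su r ⊆ (⋃ i, {y : ι → ℝ | y i = 0}) ∪ (Sp r 1 \ Su r) := by
    rintro y ⟨h1, h2⟩
    by_cases h3 : ∀ i, 0 < y i
    · exact Or.inr ⟨⟨h3, h1.2⟩, h2⟩
    · push Not at h3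
      obtain ⟨i, hi⟩ := h3
      exact Or.inl (Set.mem_iUnion.2 ⟨i, le_antisymm hi (h1.1 i)⟩)
  refine measure_mono_null h (measure_union_null (measure_iUnion_null hyper_null) ?_)
  rw [measure_sdiff (Su_Sp r) (Su_open hr).measurableSet.nullMeasurableSet ((measure_mono (Su_Sp r)).trans_lt (Sp_fin hr)).ne]
  exact tsub_eq_zero_of_le (Su_vol hr)

noncomputable def GG (r : ι → ℝ) : ℝ := (∏ i, Real.Gamma (1 / r i + 1)) / Real.Gamma ((∑ i, 1 / r i) + 1)

lemma GG_nonneg {r : ι → ℝ} (hr : ∀ i, 0 < r i) : 0 ≤ GG r := by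
  have hd0 : 0 ≤ ∑ i, 1 / r i := Finset.sum_nonneg fun i _ => by have := hr i; positivity
  refine div_nonneg (Finset.prod_nonneg fun i _ => (Real.Gamma_pos_of_pos ?_).le) (Real.Gamma_pos_of_pos (by linarith)).le
  have := hr i; positivity

lemma vol_S {r : ι → ℝ} (hr : ∀ i, 0 < r i) {S : Set (ι → ℝ)} (h1 : Su r ⊆ S) (h2 : S ⊆ Sc r 1) : volume.real S = GG r := by
  have e : volume S = volume (Sp r 1) := by
    apply le_antisymm
    · have : S ⊆ (Sc r 1 \ Su r) ∪ Sp r 1 := fun y hy => by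
        by_cases h : y ∈ Su r
        · exact Or.inr (Su_Sp r h)
        · exact Or.inl ⟨h2 hy, h⟩
      refine (measure_mono this).trans ((measure_union_le _ _).trans ?_)
      rw [Sc_null hr, zero_add]
    · exact (Su_vol hr).trans (measure_mono h1)
  rw [Measure.real, e, Sp_one hr]
  exact ENNReal.toReal_ofReal (GG_nonneg hr)

open Pointwise in
lemma count_gen {r : ι → ℝ} (hr : ∀ i, 0 < r i) {S : Set (ι → ℝ)} (h1 : Su r ⊆ S) (h2 : S ⊆ Sc r 1) (hm : MeasurableSet S)
    (hs : ∀ y ∈ S, ∀ c : ℝ, 0 < c → c ≤ 1 → c • y ∈ S) :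
    Tendsto (fun x : ℝ => ({z : ι → ℕ | (fun i => (z i : ℝ) / x) ∈ S}.ncard : ℝ) / x ^ Fintype.card ι) atTop (𝓝 (GG r)) := by
  have h := tendsto_card_div_pow_atTop_volume' S (Metric.isBounded_Icc 0 1 |>.subset (h2.trans (Sc_bdd hr))) hm ?_ ?_
  · rw [vol_S hr h1 h2] at h
    refine h.congr' ?_
    filter_upwards [eventually_gt_atTop 0] with x hx
    congr 2
    rw [Nat.card_coe_set_eq]
    have hinj : Function.Injective (fun (z : ι → ℕ) (i : ι) => (z i : ℝ) / x) := by
      intro z w hzw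
      ext i
      have := congrFun hzw i
      simp only at this
      rw [div_left_inj' hx.ne'] at this
      exact_mod_cast this
    rw [← Set.ncard_image_of_injective _ hinj]
    congr 1
    ext y
    constructor
    · rintro ⟨hy, hy2⟩
      rw [Set.mem_inv_smul_set_iff₀ hx.ne'] at hy2
      have hy3 : ∀ i, ∃ k : ℤ, (k : ℝ) = x * y i := by
        have := (Module.Basis.mem_span_iff_repr_mem ℤ (Pi.basisFun ℝ ι) (x • y)).1 hy2
        intro i
        obtain ⟨k, hk⟩ := this i
        exact ⟨k, by simpa using hk⟩
      choose k hk using hy3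
      have hk0 : ∀ i, 0 ≤ k i := fun i => by
        have : (0:ℝ) ≤ k i := by rw [hk]; exact mul_nonneg hx.le ((h2 hy).1 i)
        exact_mod_cast this
      have e : (fun i => (((k i).toNat : ℕ) : ℝ) / x) = y := by
        ext i
        have : (((k i).toNat : ℕ) : ℝ) = k i := by exact_mod_cast Int.toNat_of_nonneg (hk0 i)
        rw [this, hk]; field_simp
      exact ⟨fun i => (k i).toNat, by rw [Set.mem_ofPred_eq, e]; exact hy, e⟩
    · rintro ⟨z, hz, rfl⟩
      refine ⟨hz, ?_⟩
      rw [Set.mem_inv_smul_set_iff₀ hx.ne']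
      refine (Module.Basis.mem_span_iff_repr_mem ℤ (Pi.basisFun ℝ ι) _).2 fun i => ⟨z i, ?_⟩
      simp; field_simp
  · refine measure_mono_null ?_ (Sc_null hr)
    rw [frontier]
    exact Set.sdiff_subset_sdiff (closure_minimal h2 (Sc_closed hr 1)) (interior_maximal h1 (Su_open hr))
  · intro x y hx hxy
    rintro _ ⟨w, hw, rfl⟩
    have hy := hx.trans_le hxy
    refine ⟨(x / y) • w, hs w hw _ (by positivity) ((div_le_one hy).2 hxy), ?_⟩
    simp only [smul_smul]; congr 1; field_simp

lemma Ph_smul_le {r : ι → ℝ} (hr : ∀ i, 0 < r i) {y : ι → ℝ} (hy : ∀ i, 0 ≤ y i) {c : ℝ} (h0 : 0 < c) (h1 : c ≤ 1) : Ph r (c • y) ≤ Ph r y :=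
  Finset.sum_le_sum fun i _ => Real.rpow_le_rpow (mul_nonneg h0.le (hy i)) (mul_le_of_le_one_left (hy i) h1) (hr i).le

lemma count_c {r : ι → ℝ} (hr : ∀ i, 0 < r i) :
    Tendsto (fun x : ℝ => ({z : ι → ℕ | Ph r (fun i => (z i : ℝ) / x) ≤ 1}.ncard : ℝ) / x ^ Fintype.card ι) atTop (𝓝 (GG r)) := by
  refine (count_gen hr ((Su_Sp r).trans (Sp_Sc r 1)) (subset_refl _) (Sc_closed hr 1).measurableSet ?_).congr' ?_
  · exact fun y hy c h0 h1 => ⟨fun i => mul_nonneg h0.le (hy.1 i), (Ph_smul_le hr hy.1 h0 h1).trans hy.2⟩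
  · filter_upwards [eventually_gt_atTop 0] with x hx
    congr 3
    ext z
    simp only [Sc, Set.mem_ofPred_eq, and_iff_right_iff_imp]
    intro _ i; positivity

lemma count_p {r : ι → ℝ} (hr : ∀ i, 0 < r i) :
    Tendsto (fun x : ℝ => ({z : ι → ℕ | (∀ i, z i ≠ 0) ∧ Ph r (fun i => (z i : ℝ) / x) ≤ 1}.ncard : ℝ) / x ^ Fintype.card ι) atTop (𝓝 (GG r)) := by
  refine (count_gen hr (Su_Sp r) (Sp_Sc r 1) (Sp_meas hr 1) ?_).congr' ?_
  · exact fun y hy c h0 h1 => ⟨fun i => mul_pos h0 (hy.1 i), (Ph_smul_le hr (fun i => (hy.1 i).le) h0 h1).trans hy.2⟩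
  · filter_upwards [eventually_gt_atTop 0] with x hx
    congr 3
    ext z
    simp only [Sp, Set.mem_ofPred_eq]
    refine and_congr_left fun _ => forall_congr' fun i => ?_
    rw [div_pos_iff_of_pos_right hx, Nat.cast_pos, Nat.pos_iff_ne_zero]

lemma fin_c {r : ι → ℝ} (hr : ∀ i, 0 < r i) {x : ℝ} (hx : 0 < x) : {z : ι → ℕ | Ph r (fun i => (z i : ℝ) / x) ≤ 1}.Finite := by
  classical
  refine (Set.finite_Icc (0 : ι → ℕ) (fun _ => ⌊x⌋₊)).subset fun z hz => ⟨fun i => Nat.zero_le _, fun i => ?_⟩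
  have := (Sc_bdd hr (⟨fun i => by positivity, hz⟩ : (fun i => (z i : ℝ) / x) ∈ Sc r 1)).2 i
  simp only [Pi.one_apply] at this
  exact Nat.le_floor ((div_le_one hx).1 this)
end

end Weyl

namespace Weyl

section
variable {n : ℕ}

def zz (σ : ℕ) (α : Fin n → ℤ × ℕ) : Fin n ⊕ Fin n → ℕ := Sum.elim (fun i => absn (α i).1 + σ) (fun i => (α i).2)
def gz (σ : ℕ) (α : Fin n → ℤ × ℕ) : (Fin n → Bool) × (Fin n ⊕ Fin n → ℕ) := (fun i => decide (0 ≤ (α i).1), zz σ α)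

lemma absn_inj {j k : ℤ} (h1 : absn j = absn k) (h2 : (0 ≤ j) ↔ (0 ≤ k)) : j = k := by
  rcases j with j | j <;> rcases k with k | k
  · simp only [absn] at h1; rw [h1]
  · exact absurd (h2.1 (Int.natCast_nonneg j)) (by simp)
  · exact absurd (h2.2 (Int.natCast_nonneg k)) (by simp)
  · simp only [absn] at h1; rw [h1]

lemma absn_surj (b : Bool) (k : ℕ) : ∃ j : ℤ, absn j = k ∧ decide (0 ≤ j) = b := by
  cases b
  · exact ⟨Int.negSucc k, rfl, by simp⟩
  · exact ⟨Int.ofNat k, rfl, by simp⟩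

lemma gz_inj (σ : ℕ) : Function.Injective (gz σ : (Fin n → ℤ × ℕ) → _) := by
  intro α β h
  simp only [gz, Prod.mk.injEq] at h
  ext1 i
  have h1 := congrFun h.1 i
  have h2 := congrFun h.2 (Sum.inl i)
  have h3 := congrFun h.2 (Sum.inr i)
  simp only [zz, Sum.elim_inl, Sum.elim_inr, add_left_inj, decide_eq_decide] at h1 h2 h3
  exact Prod.ext (absn_inj (Nat.add_right_cancel h2) h1) h3

lemma gz_image (σ : ℕ) {A : Set (Fin n → ℤ × ℕ)} {Z : Set (Fin n ⊕ Fin n → ℕ)} (h1 : ∀ α, α ∈ A ↔ zz σ α ∈ Z)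
    (h2 : ∀ z ∈ Z, ∀ i, σ ≤ z (Sum.inl i)) : gz σ '' A = Set.univ ×ˢ Z := by
  ext ⟨b, z⟩
  constructor
  · rintro ⟨α, hα, h⟩
    simp only [gz, Prod.mk.injEq] at h
    refine ⟨trivial, ?_⟩
    show z ∈ Z
    rw [← h.2]; exact (h1 α).1 hα
  · rintro ⟨-, hz⟩
    change z ∈ Z at hz
    choose j hj1 hj2 using fun i => absn_surj (b i) (z (Sum.inl i) - σ)
    have e : zz σ (fun i => (j i, z (Sum.inr i))) = z := by
      ext i
      rcases i with i | i
      · simp only [zz, Sum.elim_inl, hj1]; have := h2 z hz i; omega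
      · simp [zz]
    refine ⟨fun i => (j i, z (Sum.inr i)), (h1 _).2 (by rw [e]; exact hz), ?_⟩
    simp only [gz, e, Prod.mk.injEq, and_true]
    exact funext hj2

lemma cnt (σ : ℕ) {A : Set (Fin n → ℤ × ℕ)} {Z : Set (Fin n ⊕ Fin n → ℕ)} (h1 : ∀ α, α ∈ A ↔ zz σ α ∈ Z)
    (h2 : ∀ z ∈ Z, ∀ i, σ ≤ z (Sum.inl i)) : A.ncard = 2 ^ n * Z.ncard := by
  rw [← Set.ncard_image_of_injective A (gz_inj σ), gz_image σ h1 h2, Set.ncard_prod, Set.ncard_univ]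
  simp

lemma cnt_fin (σ : ℕ) {A : Set (Fin n → ℤ × ℕ)} {Z : Set (Fin n ⊕ Fin n → ℕ)} (h1 : ∀ α, α ∈ A ↔ zz σ α ∈ Z)
    (h2 : ∀ z ∈ Z, ∀ i, σ ≤ z (Sum.inl i)) (hZ : Z.Finite) : A.Finite := by
  refine Set.Finite.of_finite_image ?_ (gz_inj σ).injOn
  rw [gz_image σ h1 h2]; exact Set.finite_univ.prod hZ

noncomputable def aa (p : ℝ) : ℝ := 1 / (2 * (p - 1))
noncomputable def lL (p Λ : ℝ) : ℝ := √(Real.pi * (4 * Λ) ^ aa p / √Λ)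
noncomputable def xX (p Λ : ℝ) : ℝ := √((4 * Λ) ^ aa p * √Λ / Real.pi)
noncomputable def rr (n : ℕ) (p : ℝ) : Fin n ⊕ Fin n → ℝ := Sum.elim (fun _ => 2 * (p - 1)) (fun _ => 2)

lemma rr_pos {p : ℝ} (hp : 1 < p) : ∀ i, 0 < rr n p i := by
  rintro (i | i)
  · simp only [rr, Sum.elim_inl]; linarith
  · simp [rr]

lemma lL_pos {p Λ : ℝ} (h : 0 < Λ) : 0 < lL p Λ := by
  unfold lL; have := Real.pi_pos; positivity
lemma xX_pos {p Λ : ℝ} (h : 0 < Λ) : 0 < xX p Λ := by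
  unfold xX; have := Real.pi_pos; positivity
lemma lx {p Λ : ℝ} (h : 0 < Λ) : lL p Λ = (4 * Λ) ^ aa p / xX p Λ := by
  rw [eq_div_iff (xX_pos h).ne']
  unfold lL xX
  have h4 : 0 < (4 * Λ) ^ aa p := by positivity
  have hs : 0 < √Λ := Real.sqrt_pos.2 h
  rw [← Real.sqrt_mul (by have := Real.pi_pos; positivity)]
  have : Real.pi * (4 * Λ) ^ aa p / √Λ * ((4 * Λ) ^ aa p * √Λ / Real.pi) = ((4 * Λ) ^ aa p) ^ 2 := by
    have := Real.pi_ne_zero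
    field_simp
  rw [this, Real.sqrt_sq h4.le]
lemma xl {p Λ : ℝ} (h : 0 < Λ) : Real.pi / lL p Λ = √Λ / xX p Λ := by
  rw [div_eq_div_iff (lL_pos h).ne' (xX_pos h).ne']
  have h4 : 0 < (4 * Λ) ^ aa p := by positivity
  have hx : xX p Λ ^ 2 = (4 * Λ) ^ aa p * √Λ / Real.pi := by
    unfold xX; exact Real.sq_sqrt (by have := Real.pi_pos; positivity)
  rw [lx h, mul_div_assoc', eq_div_iff (xX_pos h).ne', mul_assoc, ← sq, hx]
  have := Real.pi_ne_zero
  field_simp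

lemma w_eq {p Λ : ℝ} (hp : 1 < p) (h : 0 < Λ) (k : ℕ) : (k * lL p Λ) ^ (2 * (p - 1)) / 4 = Λ * ((k:ℝ) / xX p Λ) ^ (2 * (p - 1)) := by
  have hx := xX_pos (p := p) h
  have h4 : 0 < (4 * Λ) ^ aa p := by positivity
  have : (k:ℝ) * lL p Λ = (4 * Λ) ^ aa p * (k / xX p Λ) := by rw [lx h]; ring
  rw [this, Real.mul_rpow h4.le (by positivity), ← Real.rpow_mul (by positivity), aa, one_div_mul_cancel (by linarith), Real.rpow_one]
  ring

lemma m_eq {p Λ : ℝ} (h : 0 < Λ) (k : ℕ) : (k * Real.pi / lL p Λ) ^ 2 = Λ * ((k:ℝ) / xX p Λ) ^ (2:ℝ) := by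
  rw [mul_div_assoc, xl h, Real.rpow_two, mul_pow, div_pow, div_pow, Real.sq_sqrt h.le]
  ring

lemma lev_eq {p Λ : ℝ} (hp : 1 < p) (h : 0 < Λ) (α : Fin n → ℤ × ℕ) :
    lev p (lL p Λ) α = Λ * Ph (rr n p) (fun i => (zz 0 α i : ℝ) / xX p Λ) := by
  rw [lev, Ph, Fintype.sum_sum_type, mul_add, Finset.mul_sum, Finset.mul_sum, Finset.sum_add_distrib]
  congr 1
  · refine Finset.sum_congr rfl fun i _ => ?_
    simp only [zz, rr, Sum.elim_inl, add_zero, wm]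
    exact w_eq hp h _
  · refine Finset.sum_congr rfl fun i _ => ?_
    simp only [zz, rr, Sum.elim_inr]
    exact m_eq h _

lemma levp_eq {p Λ : ℝ} (hp : 1 < p) (h : 0 < Λ) (α : Fin n → ℤ × ℕ) :
    levp p (lL p Λ) α = Λ * Ph (rr n p) (fun i => (zz 1 α i : ℝ) / xX p Λ) := by
  rw [levp, Ph, Fintype.sum_sum_type, mul_add, Finset.mul_sum, Finset.mul_sum, Finset.sum_add_distrib]
  congr 1
  · refine Finset.sum_congr rfl fun i _ => ?_
    simp only [zz, rr, Sum.elim_inl, wp]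
    have := w_eq hp h (absn (α i).1 + 1)
    push_cast at this ⊢
    exact this
  · refine Finset.sum_congr rfl fun i _ => ?_
    simp only [zz, rr, Sum.elim_inr]
    exact m_eq h _

def II (n : ℕ) (p Λ : ℝ) : Set (Fin n → ℤ × ℕ) := {α | lev p (lL p Λ) α ≤ Λ}
def JJ (n : ℕ) (p Λ : ℝ) : Set (Fin n → ℤ × ℕ) := {α | (∀ i, (α i).2 ≠ 0) ∧ levp p (lL p Λ) α ≤ Λ}

lemma II_iff {p Λ : ℝ} (hp : 1 < p) (h : 0 < Λ) (α : Fin n → ℤ × ℕ) :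
    α ∈ II n p Λ ↔ zz 0 α ∈ {z : Fin n ⊕ Fin n → ℕ | Ph (rr n p) (fun i => (z i : ℝ) / xX p Λ) ≤ 1} := by
  show lev p (lL p Λ) α ≤ Λ ↔ Ph (rr n p) (fun i => (zz 0 α i : ℝ) / xX p Λ) ≤ 1
  rw [lev_eq hp h]
  exact mul_le_iff_le_one_right h

lemma JJ_iff {p Λ : ℝ} (hp : 1 < p) (h : 0 < Λ) (α : Fin n → ℤ × ℕ) :
    α ∈ JJ n p Λ ↔ zz 1 α ∈ {z : Fin n ⊕ Fin n → ℕ | (∀ i, z i ≠ 0) ∧ Ph (rr n p) (fun i => (z i : ℝ) / xX p Λ) ≤ 1} := by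
  show (_ ∧ levp p (lL p Λ) α ≤ Λ) ↔ (∀ i, zz 1 α i ≠ 0) ∧ Ph (rr n p) (fun i => (zz 1 α i : ℝ) / xX p Λ) ≤ 1
  rw [levp_eq hp h]
  refine and_congr ?_ (mul_le_iff_le_one_right h)
  simp [zz]

lemma II_fin {p Λ : ℝ} (hp : 1 < p) (h : 0 < Λ) : (II n p Λ).Finite :=
  cnt_fin 0 (II_iff hp h) (fun _ _ _ => Nat.zero_le _) (fin_c (rr_pos hp) (xX_pos h))

lemma JJ_fin {p Λ : ℝ} (hp : 1 < p) (h : 0 < Λ) : (JJ n p Λ).Finite :=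
  cnt_fin 1 (JJ_iff hp h) (fun _ hz i => Nat.one_le_iff_ne_zero.2 (hz.1 _)) ((fin_c (rr_pos hp) (xX_pos h)).subset fun _ hz => hz.2)

noncomputable def ex (n : ℕ) (p : ℝ) : ℝ := (n / 2 : ℝ) * p / (p - 1)
noncomputable def LIM (n : ℕ) (p : ℝ) : ℝ := ((2 : ℝ) ^ ((n : ℝ) / (p - 1)) * Real.Gamma (1 / (2 * (p - 1)) + 1) ^ n /
        (Real.pi ^ ((n : ℝ) / 2) * Real.Gamma ((n / 2 : ℝ) * p / (p - 1) + 1)))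

lemma xX_lim {p : ℝ} (hp : 1 < p) : Tendsto (xX p) atTop atTop := by
  unfold xX
  refine Real.tendsto_sqrt_atTop.comp ?_
  refine Tendsto.atTop_div_const Real.pi_pos ?_
  refine Tendsto.atTop_mul_atTop₀ ?_ Real.tendsto_sqrt_atTop
  refine (tendsto_rpow_atTop ?_).comp (tendsto_id.const_mul_atTop (by norm_num))
  unfold aa; have : 0 < p - 1 := by linarith
  positivity

lemma ex_eq {p : ℝ} (hp : 1 < p) : ex n p = n * (aa p + 1 / 2) := by
  unfold ex aa; have : p - 1 ≠ 0 := by linarith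
  field_simp; ring

lemma xX_pow {p Λ : ℝ} (hp : 1 < p) (h : 0 < Λ) : xX p Λ ^ Fintype.card (Fin n ⊕ Fin n) = (4 ^ aa p / Real.pi) ^ n * Λ ^ ex n p := by
  have hx : xX p Λ ^ 2 = (4 * Λ) ^ aa p * √Λ / Real.pi := by
    unfold xX; exact Real.sq_sqrt (by have := Real.pi_pos; positivity)
  have : Fintype.card (Fin n ⊕ Fin n) = 2 * n := by simp; ring
  rw [this, pow_mul, hx, ex_eq hp, mul_comm (n:ℝ), Real.rpow_mul h.le, Real.rpow_natCast, ← mul_pow, Real.rpow_add h,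
    Real.mul_rpow (by norm_num) h.le, Real.sqrt_eq_rpow]
  congr 1; ring

lemma GG_eq {p : ℝ} (hp : 1 < p) : 2 ^ n * (4 ^ aa p / Real.pi) ^ n * GG (rr n p) = LIM n p := by
  have h1 : ∑ i, 1 / rr n p i = ex n p := by
    rw [Fintype.sum_sum_type, ex_eq hp]; simp [rr, aa]; ring
  have h2 : ∏ i, Real.Gamma (1 / rr n p i + 1) = Real.Gamma (1 / (2 * (p - 1)) + 1) ^ n * (√Real.pi / 2) ^ n := by
    rw [Fintype.prod_sum_type]
    have : Real.Gamma (1 / 2 + 1) = √Real.pi / 2 := by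
      rw [Real.Gamma_add_one (by norm_num), Real.Gamma_one_half_eq]; ring
    simp only [rr, Sum.elim_inl, Sum.elim_inr, this, Finset.prod_const, Finset.card_univ, Fintype.card_fin]
  have h3 : (2:ℝ) ^ ((n:ℝ) / (p - 1)) = ((4:ℝ) ^ aa p) ^ n := by
    rw [show (4:ℝ) = 2 ^ (2:ℝ) by norm_num, ← Real.rpow_mul (by norm_num), ← Real.rpow_natCast, ← Real.rpow_mul (by norm_num)]
    congr 1; unfold aa; have : p - 1 ≠ 0 := by linarith
    field_simp
  have h4 : Real.pi ^ ((n:ℝ) / 2) = √Real.pi ^ n := by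
    rw [Real.sqrt_eq_rpow, ← Real.rpow_natCast, ← Real.rpow_mul Real.pi_pos.le]; congr 1; ring
  have h5 : 0 < √Real.pi := Real.sqrt_pos.2 Real.pi_pos
  have h6 : Real.pi = √Real.pi ^ 2 := (Real.sq_sqrt Real.pi_pos.le).symm
  have h7 : 0 < Real.Gamma (ex n p + 1) := by
    refine Real.Gamma_pos_of_pos ?_
    rw [ex_eq hp]; unfold aa; have : 0 < p - 1 := by linarith
    positivity
  rw [GG, h1, h2, LIM, h3, h4]
  change _ = _ / (_ * Real.Gamma (ex n p + 1))
  rw [div_pow, div_pow]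
  generalize hw : √Real.pi = w at *
  rw [h6]
  field_simp
  ring

lemma lim_aux {p : ℝ} (hp : 1 < p) {A : ℝ → Set (Fin n → ℤ × ℕ)} {Z : ℝ → Set (Fin n ⊕ Fin n → ℕ)}
    (hA : ∀ Λ, 0 < Λ → (A Λ).ncard = 2 ^ n * (Z (xX p Λ)).ncard)
    (hZ : Tendsto (fun x => ((Z x).ncard : ℝ) / x ^ Fintype.card (Fin n ⊕ Fin n)) atTop (𝓝 (GG (rr n p)))) :
    Tendsto (fun Λ => ((A Λ).ncard : ℝ) / Λ ^ ex n p) atTop (𝓝 (LIM n p)) := by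
  have h := (hZ.comp (xX_lim hp)).const_mul (2 ^ n * (4 ^ aa p / Real.pi) ^ n)
  rw [GG_eq hp] at h
  refine h.congr' ?_
  filter_upwards [eventually_gt_atTop 0] with Λ hΛ
  simp only [Function.comp]
  rw [xX_pow hp hΛ, hA Λ hΛ]
  have h1 : 0 < (4 ^ aa p / Real.pi) ^ n := by have := Real.pi_pos; positivity
  have h2 : 0 < Λ ^ ex n p := by positivity
  push_cast
  field_simp

lemma II_lim {p : ℝ} (hp : 1 < p) : Tendsto (fun Λ => ((II n p Λ).ncard : ℝ) / Λ ^ ex n p) atTop (𝓝 (LIM n p)) :=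
  lim_aux hp (fun Λ hΛ => cnt 0 (II_iff hp hΛ) (fun _ _ _ => Nat.zero_le _)) (count_c (rr_pos hp))

lemma JJ_lim {p : ℝ} (hp : 1 < p) : Tendsto (fun Λ => ((JJ n p Λ).ncard : ℝ) / Λ ^ ex n p) atTop (𝓝 (LIM n p)) :=
  lim_aux hp (Z := fun x => {z : Fin n ⊕ Fin n → ℕ | (∀ i, z i ≠ 0) ∧ Ph (rr n p) (fun i => (z i : ℝ) / x) ≤ 1})
    (fun Λ hΛ => cnt 1 (JJ_iff hp hΛ) (fun _ hz i => Nat.one_le_iff_ne_zero.2 (hz.1 _))) (count_p (rr_pos hp))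

end

end Weyl

namespace Weyl
variable {n : ℕ}

def rq (n : ℕ) (p : ℝ) (F : Submodule ℝ (EuclideanSpace ℝ (Fin n) → ℝ)) : Set ℝ :=
  { r : ℝ | ∃ f ∈ F, (∫ x, (f x) ^ 2 ∂(nuP n p)) ≠ 0 ∧
      r = (∫ x, (localLip f x) ^ 2 ∂(nuP n p)) / (∫ x, (f x) ^ 2 ∂(nuP n p)) }
def infs (n : ℕ) (p : ℝ) (k : ℕ) : Set ℝ :=
  { a : ℝ | ∃ F : Submodule ℝ (EuclideanSpace ℝ (Fin n) → ℝ), Module.finrank ℝ F = k ∧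
    (∀ f ∈ F, memW12Lip (nuP n p) f) ∧ a = sSup (rq n p F) }
lemma lam_eq (p : ℝ) (k : ℕ) : lambdaLip (nuP n p) k = sInf (infs n p k) := rfl

lemma rq_nonneg (p : ℝ) (F) : ∀ r ∈ rq n p F, 0 ≤ r := by
  rintro r ⟨f, _, _, rfl⟩
  exact div_nonneg (integral_nonneg fun _ => sq_nonneg _) (integral_nonneg fun _ => sq_nonneg _)

lemma infs_bdd (p : ℝ) (k : ℕ) : BddBelow (infs n p k) := by
  refine ⟨0, ?_⟩
  rintro a ⟨F, _, _, rfl⟩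
  exact Real.sSup_nonneg (rq_nonneg p F)

lemma rq_le (hn : 1 ≤ n) {p : ℝ} (hp : 1 < p) {F : Submodule ℝ (EuclideanSpace ℝ (Fin n) → ℝ)}
    (hF : ∀ f ∈ F, memW12Lip (nuP n p) f) {K : ℝ}
    (hK : ∀ f ∈ F, (En p (co f)).toReal ≤ K * (Ms p (co f)).toReal) : ∀ r ∈ rq n p F, r ≤ K := by
  rintro r ⟨f, hf, h0, rfl⟩
  have hl := ((mem_iff hn hp).1 (hF f hf)).1
  rw [ratio hn hp hl]
  rw [int_f hp hl] at h0
  have h1 : 0 < (Ms p (co f)).toReal := lt_of_le_of_ne ENNReal.toReal_nonneg (Ne.symm (right_ne_zero_of_mul h0))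
  rw [div_le_iff₀ h1]
  exact hK f hf

lemma lower_mem (hn : 1 ≤ n) {p : ℝ} (hp : 1 < p) {Λ : ℝ} (h : 0 < Λ) {k : ℕ} (hk : k ≤ (JJ n p Λ).ncard) :
    ∃ a ∈ infs n p k, a ≤ Λ := by
  have hfin := JJ_fin (n := n) hp h
  rw [Set.ncard_eq_toFinset_card _ hfin] at hk
  obtain ⟨M, hM, hc⟩ := Finset.exists_subset_card_eq hk
  have hM2 : ∀ α ∈ M, α ∈ JJ n p Λ := fun α hα => hfin.mem_toFinset.1 (hM hα)
  obtain ⟨W, hW, hW2⟩ := lower_space (l := lL p Λ) hn hp (lL_pos h) M (fun α hα => (hM2 α hα).1) (fun α hα => (hM2 α hα).2)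
  refine ⟨_, ⟨W, hW.trans hc, fun f hf => (hW2 f hf).1, rfl⟩, ?_⟩
  exact Real.sSup_le (rq_le hn hp (fun f hf => (hW2 f hf).1) (fun f hf => (hW2 f hf).2)) h.le

lemma lam_le (hn : 1 ≤ n) {p : ℝ} (hp : 1 < p) {Λ : ℝ} (h : 0 < Λ) {k : ℕ} (hk : k ≤ (JJ n p Λ).ncard) :
    lambdaLip (nuP n p) k ≤ Λ := by
  obtain ⟨a, ha, h2⟩ := lower_mem hn hp h hk
  rw [lam_eq]
  exact (csInf_le (infs_bdd p k) ha).trans h2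

lemma ex_pos (hn : 1 ≤ n) {p : ℝ} (hp : 1 < p) : 0 < ex n p := by
  have : (0:ℝ) < n := by exact_mod_cast hn
  have : 0 < p - 1 := by linarith
  unfold ex; positivity

lemma LIM_pos (hn : 1 ≤ n) {p : ℝ} (hp : 1 < p) : 0 < LIM n p := by
  have h1 : 0 < Real.Gamma (ex n p + 1) := Real.Gamma_pos_of_pos (by linarith [ex_pos hn hp])
  have h0 : 0 < p - 1 := by linarith
  have h2 : 0 < Real.Gamma (1 / (2 * (p - 1)) + 1) := Real.Gamma_pos_of_pos (by positivity)
  have : LIM n p = (2 : ℝ) ^ ((n : ℝ) / (p - 1)) * Real.Gamma (1 / (2 * (p - 1)) + 1) ^ n /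
        (Real.pi ^ ((n : ℝ) / 2) * Real.Gamma (ex n p + 1)) := rfl
  rw [this]; have := Real.pi_pos; positivity

lemma infs_ne (hn : 1 ≤ n) {p : ℝ} (hp : 1 < p) (k : ℕ) : (infs n p k).Nonempty := by
  have h1 : Tendsto (fun Λ => ((JJ n p Λ).ncard : ℝ) / Λ ^ ex n p * Λ ^ ex n p) atTop atTop :=
    (JJ_lim hp).pos_mul_atTop (LIM_pos hn hp) (tendsto_rpow_atTop (ex_pos hn hp))
  obtain ⟨Λ, h2, h3⟩ := ((h1.eventually_ge_atTop (k:ℝ)).and (eventually_gt_atTop 0)).exists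
  rw [div_mul_cancel₀ _ (Real.rpow_pos_of_pos h3 _).ne'] at h2
  obtain ⟨a, ha, _⟩ := lower_mem (n := n) hn hp h3 (by exact_mod_cast h2)
  exact ⟨a, ha⟩

lemma upper (hn : 1 ≤ n) {p : ℝ} (hp : 1 < p) {δ : ℝ} (hδ : 0 < δ) (hδ1 : δ < 1) {lam Λ : ℝ} (hΛ : 0 < Λ)
    (h : lam + 1 < (1 - δ) * Λ - n * ((1 + (p - 1) ^ 2) / (4 * δ))) {k : ℕ} (hk : 1 ≤ k)
    (hk2 : lambdaLip (nuP n p) k ≤ lam) : k ≤ (II n p Λ).ncard := by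
  rw [lam_eq] at hk2
  obtain ⟨a, ⟨F, hF, hF2, rfl⟩, h3⟩ := exists_lt_of_csInf_lt (infs_ne hn hp k) (show sInf (infs n p k) < lam + 1 by linarith)
  have : FiniteDimensional ℝ F := Module.finite_of_finrank_pos (by omega)
  have hF3 := fun f hf => (mem_iff hn hp).1 (hF2 f hf)
  obtain ⟨K, hK, hK2⟩ := ray_bdd hp F hF3
  have hb : BddAbove (rq n p F) := ⟨K, fun r hr => rq_le hn hp hF2 hK2 r hr⟩
  rw [← hF]
  refine upper_count hp F hF3 (lL_pos hΛ) hδ hδ1 hΛ.le (II_fin hp hΛ) ?_ h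
  intro f hf
  have hz := hK2 f hf
  by_cases h0 : (Ms p (co f)).toReal = 0
  · rw [h0, mul_zero] at hz ⊢; exact hz
  have hl := (hF3 f hf).1
  have h1 : 0 < (Ms p (co f)).toReal := lt_of_le_of_ne ENNReal.toReal_nonneg (Ne.symm h0)
  rw [← div_le_iff₀ h1, ← ratio hn hp hl]
  refine (le_csSup hb ⟨f, hf, ?_, rfl⟩).trans h3.le
  rw [int_f hp hl]
  refine mul_ne_zero ?_ h0
  exact ENNReal.toReal_ne_zero.2 ⟨ENNReal.inv_ne_zero.2 (ZZ_ne_top hp), ENNReal.inv_ne_top.2 (ZZ_ne_zero hp)⟩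

def Cn (n : ℕ) (p lam : ℝ) : Set ℕ := {k : ℕ | 1 ≤ k ∧ lambdaLip (nuP n p) k ≤ lam}

noncomputable def LL (n : ℕ) (p δ lam : ℝ) : ℝ := (lam + (n * ((1 + (p - 1) ^ 2) / (4 * δ)) + 2)) / (1 - δ)

lemma LL_pos {p δ lam : ℝ} (hδ : 0 < δ) (hδ1 : δ < 1) (hl : 0 < lam) : 0 < LL n p δ lam := by
  have : 0 < 1 - δ := by linarith
  unfold LL; positivity

lemma NN_sub (hn : 1 ≤ n) {p : ℝ} (hp : 1 < p) {δ : ℝ} (hδ : 0 < δ) (hδ1 : δ < 1) {lam : ℝ} (hl : 0 < lam) :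
    Cn n p lam ⊆ Set.Icc 1 (II n p (LL n p δ lam)).ncard := by
  rintro k ⟨h1, h2⟩
  refine ⟨h1, upper hn hp hδ hδ1 (LL_pos hδ hδ1 hl) ?_ h1 h2⟩
  have : (1 - δ) ≠ 0 := by linarith
  unfold LL; rw [mul_div_cancel₀ _ this]; linarith

lemma NN_fin (hn : 1 ≤ n) {p : ℝ} (hp : 1 < p) {lam : ℝ} (hl : 0 < lam) : (Cn n p lam).Finite :=
  (Set.finite_Icc _ _).subset (NN_sub hn hp (δ := 1/2) (by norm_num) (by norm_num) hl)

lemma NN_le (hn : 1 ≤ n) {p : ℝ} (hp : 1 < p) {δ : ℝ} (hδ : 0 < δ) (hδ1 : δ < 1) {lam : ℝ} (hl : 0 < lam) :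
    (Cn n p lam).ncard ≤ (II n p (LL n p δ lam)).ncard := by
  refine (Set.ncard_le_ncard (NN_sub hn hp hδ hδ1 hl) (Set.finite_Icc _ _)).trans ?_
  rw [← Finset.coe_Icc, Set.ncard_coe_finset]; simp

lemma NN_ge (hn : 1 ≤ n) {p : ℝ} (hp : 1 < p) {lam : ℝ} (hl : 0 < lam) :
    (JJ n p lam).ncard ≤ (Cn n p lam).ncard := by
  have := Set.ncard_le_ncard (s := Set.Icc 1 (JJ n p lam).ncard) (t := Cn n p lam)
    (fun k hk => ⟨hk.1, lam_le hn hp hl hk.2⟩) (NN_fin hn hp hl)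
  rw [← Finset.coe_Icc, Set.ncard_coe_finset] at this; simpa using this

lemma LL_ratio {p δ : ℝ} (hδ1 : δ < 1) : Tendsto (fun lam => LL n p δ lam / lam) atTop (𝓝 (1 - δ)⁻¹) := by
  have h1 : Tendsto (fun lam : ℝ => (1 + (n * ((1 + (p - 1) ^ 2) / (4 * δ)) + 2) / lam) * (1 - δ)⁻¹) atTop (𝓝 ((1 + 0) * (1 - δ)⁻¹)) :=
    (tendsto_const_nhds.add (tendsto_const_nhds.div_atTop tendsto_id)).mul_const _
  rw [add_zero, one_mul] at h1
  refine h1.congr' ?_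
  filter_upwards [eventually_gt_atTop 0] with lam hl
  unfold LL
  rw [one_add_div hl.ne', div_mul_eq_mul_div, div_eq_mul_inv _ (1 - δ)]

lemma LL_top {p δ : ℝ} (hδ1 : δ < 1) : Tendsto (LL n p δ) atTop atTop := by
  have : 0 < 1 - δ := by linarith
  exact (tendsto_atTop_add_const_right _ _ tendsto_id).atTop_div_const this

lemma up_lim (hn : 1 ≤ n) {p : ℝ} (hp : 1 < p) {δ : ℝ} (hδ : 0 < δ) (hδ1 : δ < 1) :
    Tendsto (fun lam => ((II n p (LL n p δ lam)).ncard : ℝ) / lam ^ ex n p) atTop (𝓝 (LIM n p * ((1 - δ)⁻¹) ^ ex n p)) := by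
  have h0 : 0 < 1 - δ := by linarith
  have h := ((II_lim (n := n) hp).comp (LL_top (n := n) (p := p) hδ1)).mul
    ((LL_ratio (n := n) (p := p) hδ1).rpow_const (p := ex n p) (Or.inl (by positivity)))
  refine h.congr' ?_
  filter_upwards [eventually_gt_atTop 0] with lam hl
  have h1 := LL_pos (n := n) (p := p) hδ hδ1 hl
  simp only [Function.comp]
  rw [Real.div_rpow h1.le hl.le]
  have h2 := (Real.rpow_pos_of_pos h1 (ex n p)).ne'
  have h3 := (Real.rpow_pos_of_pos hl (ex n p)).ne'
  field_simp

lemma NN_lim (hn : 1 ≤ n) {p : ℝ} (hp : 1 < p) :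
    Tendsto (fun lam => ((Cn n p lam).ncard : ℝ) / lam ^ ex n p) atTop (𝓝 (LIM n p)) := by
  rw [tendsto_order]
  constructor
  · intro a ha
    filter_upwards [(JJ_lim hp).eventually_const_lt ha, eventually_gt_atTop 0] with lam h1 hl
    refine h1.trans_le (div_le_div_of_nonneg_right ?_ (Real.rpow_nonneg hl.le _))
    exact_mod_cast NN_ge hn hp hl
  · intro a ha
    have hc : Tendsto (fun δ : ℝ => LIM n p * ((1 - δ)⁻¹) ^ ex n p) (𝓝[>] 0) (𝓝 (LIM n p * ((1 - 0)⁻¹) ^ ex n p)) := by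
      refine Tendsto.mono_left ?_ nhdsWithin_le_nhds
      refine Tendsto.const_mul _ (Tendsto.rpow_const ?_ (Or.inl (by norm_num)))
      exact (tendsto_const_nhds.sub tendsto_id).inv₀ (by norm_num)
    rw [sub_zero, inv_one, Real.one_rpow, mul_one] at hc
    obtain ⟨δ, h1, hδ, hδ1⟩ := ((hc.eventually_lt_const ha).and (Ioo_mem_nhdsGT (zero_lt_one (α := ℝ)))).exists
    filter_upwards [(up_lim hn hp hδ hδ1).eventually_lt_const h1, eventually_gt_atTop 0] with lam h2 hl
    refine lt_of_le_of_lt (div_le_div_of_nonneg_right ?_ (Real.rpow_nonneg hl.le _)) h2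
    exact_mod_cast NN_le hn hp hδ hδ1 hl

end Weyl

/-- **Weyl asymptotics for the measures `ν_pⁿ`, `p ∈ (1,∞)`:** the eigenvalue counting
function `N(λ) = #{k ≥ 1 : λ_k^Lip(ℝⁿ,|·|,ν_pⁿ) ≤ λ}` is finite for each `λ > 0`, and
`N(λ)/λ^{(n/2)·p/(p-1)} → 2^{n/(p-1)}·Γ(1/(2(p-1))+1)ⁿ / (π^{n/2}·Γ((n/2)·p/(p-1)+1))`
as `λ → ∞`. -/
theorem weyl_asymptotics_nuP
    (n : ℕ) (hn : 1 ≤ n) (p : ℝ) (hp : 1 < p) :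
    (∀ lam : ℝ, 0 < lam →
      {k : ℕ | 1 ≤ k ∧ lambdaLip (nuP n p) k ≤ lam}.Finite) ∧
    Tendsto
      (fun lam : ℝ =>
        (Set.ncard {k : ℕ | 1 ≤ k ∧ lambdaLip (nuP n p) k ≤ lam} : ℝ) /
          lam ^ ((n / 2 : ℝ) * p / (p - 1)))
      atTop
      (𝓝 ((2 : ℝ) ^ ((n : ℝ) / (p - 1)) * Real.Gamma (1 / (2 * (p - 1)) + 1) ^ n /
        (Real.pi ^ ((n : ℝ) / 2) * Real.Gamma ((n / 2 : ℝ) * p / (p - 1) + 1)))) := by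
  exact ⟨fun lam hl => Weyl.NN_fin hn hp hl, Weyl.NN_lim hn hp⟩
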